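/- arXiv:2410.08004 — 6 statements merged into one kernel-verified Lean document; each statement's English description precedes it below -/
import Mathlib

section
/- Let β = 1 and h = 0 (the critical Curie–Weiss model). Let ξ be a real random variable with density f_1(x) = exp(−x⁴/12) / ∫_ℝ exp(−y⁴/12) dy, fix 0 < δ < 1/20, set ξ_N = ξ 1{|ξ| ≤ N^δ}, and define ν_N(σ) = E[∏_{i=1}^N ½(1 + ξ_N σ_i / N^{1/4})] for σ ∈ {−1,+1}^N. Then H(μ_N | ν_N) → 0 and H(ν_N | μ_N) → 0 as N → ∞. -/
/-!
Both measures are, up to small errors, mixtures of the product measures `P_m` on spins with mean `m`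
(`cwW`). By the Hubbard–Stratonovich transform the critical Curie–Weiss measure is the mixture of
`P_{tanh y}` with density proportional to `exp (N φ(y))`, where `φ(y) = log cosh y - y²/2`
(`hubbard_stratonovich`, `mu_eq_mixture`). The measure `ν_N` is the mixture of `P_{t/N^{1/4}}` with
density `f₁` over `|t| ≤ N^δ`, plus a multiple of the uniform measure `P_0` (`nu_split`); the
substitution `t = N^{1/4} tanh y` (`substitution_tanh`) brings it to the same form.

Since `φ(y) = -y⁴/12 + O(y⁶)` and `tanh⁴ y = y⁴ + O(y⁶)`, the two mixing densities differ on the bulk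
`|tanh y| ≤ N^{δ-1/4}` by a factor `1 + o(1)` and the quotient `L` of the normalizing constants
(`density_compare`). The inequality `φ(y) ≥ -y⁴/12` gives `L ≥ 1`, and comparison of total masses
gives `L ≤ 1 + o(1)`, because the tails of both mixing laws are smaller than every power of `N`
(`tail_cwE_le`, `tail_density_le`).

Hence `ν_N ≤ (1 + o(1)) μ_N`, the uniform part being absorbed through
`2^{-N} ≤ C N μ_N` (`uniform_le_mu`), so `H(ν_N | μ_N) → 0`. Conversely `μ_N = m₁ + m₂` with
`m₁ ≤ (1 + o(1)) ν_N` and `m₂` of mass `o(1/N)`; as `ν_N ≥ 4^{-N}`, the contribution of `m₂` to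
`H(μ_N | ν_N)` is at most its mass times `O(N)` (`relEnt_le_split`). The quantitative statement for
fixed `N` is `entropy_bounds`.
-/

open Filter Real MeasureTheory

/-- Relative entropy (Kullback–Leibler divergence) between two probability mass
functions on a finite set. -/
noncomputable def relEnt {α : Type*} [Fintype α] (rho pion : α → ℝ) : ℝ :=
  ∑ x, rho x * Real.log (rho x / pion x)

/-! ### Bounds for `tanh` and `log cosh` -/

lemma hasDerivAt_tanh_sub_sq (x : ℝ) : HasDerivAt Real.tanh (1 - Real.tanh x ^ 2) x := by
  have hc : Real.cosh x ≠ 0 := (Real.cosh_pos x).ne'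
  have h := (Real.hasDerivAt_sinh x).div (Real.hasDerivAt_cosh x) hc
  have e : (Real.sinh / Real.cosh) = Real.tanh := by
    funext y; simp [Real.tanh_eq_sinh_div_cosh]
  rw [e] at h
  refine h.congr_deriv ?_
  rw [Real.tanh_eq_sinh_div_cosh]
  field_simp

lemma hasDerivAt_log_cosh (x : ℝ) :
    HasDerivAt (fun y => Real.log (Real.cosh y)) (Real.tanh x) x := by
  have h := (Real.hasDerivAt_cosh x).log (Real.cosh_pos x).ne'
  rwa [← Real.tanh_eq_sinh_div_cosh] at h

/-- A function vanishing at `0` with nonnegative derivative on `[0, ∞)` is nonnegative there. -/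
lemma nonneg_of_hasDerivAt_nonneg {g g' : ℝ → ℝ} (h0 : g 0 = 0)
    (hg : ∀ x, HasDerivAt g (g' x) x) (hg' : ∀ x, 0 ≤ x → 0 ≤ g' x) {x : ℝ} (hx : 0 ≤ x) :
    0 ≤ g x := by
  have hm : MonotoneOn g (Set.Ici 0) := by
    apply monotoneOn_of_deriv_nonneg (convex_Ici 0)
    · exact fun y _ => (hg y).continuousAt.continuousWithinAt
    · exact fun y _ => (hg y).differentiableAt.differentiableWithinAt
    · intro y hy
      rw [interior_Ici] at hy
      rw [(hg y).deriv]
      exact hg' y (le_of_lt hy)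
  have := hm (Set.mem_Ici.2 le_rfl) (Set.mem_Ici.2 hx) hx
  rwa [h0] at this

lemma tanh_nonneg_aux {x : ℝ} (hx : 0 ≤ x) : 0 ≤ Real.tanh x := by
  rw [Real.tanh_eq_sinh_div_cosh]
  exact div_nonneg (Real.sinh_nonneg_iff.2 hx) (Real.cosh_pos x).le

lemma tanh_le_self_aux {x : ℝ} (hx : 0 ≤ x) : Real.tanh x ≤ x := by
  have := nonneg_of_hasDerivAt_nonneg (g := fun y => y - Real.tanh y)
    (g' := fun y => 1 - (1 - Real.tanh y ^ 2)) (by simp)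
    (fun y => (hasDerivAt_id y).sub (hasDerivAt_tanh_sub_sq y))
    (fun y _ => by nlinarith [sq_nonneg (Real.tanh y)]) hx
  linarith

lemma le_tanh_cubic {x : ℝ} (hx : 0 ≤ x) : x - x ^ 3 / 3 ≤ Real.tanh x := by
  have := nonneg_of_hasDerivAt_nonneg (g := fun y => Real.tanh y - (y - y ^ 3 / 3))
    (g' := fun y => (1 - Real.tanh y ^ 2) - (1 - y ^ 2)) (by simp)
    (fun y => (hasDerivAt_tanh_sub_sq y).sub (
      ((hasDerivAt_id y).sub ((hasDerivAt_pow 3 y).div_const 3)).congr_deriv (by norm_num)))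
    (fun y hy => by
      have := pow_le_pow_left₀ (tanh_nonneg_aux hy) (tanh_le_self_aux hy) 2
      linarith) hx
  linarith

lemma tanh_sq_ge {x : ℝ} (hx : 0 ≤ x) : x ^ 2 - 2 * x ^ 4 / 3 ≤ Real.tanh x ^ 2 := by
  rcases le_total (x ^ 2) 3 with h | h
  · have h1 : 0 ≤ x - x ^ 3 / 3 := by nlinarith
    have := pow_le_pow_left₀ h1 (le_tanh_cubic hx) 2
    nlinarith [pow_nonneg hx 6]
  · nlinarith [sq_nonneg (Real.tanh x), sq_nonneg x]

lemma tanh_le_quintic {x : ℝ} (hx : 0 ≤ x) :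
    Real.tanh x ≤ x - x ^ 3 / 3 + 2 * x ^ 5 / 15 := by
  have := nonneg_of_hasDerivAt_nonneg (g := fun y => (y - y ^ 3 / 3 + 2 * y ^ 5 / 15) - Real.tanh y)
    (g' := fun y => (1 - y ^ 2 + 2 * y ^ 4 / 3) - (1 - Real.tanh y ^ 2)) (by simp)
    (fun y => HasDerivAt.sub (
      (((hasDerivAt_id y).sub ((hasDerivAt_pow 3 y).div_const 3)).add
        (((hasDerivAt_pow 5 y).const_mul 2).div_const 15)).congr_deriv (by norm_num; ring)) (hasDerivAt_tanh_sub_sq y))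
    (fun y hy => by
      have := tanh_sq_ge hy
      linarith) hx
  linarith

/-- The effective potential `log cosh y - y²/2` of the critical Curie–Weiss model. -/
noncomputable def cwPhi (y : ℝ) : ℝ := Real.log (Real.cosh y) - y ^ 2 / 2

lemma cwPhi_abs (y : ℝ) : cwPhi |y| = cwPhi y := by
  simp [cwPhi, Real.cosh_abs]

lemma cwPhi_zero : cwPhi 0 = 0 := by simp [cwPhi]

lemma hasDerivAt_cwPhi (y : ℝ) : HasDerivAt cwPhi (Real.tanh y - y) y := by
  have := (hasDerivAt_log_cosh y).sub ((hasDerivAt_pow 2 y).div_const 2)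
  exact this.congr_deriv (by norm_num)

lemma continuous_cwPhi : Continuous cwPhi :=
  continuous_iff_continuousAt.2 fun y => (hasDerivAt_cwPhi y).continuousAt

lemma cwPhi_ge (y : ℝ) : -(y ^ 4 / 12) ≤ cwPhi y := by
  rw [← cwPhi_abs, ← Even.pow_abs (by decide : Even 4)]
  have := nonneg_of_hasDerivAt_nonneg (g := fun y => cwPhi y + y ^ 4 / 12)
    (g' := fun y => (Real.tanh y - y) + y ^ 3 / 3) (by simp [cwPhi_zero])
    (fun y => (hasDerivAt_cwPhi y).add (
      ((hasDerivAt_pow 4 y).div_const 12).congr_deriv (by norm_num; ring)))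
    (fun y hy => by linarith [le_tanh_cubic hy]) (abs_nonneg y)
  linarith

lemma cwPhi_le (y : ℝ) : cwPhi y ≤ -(y ^ 4 / 12) + y ^ 6 / 45 := by
  rw [← cwPhi_abs, ← Even.pow_abs (by decide : Even 4), ← Even.pow_abs (by decide : Even 6)]
  have := nonneg_of_hasDerivAt_nonneg (g := fun y => (-(y ^ 4 / 12) + y ^ 6 / 45) - cwPhi y)
    (g' := fun y => (-(y ^ 3 / 3) + 2 * y ^ 5 / 15) - (Real.tanh y - y)) (by simp [cwPhi_zero])
    (fun y => HasDerivAt.sub (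
      (((hasDerivAt_pow 4 y).div_const 12).neg.add
        ((hasDerivAt_pow 6 y).div_const 45)).congr_deriv (by norm_num; ring)) (hasDerivAt_cwPhi y))
    (fun y hy => by linarith [tanh_le_quintic hy]) (abs_nonneg y)
  linarith

lemma cwPhi_antitoneOn : AntitoneOn cwPhi (Set.Ici 0) := by
  apply antitoneOn_of_deriv_nonpos (convex_Ici 0)
  · exact continuous_cwPhi.continuousOn
  · exact fun y _ => (hasDerivAt_cwPhi y).differentiableAt.differentiableWithinAt
  · intro y hy
    rw [interior_Ici] at hy
    rw [(hasDerivAt_cwPhi y).deriv]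
    linarith [tanh_le_self_aux (le_of_lt hy)]

/-- Quartic decay of the potential near `0`, quadratic decay away from `0`. -/
lemma cwPhi_le_min (y : ℝ) : cwPhi y ≤ -(1 / 320) * min (y ^ 4) (y ^ 2) := by
  rw [← cwPhi_abs, ← Even.pow_abs (by decide : Even 4), ← sq_abs]
  have hy := abs_nonneg y
  generalize |y| = x at hy
  have key : ∀ x : ℝ, 0 ≤ x → x ≤ 1 → cwPhi x ≤ -(x ^ 4 / 20) := by
    intro x hx h1
    have h2 : x ^ 6 ≤ x ^ 4 := pow_le_pow_of_le_one hx h1 (by norm_num)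
    linarith [cwPhi_le x, pow_nonneg hx 4]
  rcases le_total x 1 with h1 | h1
  · have := min_le_left (x ^ 4) (x ^ 2)
    nlinarith [key x hy h1, pow_nonneg hy 4]
  · have h3 := min_le_right (x ^ 4) (x ^ 2)
    rcases le_total x 4 with h4 | h4
    · have h5 := cwPhi_antitoneOn (Set.mem_Ici.2 zero_le_one) (Set.mem_Ici.2 hy) h1
      have h6 := key 1 zero_le_one le_rfl
      nlinarith
    · have h5 : Real.log (Real.cosh x) ≤ x := by
        rw [Real.log_le_iff_le_exp (Real.cosh_pos x), Real.cosh_eq]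
        have := Real.exp_le_exp.2 (by linarith : -x ≤ x)
        linarith
      have : cwPhi x ≤ x - x ^ 2 / 2 := by unfold cwPhi; linarith
      nlinarith

/-- Gaussian domination of the weight `exp (N φ)` at the scale `M⁻¹ = N^{-1/4}`. -/
lemma mul_cwPhi_le {n M : ℝ} (hM : 1 ≤ M) (hn : n = M ^ 4) (y : ℝ) :
    n * cwPhi y ≤ 1 / 320 - M ^ 2 / 320 * y ^ 2 := by
  have h1 := cwPhi_le_min y
  have hM2 : M ^ 2 ≤ M ^ 4 := pow_le_pow_right₀ hM (by norm_num)
  have h0 : 0 ≤ n := by rw [hn]; positivity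
  have h2 : M ^ 2 * y ^ 2 - 1 ≤ n * min (y ^ 4) (y ^ 2) := by
    rw [mul_min_of_nonneg _ _ h0, hn]
    apply le_min
    · nlinarith [sq_nonneg (M ^ 2 * y ^ 2 - 1), sq_nonneg (M * y)]
    · nlinarith [sq_nonneg y]
  nlinarith

/-- The logarithm of the density ratio between the two mixtures is of sixth order. -/
lemma abs_cwPhi_add_tanh {y : ℝ} : |cwPhi y + Real.tanh y ^ 4 / 12| ≤ y ^ 6 := by
  have ht : Real.tanh y ^ 4 = Real.tanh |y| ^ 4 := by
    rcases abs_choice y with h | h <;> rw [h]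
    rw [Real.tanh_neg, Even.neg_pow (by decide)]
  rw [ht, ← cwPhi_abs, ← Even.pow_abs (by decide : Even 6)]
  have hy := abs_nonneg y
  generalize |y| = x at hy
  have h1 := cwPhi_ge x
  have h2 := cwPhi_le x
  have h3 := pow_le_pow_left₀ (tanh_nonneg_aux hy) (tanh_le_self_aux hy) 4
  have h4 : x ^ 4 - 4 * x ^ 6 / 3 ≤ Real.tanh x ^ 4 := by
    have h5 := tanh_sq_ge hy
    rcases le_total 0 (x ^ 2 - 2 * x ^ 4 / 3) with h | h
    · have h6 := pow_le_pow_left₀ h h5 2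
      nlinarith [pow_nonneg hy 8]
    · have h6 : 0 ≤ Real.tanh x ^ 4 := by positivity
      nlinarith [sq_nonneg x]
  have h7 : 0 ≤ x ^ 6 := by positivity
  rw [abs_le]
  constructor <;> linarith

/-! ### Gaussian and quartic integrals -/

lemma integrable_exp_sub_mul_sq (c : ℝ) {k : ℝ} (hk : 0 < k) :
    Integrable (fun t : ℝ => Real.exp (c - k * t ^ 2)) := by
  refine ((integrable_exp_neg_mul_sq hk).const_mul (Real.exp c)).congr (ae_of_all _ fun t => ?_)
  simp only [← Real.exp_add]
  congr 1
  ring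

lemma integral_exp_sub_mul_sq (c k : ℝ) :
    ∫ t : ℝ, Real.exp (c - k * t ^ 2) = Real.exp c * √(π / k) := by
  rw [← integral_gaussian, ← integral_const_mul]
  congr 1
  funext t
  rw [← Real.exp_add]
  congr 1
  ring

lemma not_mem_Icc_sq {r t : ℝ} (hr : 0 ≤ r) (ht : t ∈ (Set.Icc (-r) r)ᶜ) : r ^ 2 ≤ t ^ 2 := by
  rw [Set.mem_compl_iff, Set.mem_Icc, ← abs_le, not_le] at ht
  rw [← sq_abs t]
  exact pow_le_pow_left₀ hr ht.le 2

/-- Half of the Gaussian exponent controls the size of the tail, the other half integrates. -/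
lemma gaussian_tail (c : ℝ) {k r : ℝ} (hk : 0 < k) (hr : 0 ≤ r) :
    ∫ t in (Set.Icc (-r) r)ᶜ, Real.exp (c - k * t ^ 2)
      ≤ Real.exp (c - k / 2 * r ^ 2) * √(π / (k / 2)) := by
  rw [← integral_exp_sub_mul_sq]
  have hk2 : 0 < k / 2 := by linarith
  calc ∫ t in (Set.Icc (-r) r)ᶜ, Real.exp (c - k * t ^ 2)
      ≤ ∫ t in (Set.Icc (-r) r)ᶜ, Real.exp (c - k / 2 * r ^ 2 - k / 2 * t ^ 2) := by
        apply setIntegral_mono_on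
        · exact (integrable_exp_sub_mul_sq c hk).integrableOn
        · exact (integrable_exp_sub_mul_sq _ hk2).integrableOn
        · exact measurableSet_Icc.compl
        · intro t ht
          rw [Real.exp_le_exp]
          nlinarith [not_mem_Icc_sq hr ht]
    _ ≤ _ := by
        apply setIntegral_le_integral (integrable_exp_sub_mul_sq _ hk2)
        exact ae_of_all _ fun t => (Real.exp_pos _).le

lemma exp_quartic_le (t : ℝ) :
    Real.exp (-t ^ 4 / 12) ≤ Real.exp (1 / 320 - 1 / 320 * t ^ 2) := by
  rw [Real.exp_le_exp]
  nlinarith [sq_nonneg (t ^ 2 - 1)]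

lemma integrable_exp_quartic : Integrable (fun t : ℝ => Real.exp (-t ^ 4 / 12)) := by
  refine (integrable_exp_sub_mul_sq (1 / 320) (k := 1 / 320) (by norm_num)).mono'
    (by fun_prop) (ae_of_all _ fun t => ?_)
  rw [Real.norm_eq_abs, abs_of_pos (Real.exp_pos _)]
  exact exp_quartic_le t

/-- The normalizing constant `∫ exp (-y⁴/12) dy` of the limiting density. -/
noncomputable def cwC : ℝ := ∫ y : ℝ, Real.exp (-y ^ 4 / 12)

lemma cwC_pos : 0 < cwC := integral_exp_pos integrable_exp_quartic

lemma integral_exp_quad {n : ℝ} (hn : 0 < n) (s : ℝ) :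
    ∫ y : ℝ, Real.exp (s * y - n / 2 * y ^ 2) = Real.exp (s ^ 2 / (2 * n)) * √(2 * π / n) := by
  have h := integral_sub_right_eq_self (μ := volume)
    (fun y : ℝ => Real.exp (s ^ 2 / (2 * n) - n / 2 * y ^ 2)) (s / n)
  rw [integral_exp_sub_mul_sq] at h
  rw [show 2 * π / n = π / (n / 2) by field_simp, ← h]
  congr 1
  funext y
  congr 1
  field_simp
  ring

lemma integrable_exp_quad {n : ℝ} (hn : 0 < n) (s : ℝ) :
    Integrable (fun y : ℝ => Real.exp (s * y - n / 2 * y ^ 2)) := by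
  have h := (integrable_exp_sub_mul_sq (s ^ 2 / (2 * n)) (k := n / 2)
    (by linarith)).comp_sub_right (s / n)
  refine h.congr (ae_of_all _ fun y => ?_)
  simp only
  congr 1
  field_simp
  ring

/-! ### Product measures and the Hubbard–Stratonovich representation -/

/-- The `±1` spin encoded by a Boolean. -/
noncomputable def cwSpin (b : Bool) : ℝ := if b then 1 else -1

/-- The probability of `σ` under the product measure on spins with mean `m`. -/
noncomputable def cwW {N : ℕ} (σ : Fin N → Bool) (m : ℝ) : ℝ :=
  ∏ i, (1 / 2 : ℝ) * (1 + m * cwSpin (σ i))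

lemma sum_cwW (N : ℕ) (m : ℝ) : ∑ σ : Fin N → Bool, cwW σ m = 1 := by
  unfold cwW
  rw [← Fintype.prod_sum (fun (_ : Fin N) (b : Bool) => (1 / 2 : ℝ) * (1 + m * cwSpin b))]
  apply Finset.prod_eq_one
  intro i _
  simp [cwSpin]
  ring

lemma abs_mul_cwSpin_le {m r : ℝ} (hm : |m| ≤ r) (b : Bool) :
    -r ≤ m * cwSpin b ∧ m * cwSpin b ≤ r := by
  rw [abs_le] at hm
  cases b <;> simp [cwSpin] <;> constructor <;> linarith

lemma cwW_nonneg {N : ℕ} (σ : Fin N → Bool) {m : ℝ} (hm : |m| ≤ 1) : 0 ≤ cwW σ m := by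
  apply Finset.prod_nonneg
  intro i _
  linarith [(abs_mul_cwSpin_le hm (σ i)).1]

lemma cwW_le_one {N : ℕ} (σ : Fin N → Bool) {m : ℝ} (hm : |m| ≤ 1) : cwW σ m ≤ 1 := by
  rw [← sum_cwW N m]
  exact Finset.single_le_sum (f := fun σ : Fin N → Bool => cwW σ m)
    (fun τ _ => cwW_nonneg τ hm) (Finset.mem_univ σ)

lemma cwW_ge {N : ℕ} (σ : Fin N → Bool) {m : ℝ} (hm : |m| ≤ 1 / 2) :
    (1 / 4 : ℝ) ^ N ≤ cwW σ m := by
  have h : ∏ _i : Fin N, (1 / 4 : ℝ) = (1 / 4) ^ N := by simp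
  rw [← h]
  apply Finset.prod_le_prod
  · intros; norm_num
  · intro i _
    linarith [(abs_mul_cwSpin_le hm (σ i)).1]

lemma cwW_zero {N : ℕ} (σ : Fin N → Bool) : cwW σ 0 = (1 / 2) ^ N := by
  simp [cwW]

lemma continuous_cwW {N : ℕ} (σ : Fin N → Bool) : Continuous (cwW σ) := by
  unfold cwW
  fun_prop

lemma continuous_tanh_aux : Continuous Real.tanh :=
  continuous_iff_continuousAt.2 fun y => (hasDerivAt_tanh_sub_sq y).continuousAt

lemma abs_tanh_le_one_aux (y : ℝ) : |Real.tanh y| ≤ 1 :=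
  abs_le.2 ⟨(Real.neg_one_lt_tanh y).le, (Real.tanh_lt_one y).le⟩

lemma cwW_tanh {N : ℕ} (σ : Fin N → Bool) (y : ℝ) :
    cwW σ (Real.tanh y) * (2 * Real.cosh y) ^ N = Real.exp ((∑ i, cwSpin (σ i)) * y) := by
  have h : (2 * Real.cosh y) ^ N = ∏ _i : Fin N, 2 * Real.cosh y := by simp
  rw [h, cwW, ← Finset.prod_mul_distrib, Finset.sum_mul, Real.exp_sum]
  apply Finset.prod_congr rfl
  intro i _
  have hc := (Real.cosh_pos y).ne'
  have e1 := Real.cosh_add_sinh y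
  have e2 := Real.cosh_sub_sinh y
  rw [Real.tanh_eq_sinh_div_cosh]
  cases σ i <;> simp [cwSpin] <;> field_simp <;> linarith

/-- The unnormalized mixing weight `exp (N φ(y))` of the Curie–Weiss measure. -/
noncomputable def cwE (N : ℕ) (y : ℝ) : ℝ := Real.exp (N * cwPhi y)

lemma cwE_pos (N : ℕ) (y : ℝ) : 0 < cwE N y := Real.exp_pos _

lemma continuous_cwE (N : ℕ) : Continuous (cwE N) :=
  Real.continuous_exp.comp (continuous_const.mul continuous_cwPhi)

lemma cwE_eq (N : ℕ) (y : ℝ) : cwE N y = Real.cosh y ^ N * Real.exp (-(N / 2 * y ^ 2)) := by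
  unfold cwE cwPhi
  rw [mul_sub, sub_eq_add_neg, Real.exp_add, Real.exp_nat_mul, Real.exp_log (Real.cosh_pos y)]
  congr 2
  ring

lemma cwW_mul_cwE {N : ℕ} (σ : Fin N → Bool) (y : ℝ) :
    cwW σ (Real.tanh y) * cwE N y
      = (1 / 2) ^ N * Real.exp ((∑ i, cwSpin (σ i)) * y - N / 2 * y ^ 2) := by
  rw [sub_eq_add_neg, Real.exp_add, ← cwW_tanh, cwE_eq, mul_pow]
  have : (1 / 2 : ℝ) ^ N * 2 ^ N = 1 := by rw [← mul_pow]; norm_num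
  linear_combination (-(cwW σ (Real.tanh y) * Real.cosh y ^ N * Real.exp (-(N / 2 * y ^ 2)))) * this

lemma integrable_cwW_mul_cwE {N : ℕ} (hN : 0 < N) (σ : Fin N → Bool) :
    Integrable (fun y => cwW σ (Real.tanh y) * cwE N y) := by
  simp_rw [cwW_mul_cwE]
  exact (integrable_exp_quad (by exact_mod_cast hN) _).const_mul _

lemma integrable_cwE {N : ℕ} (hN : 0 < N) : Integrable (cwE N) := by
  have h := integrable_finsetSum Finset.univ
    (fun (σ : Fin N → Bool) _ => integrable_cwW_mul_cwE hN σ)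
  refine h.congr (ae_of_all _ fun y => ?_)
  simp only [← Finset.sum_mul, sum_cwW, one_mul]

lemma hubbard_stratonovich {N : ℕ} (hN : 0 < N) (σ : Fin N → Bool) :
    Real.exp (1 / (2 * N) * ∑ i, ∑ j, cwSpin (σ i) * cwSpin (σ j)) * √(2 * π / N) * (1 / 2) ^ N
      = ∫ y, cwW σ (Real.tanh y) * cwE N y := by
  simp_rw [cwW_mul_cwE]
  rw [integral_const_mul, integral_exp_quad (by exact_mod_cast hN), ← Finset.sum_mul_sum]
  rw [show 1 / (2 * (N : ℝ)) * ((∑ i, cwSpin (σ i)) * ∑ i, cwSpin (σ i))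
    = (∑ i, cwSpin (σ i)) ^ 2 / (2 * N) by ring]
  ring

/-- The total mass of the weight `exp (N φ)`. -/
noncomputable def cwI (N : ℕ) : ℝ := ∫ y, cwE N y

lemma cwI_pos {N : ℕ} (hN : 0 < N) : 0 < cwI N :=
  integral_exp_pos (integrable_cwE hN)

lemma partition_function {N : ℕ} (hN : 0 < N) :
    (∑ σ : Fin N → Bool, Real.exp (1 / (2 * N) * ∑ i, ∑ j, cwSpin (σ i) * cwSpin (σ j)))
      * √(2 * π / N) * (1 / 2) ^ N = cwI N := by
  rw [Finset.sum_mul, Finset.sum_mul]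
  simp_rw [hubbard_stratonovich hN]
  rw [← integral_finsetSum _ (fun σ _ => integrable_cwW_mul_cwE hN σ)]
  simp_rw [← Finset.sum_mul, sum_cwW, one_mul]
  rfl

/-- The lower bound comes from `φ(y) ≥ -y⁴/12` and has the right constant. -/
lemma cwI_ge {N : ℕ} {M : ℝ} (hM : 1 ≤ M) (hn : (N : ℝ) = M ^ 4) : cwC ≤ M * cwI N := by
  have hM0 : 0 < M := by linarith
  have hN : 0 < N := by
    have : (0 : ℝ) < N := by rw [hn]; positivity
    exact_mod_cast this
  have h := Measure.integral_comp_mul_left (fun y : ℝ => Real.exp (-y ^ 4 / 12)) M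
  have hle : ∫ y : ℝ, Real.exp (-(M * y) ^ 4 / 12) ≤ cwI N := by
    apply integral_mono
    · exact integrable_exp_quartic.comp_mul_left' hM0.ne'
    · exact integrable_cwE hN
    · intro y
      simp only [cwE]
      rw [Real.exp_le_exp, mul_pow, ← hn]
      have := mul_le_mul_of_nonneg_left (cwPhi_ge y) (Nat.cast_nonneg (α := ℝ) N)
      linarith
  rw [h, abs_of_pos (inv_pos.2 hM0), smul_eq_mul] at hle
  change M⁻¹ * cwC ≤ _ at hle
  rwa [inv_mul_le_iff₀ hM0] at hle

lemma cwE_le {N : ℕ} {M : ℝ} (hM : 1 ≤ M) (hn : (N : ℝ) = M ^ 4) (y : ℝ) :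
    cwE N y ≤ Real.exp (1 / 320 - M ^ 2 / 320 * y ^ 2) :=
  Real.exp_le_exp.2 (mul_cwPhi_le hM hn y)

lemma cwI_le {N : ℕ} {M : ℝ} (hM : 1 ≤ M) (hn : (N : ℝ) = M ^ 4) :
    cwI N ≤ Real.exp (1 / 320) * √(π / (1 / 320)) := by
  have hN : 0 < N := by
    have : (0 : ℝ) < N := by rw [hn]; positivity
    exact_mod_cast this
  rw [← integral_exp_sub_mul_sq]
  apply integral_mono (integrable_cwE hN) (integrable_exp_sub_mul_sq _ (by norm_num))
  intro y
  refine (cwE_le hM hn y).trans (Real.exp_le_exp.2 ?_)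
  have : 1 ≤ M ^ 2 := one_le_pow₀ hM
  nlinarith [sq_nonneg y]

/-! ### Relative entropy on a finite set -/

lemma relEnt_nonneg_aux {α : Type*} [Fintype α] {rho pion : α → ℝ} (hr : ∀ x, 0 < rho x)
    (hp : ∀ x, 0 < pion x) (hr1 : ∑ x, rho x = 1) (hp1 : ∑ x, pion x = 1) :
    0 ≤ relEnt rho pion := by
  have h : ∑ x, (rho x - pion x) ≤ relEnt rho pion := by
    apply Finset.sum_le_sum
    intro x _
    have h1 := Real.one_sub_inv_le_log_of_pos (div_pos (hr x) (hp x))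
    have h2 := mul_le_mul_of_nonneg_left h1 (hr x).le
    have h3 : rho x * (1 - (rho x / pion x)⁻¹) = rho x - pion x := by
      have := (hr x).ne'
      field_simp
    linarith
  rw [Finset.sum_sub_distrib, hr1, hp1] at h
  linarith

lemma relEnt_le_of_le {α : Type*} [Fintype α] {rho pion : α → ℝ} {A : ℝ} (hr : ∀ x, 0 < rho x)
    (hp : ∀ x, 0 < pion x) (hr1 : ∑ x, rho x = 1) (hA : ∀ x, rho x ≤ A * pion x) :
    relEnt rho pion ≤ A - 1 := by
  have h : relEnt rho pion ≤ ∑ x, rho x * (A - 1) := by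
    apply Finset.sum_le_sum
    intro x _
    apply mul_le_mul_of_nonneg_left _ (hr x).le
    have h1 := Real.log_le_sub_one_of_pos (div_pos (hr x) (hp x))
    have h2 := (div_le_iff₀ (hp x)).2 (hA x)
    linarith
  rwa [← Finset.sum_mul, hr1, one_mul] at h

/-- If `m₁ ≤ E π` and `m₂` has small mass `q`, then the entropy of `m₁ + m₂` relative to `π` is small
as soon as `m₂ / π` is not too large. Against `m₁` the term `log (1 + m₂/π)` is bounded by `m₂/π`,
against `m₂` by the constant `B`. -/
lemma relEnt_le_split {α : Type*} [Fintype α] {m₁ m₂ pion : α → ℝ} {E B q : ℝ}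
    (hm : ∀ x, 0 < m₁ x + m₂ x) (h2 : ∀ x, 0 ≤ m₂ x)
    (hp : ∀ x, 0 < pion x) (hs : ∑ x, (m₁ x + m₂ x) = 1) (hq : ∑ x, m₂ x = q) (hE : 1 ≤ E)
    (hle : ∀ x, m₁ x ≤ E * pion x) (hB : ∀ x, Real.log (1 + m₂ x / pion x) ≤ B) :
    relEnt (fun x => m₁ x + m₂ x) pion ≤ (E - 1) + E * q + q * B := by
  have h : relEnt (fun x => m₁ x + m₂ x) pion
      ≤ ∑ x, ((m₁ x + m₂ x) * (E - 1) + E * m₂ x + m₂ x * B) := by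
    apply Finset.sum_le_sum
    intro x _
    have hpx := hp x
    have hy : 0 ≤ m₂ x / pion x := div_nonneg (h2 x) hpx.le
    have e1 : (m₁ x + m₂ x) / pion x ≤ E * (1 + m₂ x / pion x) := by
      rw [div_le_iff₀ hpx]
      have : E * (1 + m₂ x / pion x) * pion x = E * pion x + E * m₂ x := by field_simp
      rw [this]
      nlinarith [hle x, h2 x]
    have e2 := Real.log_le_log (div_pos (hm x) hpx) e1
    rw [Real.log_mul (by linarith) (by linarith)] at e2
    have e3 := Real.log_le_sub_one_of_pos (by linarith : 0 < E)
    have e4 := Real.log_le_sub_one_of_pos (by linarith : 0 < 1 + m₂ x / pion x)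
    have e5 : 0 ≤ Real.log (1 + m₂ x / pion x) := Real.log_nonneg (by linarith)
    have e6 : m₁ x * Real.log (1 + m₂ x / pion x) ≤ E * m₂ x := by
      calc m₁ x * Real.log (1 + m₂ x / pion x) ≤ (E * pion x) * (m₂ x / pion x) := by
            apply mul_le_mul (hle x) (by linarith) e5
            exact mul_nonneg (by linarith) hpx.le
        _ = E * m₂ x := by field_simp
    have e7 := mul_le_mul_of_nonneg_left (hB x) (h2 x)
    have e8 := mul_le_mul_of_nonneg_left e2 (hm x).le
    have e9 := mul_le_mul_of_nonneg_left e3 (hm x).le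
    linarith
  rw [Finset.sum_add_distrib, Finset.sum_add_distrib, ← Finset.sum_mul, ← Finset.mul_sum,
    ← Finset.sum_mul, hs, hq] at h
  linarith

/-! ### Comparison of the two mixtures -/

lemma artanh_bounds {r : ℝ} (h0 : 0 ≤ r) (h1 : r ≤ 1 / 2) :
    Real.tanh (Real.artanh r) = r ∧ r ≤ Real.artanh r ∧ Real.artanh r ≤ 2 * r := by
  have ht : Real.tanh (Real.artanh r) = r := Real.tanh_artanh ⟨by linarith, by linarith⟩
  have ha : 0 ≤ Real.artanh r := Real.artanh_nonneg h0
  refine ⟨ht, ?_, ?_⟩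
  · have := tanh_le_self_aux ha
    rwa [ht] at this
  · have h2 : r ≤ Real.tanh (2 * r) := by
      have := le_tanh_cubic (by linarith : 0 ≤ 2 * r)
      nlinarith [mul_nonneg h0 h0]
    have := Real.artanh_le_artanh (by linarith) (Real.tanh_lt_one (2 * r)) h2
    rwa [Real.artanh_tanh] at this

lemma tanh_monotone_aux : Monotone Real.tanh :=
  monotone_of_deriv_nonneg (fun y => (hasDerivAt_tanh_sub_sq y).differentiableAt) fun y => by
    rw [(hasDerivAt_tanh_sub_sq y).deriv]
    have := (sq_le_one_iff_abs_le_one (Real.tanh y)).2 (abs_tanh_le_one_aux y)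
    linarith

lemma tanh_sq_le_of_mem {a y : ℝ} (hy : y ∈ Set.Icc (-a) a) :
    Real.tanh y ^ 2 ≤ Real.tanh a ^ 2 := by
  apply sq_le_sq'
  · rw [← Real.tanh_neg]
    exact tanh_monotone_aux hy.1
  · exact tanh_monotone_aux hy.2

/-- The density of the limiting law transported by `t = M tanh y`. -/
noncomputable def cwU (M y : ℝ) : ℝ :=
  Real.exp (-(M * Real.tanh y) ^ 4 / 12) / cwC * (M * (1 - Real.tanh y ^ 2))

lemma continuous_cwU (M : ℝ) : Continuous (cwU M) := by
  have := continuous_tanh_aux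
  unfold cwU
  fun_prop

lemma cwU_nonneg {M : ℝ} (hM : 0 ≤ M) (y : ℝ) : 0 ≤ cwU M y := by
  have := (sq_le_one_iff_abs_le_one (Real.tanh y)).2 (abs_tanh_le_one_aux y)
  have h2 := cwC_pos
  exact mul_nonneg (by positivity) (mul_nonneg hM (by linarith))

lemma substitution_tanh {M R a : ℝ} (hM : 0 < M) (hR : 0 ≤ R) (ha : 0 ≤ a)
    (hta : Real.tanh a = R / M) {g : ℝ → ℝ} (hg : Continuous g) :
    ∫ t in Set.Icc (-R) R, g (t / M) * (Real.exp (-t ^ 4 / 12) / cwC)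
      = ∫ y in Set.Icc (-a) a, g (Real.tanh y) * cwU M y := by
  rw [integral_Icc_eq_integral_Ioc, integral_Icc_eq_integral_Ioc,
    ← intervalIntegral.integral_of_le (by linarith), ← intervalIntegral.integral_of_le (by linarith)]
  have h := intervalIntegral.integral_comp_mul_deriv (a := -a) (b := a)
    (f := fun y => M * Real.tanh y) (f' := fun y => M * (1 - Real.tanh y ^ 2))
    (g := fun t => g (t / M) * (Real.exp (-t ^ 4 / 12) / cwC))
    (fun y _ => (hasDerivAt_tanh_sub_sq y).const_mul M)
    (by
      have := continuous_tanh_aux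
      fun_prop) (by fun_prop)
  simp only [Real.tanh_neg, hta] at h
  rw [show M * (R / M) = R by field_simp, show M * (-(R / M)) = -R by field_simp] at h
  rw [← h]
  congr 1
  funext y
  simp only [Function.comp, cwU]
  rw [mul_div_cancel_left₀ _ hM.ne']
  ring

/-- The factor by which the two mixing densities differ on the bulk. -/
noncomputable def cwErr (N : ℕ) (r : ℝ) : ℝ := Real.exp (N * (2 * r) ^ 6) / (1 - r ^ 2)

lemma one_le_cwErr (N : ℕ) {r : ℝ} (h0 : 0 ≤ r) (h1 : r ≤ 1 / 2) : 1 ≤ cwErr N r := by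
  unfold cwErr
  rw [le_div_iff₀ (by nlinarith)]
  have : 1 ≤ Real.exp (N * (2 * r) ^ 6) := Real.one_le_exp (by positivity)
  nlinarith

lemma density_compare {N : ℕ} {M r a y : ℝ} (hM : 1 ≤ M) (hn : (N : ℝ) = M ^ 4) (h0 : 0 ≤ r)
    (h1 : r ≤ 1 / 2) (ha : a = Real.artanh r) (hy : y ∈ Set.Icc (-a) a) :
    M / cwC * cwE N y ≤ cwErr N r * cwU M y ∧ cwU M y ≤ cwErr N r * (M / cwC * cwE N y) := by
  obtain ⟨ht, _, ha2⟩ := artanh_bounds h0 h1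
  rw [← ha] at ht ha2
  have hts := tanh_sq_le_of_mem hy
  rw [ht] at hts
  have hy6 : y ^ 6 ≤ (2 * r) ^ 6 := by
    rw [← Even.pow_abs (by decide : Even 6)]
    exact pow_le_pow_left₀ (abs_nonneg y) ((abs_le.2 hy).trans ha2) 6
  have hab := abs_le.1 (abs_cwPhi_add_tanh (y := y))
  have hn0 : (0 : ℝ) ≤ N := Nat.cast_nonneg N
  have hC := cwC_pos
  have hr1 : 0 < 1 - r ^ 2 := by nlinarith
  have hMC : 0 < M / cwC := by positivity
  set t := Real.tanh y with htdef
  have hu : cwU M y = M / cwC * (Real.exp (-(N * t ^ 4 / 12)) * (1 - t ^ 2)) := by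
    unfold cwU
    rw [← htdef, mul_pow, ← hn, neg_div]
    ring
  have g1 : cwE N y ≤ Real.exp (N * (2 * r) ^ 6) * Real.exp (-(N * t ^ 4 / 12)) := by
    unfold cwE
    rw [← Real.exp_add, Real.exp_le_exp]
    nlinarith [mul_le_mul_of_nonneg_left (hab.2.trans hy6) hn0]
  have g2 : Real.exp (-(N * t ^ 4 / 12)) ≤ Real.exp (N * (2 * r) ^ 6) * cwE N y := by
    unfold cwE
    rw [← Real.exp_add, Real.exp_le_exp]
    nlinarith [mul_le_mul_of_nonneg_left hy6 hn0, mul_le_mul_of_nonneg_left hab.1 hn0]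
  have p1 := Real.exp_pos (N * (2 * r) ^ 6)
  have p2 := Real.exp_pos (-(N * t ^ 4 / 12))
  have p3 := cwE_pos N y
  rw [hu]
  generalize Real.exp (-(N * t ^ 4 / 12)) = w at *
  unfold cwErr
  generalize Real.exp (N * (2 * r) ^ 6) = X at *
  constructor
  · rw [mul_left_comm]
    apply mul_le_mul_of_nonneg_left _ hMC.le
    rw [div_mul_eq_mul_div, le_div_iff₀ hr1]
    calc cwE N y * (1 - r ^ 2) ≤ (X * w) * (1 - t ^ 2) := by
          apply mul_le_mul g1 (by linarith) hr1.le (by positivity)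
      _ = _ := by ring
  · rw [mul_left_comm (X / (1 - r ^ 2))]
    apply mul_le_mul_of_nonneg_left _ hMC.le
    rw [div_mul_eq_mul_div, le_div_iff₀ hr1]
    have q1 : w * (1 - t ^ 2) ≤ w := by nlinarith [sq_nonneg t]
    have q2 : 0 ≤ w * (1 - t ^ 2) := mul_nonneg p2.le (by linarith)
    nlinarith [sq_nonneg r]

/-- The mass of the tails beyond `R`, up to constants. -/
noncomputable def cwTail (R : ℝ) : ℝ :=
  Real.exp (1 / 320 - 1 / 320 / 2 * R ^ 2) * √(π / (1 / 320 / 2)) / cwC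

lemma tail_density_le {R : ℝ} (hR : 0 ≤ R) :
    ∫ t in (Set.Icc (-R) R)ᶜ, Real.exp (-t ^ 4 / 12) / cwC ≤ cwTail R := by
  rw [integral_div]
  apply div_le_div_of_nonneg_right _ cwC_pos.le
  refine le_trans ?_ (gaussian_tail (1 / 320) (by norm_num) hR)
  apply setIntegral_mono integrable_exp_quartic.integrableOn
    (integrable_exp_sub_mul_sq _ (by norm_num)).integrableOn
  exact exp_quartic_le

lemma tail_cwE_le {N : ℕ} {M R a : ℝ} (hM : 1 ≤ M) (hn : (N : ℝ) = M ^ 4) (hR : 0 ≤ R)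
    (ha : R / M ≤ a) :
    (∫ y in (Set.Icc (-a) a)ᶜ, cwE N y) / cwI N ≤ M * cwTail R := by
  have hM0 : 0 < M := by linarith
  have hN : 0 < N := by
    have : (0 : ℝ) < N := by rw [hn]; positivity
    exact_mod_cast this
  have hC := cwC_pos
  have hr : 0 ≤ R / M := by positivity
  have h1 : ∫ y in (Set.Icc (-a) a)ᶜ, cwE N y
      ≤ Real.exp (1 / 320 - 1 / 320 / 2 * R ^ 2) * √(π / (1 / 320 / 2)) := by
    calc ∫ y in (Set.Icc (-a) a)ᶜ, cwE N y
        ≤ ∫ y in (Set.Icc (-(R / M)) (R / M))ᶜ, cwE N y := by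
          apply setIntegral_mono_set (integrable_cwE hN).integrableOn
          · exact ae_of_all _ fun y => (cwE_pos N y).le
          · exact (Set.compl_subset_compl.2
              (Set.Icc_subset_Icc (by linarith) ha)).eventuallyLE
      _ ≤ ∫ y in (Set.Icc (-(R / M)) (R / M))ᶜ, Real.exp (1 / 320 - M ^ 2 / 320 * y ^ 2) := by
          apply setIntegral_mono (integrable_cwE hN).integrableOn
            (integrable_exp_sub_mul_sq _ (by positivity)).integrableOn
          exact cwE_le hM hn
      _ ≤ _ := gaussian_tail _ (by positivity) hr
      _ ≤ _ := by
          have e : M ^ 2 / 320 / 2 * (R / M) ^ 2 = 1 / 320 / 2 * R ^ 2 := by field_simp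
          rw [e]
          apply mul_le_mul_of_nonneg_left _ (Real.exp_pos _).le
          apply Real.sqrt_le_sqrt
          apply div_le_div_of_nonneg_left Real.pi_pos.le (by norm_num)
          have : 1 ≤ M ^ 2 := one_le_pow₀ hM
          linarith
  rw [div_le_iff₀ (cwI_pos hN)]
  have h2 : M * cwTail R * cwI N
      = Real.exp (1 / 320 - 1 / 320 / 2 * R ^ 2) * √(π / (1 / 320 / 2)) * (M * cwI N / cwC) := by
    unfold cwTail; ring
  rw [h2]
  refine h1.trans (le_mul_of_one_le_right (by positivity) ?_)
  rw [le_div_iff₀ hC, one_mul]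
  exact cwI_ge hM hn

/-- The truncation `ξ ↦ ξ 1{|ξ| ≤ R}`. -/
noncomputable def cwTrunc (R t : ℝ) : ℝ := if |t| ≤ R then t else 0

lemma measurable_cwTrunc (R : ℝ) : Measurable (cwTrunc R) :=
  Measurable.ite (measurableSet_le (by fun_prop) measurable_const) measurable_id measurable_const

lemma abs_cwTrunc_div_le {M R : ℝ} (hM : 0 < M) (hR : 0 ≤ R) (hr : R / M ≤ 1 / 2) (t : ℝ) :
    |cwTrunc R t / M| ≤ 1 / 2 := by
  rw [abs_div, abs_of_pos hM]
  refine le_trans (div_le_div_of_nonneg_right ?_ hM.le) hr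
  unfold cwTrunc
  split_ifs with h
  · exact h
  · simpa using hR

lemma integrable_density : Integrable (fun t : ℝ => Real.exp (-t ^ 4 / 12) / cwC) :=
  integrable_exp_quartic.div_const _

lemma integral_density : ∫ t : ℝ, Real.exp (-t ^ 4 / 12) / cwC = 1 := by
  rw [integral_div]
  exact div_self cwC_pos.ne'

lemma density_nonneg (t : ℝ) : 0 ≤ Real.exp (-t ^ 4 / 12) / cwC :=
  div_nonneg (Real.exp_pos _).le cwC_pos.le

lemma integrable_nu {N : ℕ} (σ : Fin N → Bool) {M R : ℝ} (hM : 0 < M) (hR : 0 ≤ R)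
    (hr : R / M ≤ 1 / 2) :
    Integrable (fun t => cwW σ (cwTrunc R t / M) * (Real.exp (-t ^ 4 / 12) / cwC)) := by
  refine integrable_density.mono' ?_ (ae_of_all _ fun t => ?_)
  · apply AEStronglyMeasurable.mul
    · exact ((continuous_cwW σ).measurable.comp
        ((measurable_cwTrunc R).div_const M)).aestronglyMeasurable
    · exact integrable_density.aestronglyMeasurable
  · have h1 : |cwTrunc R t / M| ≤ 1 := (abs_cwTrunc_div_le hM hR hr t).trans (by norm_num)
    rw [Real.norm_eq_abs, abs_of_nonneg (mul_nonneg (cwW_nonneg σ h1) (density_nonneg t))]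
    exact mul_le_of_le_one_left (density_nonneg t) (cwW_le_one σ h1)

lemma nu_split {N : ℕ} (σ : Fin N → Bool) {M R : ℝ} (hM : 0 < M) (hR : 0 ≤ R)
    (hr : R / M ≤ 1 / 2) :
    ∫ t, cwW σ (cwTrunc R t / M) * (Real.exp (-t ^ 4 / 12) / cwC)
      = (∫ t in Set.Icc (-R) R, cwW σ (t / M) * (Real.exp (-t ^ 4 / 12) / cwC))
        + (1 / 2) ^ N * ∫ t in (Set.Icc (-R) R)ᶜ, Real.exp (-t ^ 4 / 12) / cwC := by
  rw [← integral_add_compl (measurableSet_Icc (a := -R) (b := R)) (integrable_nu σ hM hR hr),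
    ← integral_const_mul]
  congr 1
  · apply setIntegral_congr_fun measurableSet_Icc
    intro t ht
    have : |t| ≤ R := abs_le.2 ht
    simp [cwTrunc, this]
  · apply setIntegral_congr_fun measurableSet_Icc.compl
    intro t ht
    have : ¬ |t| ≤ R := fun h => ht (abs_le.1 h)
    simp only [cwTrunc, this, if_false, zero_div, cwW_zero]

lemma nu_ge {N : ℕ} (σ : Fin N → Bool) {M R : ℝ} (hM : 0 < M) (hR : 0 ≤ R)
    (hr : R / M ≤ 1 / 2) :
    (1 / 4 : ℝ) ^ N ≤ ∫ t, cwW σ (cwTrunc R t / M) * (Real.exp (-t ^ 4 / 12) / cwC) := by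
  have e : (1 / 4 : ℝ) ^ N = ∫ t : ℝ, (1 / 4) ^ N * (Real.exp (-t ^ 4 / 12) / cwC) := by
    rw [integral_const_mul, integral_density, mul_one]
  rw [e]
  apply integral_mono (integrable_density.const_mul _) (integrable_nu σ hM hR hr)
  intro t
  exact mul_le_mul_of_nonneg_right (cwW_ge σ (abs_cwTrunc_div_le hM hR hr t)) (density_nonneg t)

lemma nu_sum (N : ℕ) {M R : ℝ} (hM : 0 < M) (hR : 0 ≤ R) (hr : R / M ≤ 1 / 2) :
    ∑ σ : Fin N → Bool, ∫ t, cwW σ (cwTrunc R t / M) * (Real.exp (-t ^ 4 / 12) / cwC) = 1 := by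
  rw [← integral_finsetSum _ (fun σ _ => integrable_nu σ hM hR hr)]
  simp_rw [← Finset.sum_mul, sum_cwW, one_mul]
  exact integral_density

/-- The Curie–Weiss measure as a mixture of product measures. -/
lemma mu_eq_mixture {N : ℕ} (hN : 0 < N) (σ : Fin N → Bool) :
    Real.exp (1 / (2 * N) * ∑ i, ∑ j, cwSpin (σ i) * cwSpin (σ j))
      / ∑ τ : Fin N → Bool, Real.exp (1 / (2 * N) * ∑ i, ∑ j, cwSpin (τ i) * cwSpin (τ j))
      = (∫ y, cwW σ (Real.tanh y) * cwE N y) / cwI N := by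
  rw [← hubbard_stratonovich hN, ← partition_function hN]
  have h1 : √(2 * π / N) ≠ 0 := by
    have : (0 : ℝ) < N := by exact_mod_cast hN
    positivity
  have h2 : (1 / 2 : ℝ) ^ N ≠ 0 := by positivity
  rw [mul_div_mul_right _ _ h2, mul_div_mul_right _ _ h1]

/-- The uniform measure is dominated by the Curie–Weiss measure, with a polynomial constant. -/
lemma uniform_le_mu {N : ℕ} {M : ℝ} (hM : 1 ≤ M) (hn : (N : ℝ) = M ^ 4) (σ : Fin N → Bool) :
    (1 / 2 : ℝ) ^ N ≤ N * (Real.exp (1 / 320) * √(π / (1 / 320)))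
      * ((∫ y, cwW σ (Real.tanh y) * cwE N y) / cwI N) := by
  have hn1 : (1 : ℝ) ≤ N := by rw [hn]; exact one_le_pow₀ hM
  have hN : 0 < N := by exact_mod_cast (by linarith : (0 : ℝ) < N)
  have hI := cwI_pos hN
  have h1 : (1 / N : ℝ) * (1 / 2) ^ N ≤ ∫ y, cwW σ (Real.tanh y) * cwE N y := by
    rw [← hubbard_stratonovich hN]
    apply mul_le_mul_of_nonneg_right _ (by positivity)
    have e1 : 1 ≤ Real.exp (1 / (2 * N) * ∑ i, ∑ j, cwSpin (σ i) * cwSpin (σ j)) := by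
      apply Real.one_le_exp
      rw [← Finset.sum_mul_sum]
      exact mul_nonneg (by positivity) (mul_self_nonneg _)
    have e2 : (1 / N : ℝ) ≤ √(2 * π / N) := by
      apply Real.le_sqrt_of_sq_le
      rw [div_pow, div_le_div_iff₀ (by positivity) (by linarith)]
      nlinarith [Real.pi_gt_three]
    have e3 : (0 : ℝ) ≤ 1 / N := by positivity
    nlinarith
  have h2 : (1 / 2 : ℝ) ^ N ≤ N * ∫ y, cwW σ (Real.tanh y) * cwE N y := by
    have := mul_le_mul_of_nonneg_left h1 (by linarith : (0 : ℝ) ≤ N)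
    rwa [← mul_assoc, mul_one_div_cancel (by linarith), one_mul] at this
  have h3 : 0 ≤ ∫ y, cwW σ (Real.tanh y) * cwE N y := le_trans (by positivity) h1
  have h4 := cwI_le hM hn
  calc (1 / 2 : ℝ) ^ N ≤ N * ∫ y, cwW σ (Real.tanh y) * cwE N y := h2
    _ ≤ N * ((Real.exp (1 / 320) * √(π / (1 / 320)) / cwI N)
          * ∫ y, cwW σ (Real.tanh y) * cwE N y) := by
        apply mul_le_mul_of_nonneg_left _ (by linarith)
        apply le_mul_of_one_le_left h3
        rwa [le_div_iff₀ hI, one_mul]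
    _ = _ := by ring

lemma log_one_add_four_pow_le {N : ℕ} (hN : 0 < N) : Real.log (1 + 4 ^ N) ≤ 3 * N := by
  rw [Real.log_le_iff_le_exp (by positivity)]
  have h1 : (2 : ℝ) ≤ Real.exp 1 := by linarith [Real.add_one_le_exp (1 : ℝ)]
  have h2 : (8 : ℝ) ^ N ≤ Real.exp (3 * N) := by
    rw [mul_comm, Real.exp_nat_mul]
    apply pow_le_pow_left₀ (by norm_num)
    rw [show (3 : ℝ) = ((3 : ℕ) : ℝ) * 1 by norm_num, Real.exp_nat_mul]
    calc (8 : ℝ) = 2 ^ 3 := by norm_num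
      _ ≤ _ := pow_le_pow_left₀ (by norm_num) h1 3
  have h3 : (2 : ℝ) * 4 ^ N ≤ 8 ^ N := by
    rw [show (8 : ℝ) = 2 * 4 by norm_num, mul_pow]
    apply mul_le_mul_of_nonneg_right _ (by positivity)
    exact le_self_pow₀ (by norm_num) hN.ne'
  have h4 : (1 : ℝ) ≤ 4 ^ N := one_le_pow₀ (by norm_num)
  linarith

/-- Explicit two-sided entropy bounds for fixed `N = M ^ 4` and truncation level `R`. -/
lemma entropy_bounds {N : ℕ} {M R : ℝ} (hM : 1 ≤ M) (hn : (N : ℝ) = M ^ 4) (hR : 0 ≤ R)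
    (hr : R / M ≤ 1 / 2) (hT : M * cwTail R < 1) {mu nu : (Fin N → Bool) → ℝ}
    (hmu : ∀ σ, mu σ = (∫ y, cwW σ (Real.tanh y) * cwE N y) / cwI N)
    (hnu : ∀ σ, nu σ = ∫ t, cwW σ (cwTrunc R t / M) * (Real.exp (-t ^ 4 / 12) / cwC)) :
    (0 ≤ relEnt mu nu ∧ relEnt mu nu ≤ (cwErr N (R / M) - 1) + cwErr N (R / M) * (M * cwTail R)
        + M * cwTail R * (3 * N)) ∧
      (0 ≤ relEnt nu mu ∧ relEnt nu mu ≤ cwErr N (R / M) * (cwErr N (R / M) / (1 - M * cwTail R))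
        + cwTail R * (N * (Real.exp (1 / 320) * √(π / (1 / 320)))) - 1) := by
  have hM0 : 0 < M := by linarith
  have hn1 : (1 : ℝ) ≤ N := by rw [hn]; exact one_le_pow₀ hM
  have hN : 0 < N := by exact_mod_cast (by linarith : (0 : ℝ) < N)
  have hI := cwI_pos hN
  have hC := cwC_pos
  have hr0 : 0 ≤ R / M := by positivity
  obtain ⟨hta, hra, -⟩ := artanh_bounds hr0 hr
  set a := Real.artanh (R / M) with ha
  have ha0 : 0 ≤ a := hr0.trans hra
  set E := cwErr N (R / M) with hE
  have hE1 : 1 ≤ E := one_le_cwErr N hr0 hr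
  set D := Real.exp (1 / 320) * √(π / (1 / 320)) with hD
  have hWE := fun σ : Fin N → Bool => integrable_cwW_mul_cwE hN σ
  have hW0 := fun (σ : Fin N → Bool) y => cwW_nonneg σ (abs_tanh_le_one_aux y)
  have hUint : ∀ {g : ℝ → ℝ}, Continuous g →
      IntegrableOn (fun y => g (Real.tanh y) * cwU M y) (Set.Icc (-a) a) := fun {g} hg =>
    ((hg.comp continuous_tanh_aux).mul (continuous_cwU M)).continuousOn.integrableOn_Icc
  -- the bulk and the tail of the two mixtures
  let m₁ : (Fin N → Bool) → ℝ := fun σ =>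
    (∫ y in Set.Icc (-a) a, cwW σ (Real.tanh y) * cwE N y) / cwI N
  let m₂ : (Fin N → Bool) → ℝ := fun σ =>
    (∫ y in (Set.Icc (-a) a)ᶜ, cwW σ (Real.tanh y) * cwE N y) / cwI N
  let n₁ : (Fin N → Bool) → ℝ := fun σ => ∫ y in Set.Icc (-a) a, cwW σ (Real.tanh y) * cwU M y
  set p := ∫ t in (Set.Icc (-R) R)ᶜ, Real.exp (-t ^ 4 / 12) / cwC with hp
  have hp0 : 0 ≤ p := integral_nonneg fun t => density_nonneg t
  have hpT : p ≤ cwTail R := tail_density_le hR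
  have hmu12 : mu = fun σ => m₁ σ + m₂ σ := by
    funext σ
    rw [hmu, ← integral_add_compl (measurableSet_Icc (a := -a) (b := a)) (hWE σ), add_div]
  have hnu12 : ∀ σ, nu σ = n₁ σ + (1 / 2) ^ N * p := by
    intro σ
    rw [hnu, nu_split σ hM0 hR hr, substitution_tanh hM0 hR ha0 hta (continuous_cwW σ)]
  have hm₁0 : ∀ σ, 0 ≤ m₁ σ := fun σ =>
    div_nonneg (integral_nonneg fun y => mul_nonneg (hW0 σ y) (cwE_pos N y).le) hI.le
  have hm₂0 : ∀ σ, 0 ≤ m₂ σ := fun σ =>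
    div_nonneg (integral_nonneg fun y => mul_nonneg (hW0 σ y) (cwE_pos N y).le) hI.le
  have hn₁0 : ∀ σ, 0 ≤ n₁ σ := fun σ =>
    integral_nonneg fun y => mul_nonneg (hW0 σ y) (cwU_nonneg hM0.le y)
  have hnupos : ∀ σ, 0 < nu σ := fun σ => by
    rw [hnu]
    exact lt_of_lt_of_le (by positivity) (nu_ge σ hM0 hR hr)
  have hmupos : ∀ σ, 0 < mu σ := fun σ => by
    rw [hmu, ← mu_eq_mixture hN]
    exact div_pos (Real.exp_pos _)
      (Finset.sum_pos (fun τ _ => Real.exp_pos _) Finset.univ_nonempty)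
  have hnusum : ∑ σ, nu σ = 1 := by
    simp_rw [hnu]
    exact nu_sum N hM0 hR hr
  have hmusum : ∑ σ, mu σ = 1 := by
    simp_rw [hmu]
    rw [← Finset.sum_div, ← integral_finsetSum _ (fun σ _ => hWE σ)]
    simp_rw [← Finset.sum_mul, sum_cwW, one_mul]
    exact div_self hI.ne'
  -- masses of the two parts of `mu`
  have hm₂sum : ∑ σ, m₂ σ = (∫ y in (Set.Icc (-a) a)ᶜ, cwE N y) / cwI N := by
    simp only [m₂]
    rw [← Finset.sum_div, ← integral_finsetSum _ (fun σ _ => (hWE σ).integrableOn)]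
    simp_rw [← Finset.sum_mul, sum_cwW, one_mul]
  set q := (∫ y in (Set.Icc (-a) a)ᶜ, cwE N y) / cwI N with hq
  have hq0 : 0 ≤ q :=
    div_nonneg (integral_nonneg fun y => (cwE_pos N y).le) hI.le
  have hqT : q ≤ M * cwTail R := tail_cwE_le hM hn hR hra
  -- `L ≥ 1` is the ratio of the normalizing constants
  set L := M * cwI N / cwC with hL
  have hL1 : 1 ≤ L := by
    rw [hL, le_div_iff₀ hC, one_mul]
    exact cwI_ge hM hn
  have hcmp : ∀ y ∈ Set.Icc (-a) a, M / cwC * cwE N y ≤ E * cwU M y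
      ∧ cwU M y ≤ E * (M / cwC * cwE N y) := fun y hy =>
    density_compare hM hn hr0 hr ha hy
  have hLm : ∀ σ, L * m₁ σ = ∫ y in Set.Icc (-a) a,
      cwW σ (Real.tanh y) * (M / cwC * cwE N y) := by
    intro σ
    simp only [m₁, hL]
    simp_rw [mul_left_comm (cwW σ _)]
    rw [integral_const_mul]
    field_simp
  have hint : ∀ σ : Fin N → Bool, IntegrableOn
      (fun y => cwW σ (Real.tanh y) * (M / cwC * cwE N y)) (Set.Icc (-a) a) := by
    intro σ
    simp_rw [mul_left_comm (cwW σ _)]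
    exact ((hWE σ).const_mul _).integrableOn
  have hup : ∀ σ, L * m₁ σ ≤ E * n₁ σ := by
    intro σ
    simp only [n₁]
    rw [hLm, ← integral_const_mul]
    apply setIntegral_mono_on (hint σ) ((hUint (continuous_cwW σ)).const_mul E) measurableSet_Icc
    intro y hy
    rw [mul_left_comm E]
    exact mul_le_mul_of_nonneg_left (hcmp y hy).1 (hW0 σ y)
  have hdown : ∀ σ, n₁ σ ≤ E * (L * m₁ σ) := by
    intro σ
    simp only [n₁]
    rw [hLm, ← integral_const_mul]
    apply setIntegral_mono_on (hUint (continuous_cwW σ)) ((hint σ).const_mul E) measurableSet_Icc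
    intro y hy
    rw [mul_left_comm E]
    exact mul_le_mul_of_nonneg_left (hcmp y hy).2 (hW0 σ y)
  -- comparing total masses bounds `L` from above
  have hLle : L ≤ E / (1 - M * cwTail R) := by
    rw [le_div_iff₀ (by linarith)]
    have s1 : ∑ σ, m₁ σ = 1 - q := by
      rw [hmu12, Finset.sum_add_distrib, hm₂sum] at hmusum
      linarith
    have s2 : ∑ σ, n₁ σ ≤ 1 := by
      rw [← hnusum]
      apply Finset.sum_le_sum
      intro σ _
      rw [hnu12]
      have : 0 ≤ (1 / 2 : ℝ) ^ N * p := by positivity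
      linarith
    have s3 : ∑ σ, L * m₁ σ ≤ ∑ σ, E * n₁ σ := Finset.sum_le_sum fun σ _ => hup σ
    rw [← Finset.mul_sum, ← Finset.mul_sum, s1] at s3
    have s4 : E * ∑ σ, n₁ σ ≤ E := mul_le_of_le_one_right (by linarith) s2
    have s5 : L * (1 - M * cwTail R) ≤ L * (1 - q) :=
      mul_le_mul_of_nonneg_left (by linarith) (by linarith)
    linarith
  have hnun : ∀ σ, n₁ σ ≤ nu σ := fun σ => by
    rw [hnu12]
    have : 0 ≤ (1 / 2 : ℝ) ^ N * p := by positivity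
    linarith
  refine ⟨⟨relEnt_nonneg_aux hmupos hnupos hmusum hnusum, ?_⟩,
    relEnt_nonneg_aux hnupos hmupos hnusum hmusum, ?_⟩
  · have key : relEnt (fun σ => m₁ σ + m₂ σ) nu ≤ (E - 1) + E * q + q * (3 * N) := by
      apply relEnt_le_split _ hm₂0 hnupos _ hm₂sum hE1
      · intro σ
        have t1 := hup σ
        have t2 : m₁ σ ≤ L * m₁ σ := le_mul_of_one_le_left (hm₁0 σ) hL1
        have t3 := mul_le_mul_of_nonneg_left (hnun σ) (by linarith : 0 ≤ E)
        linarith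
      · intro σ
        refine le_trans ?_ (log_one_add_four_pow_le hN)
        have t0 : 0 ≤ m₂ σ / nu σ := div_nonneg (hm₂0 σ) (hnupos σ).le
        apply Real.log_le_log (by linarith)
        have t1 : m₂ σ ≤ 1 := by
          have u1 := Finset.single_le_sum (f := m₂) (fun τ _ => hm₂0 τ) (Finset.mem_univ σ)
          rw [hm₂sum] at u1
          linarith
        have t2 : (1 / 4 : ℝ) ^ N ≤ nu σ := by
          rw [hnu]
          exact nu_ge σ hM0 hR hr
        have t3 : (4 : ℝ) ^ N * (1 / 4) ^ N = 1 := by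
          rw [← mul_pow]
          norm_num
        have t4 := mul_le_mul_of_nonneg_left t2 (by positivity : (0 : ℝ) ≤ 4 ^ N)
        have : m₂ σ / nu σ ≤ 4 ^ N := by
          rw [div_le_iff₀ (hnupos σ)]
          linarith
        linarith
      · intro σ
        have := hmupos σ
        rwa [hmu12] at this
      · rwa [hmu12] at hmusum
    rw [hmu12]
    have t1 := mul_le_mul_of_nonneg_left hqT (by linarith : 0 ≤ E)
    have t2 := mul_le_mul_of_nonneg_right hqT (by linarith : (0 : ℝ) ≤ 3 * N)
    linarith
  · apply relEnt_le_of_le hnupos hmupos hnusum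
    intro σ
    have t1 : m₁ σ ≤ mu σ := by
      rw [hmu12]
      linarith [hm₂0 σ]
    have t2 : n₁ σ ≤ E * (E / (1 - M * cwTail R)) * mu σ := by
      refine (hdown σ).trans ?_
      rw [mul_assoc]
      apply mul_le_mul_of_nonneg_left _ (by linarith)
      exact mul_le_mul hLle t1 (hm₁0 σ) (le_trans (by linarith) hLle)
    have t3 : (1 / 2 : ℝ) ^ N ≤ N * D * mu σ := by
      rw [hmu]
      exact uniform_le_mu hM hn σ
    have t4 : (1 / 2 : ℝ) ^ N * p ≤ N * D * mu σ * cwTail R :=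
      mul_le_mul t3 hpT hp0 (le_trans (by positivity) t3)
    rw [hnu12]
    linarith

/-! ### Passage to the limit -/

/-- The tail beyond `N^δ` beats every polynomial; the square suffices. -/
lemma tendsto_sq_mul_cwTail {δ : ℝ} (hδ : 0 < δ) :
    Tendsto (fun N : ℕ => (N : ℝ) ^ 2 * cwTail ((N : ℝ) ^ δ)) atTop (nhds 0) := by
  have h1 : Tendsto (fun N : ℕ => (N : ℝ) ^ (2 * δ)) atTop atTop :=
    (tendsto_rpow_atTop (by linarith)).comp tendsto_natCast_atTop_atTop
  have h2 := (tendsto_rpow_mul_exp_neg_mul_atTop_nhds_zero (1 / δ) (1 / 320 / 2)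
    (by norm_num)).comp h1
  have h3 := h2.const_mul (Real.exp (1 / 320) * √(π / (1 / 320 / 2)) / cwC)
  rw [mul_zero] at h3
  refine h3.congr fun N => ?_
  have hN : (0 : ℝ) ≤ N := Nat.cast_nonneg N
  have e1 : ((N : ℝ) ^ (2 * δ)) ^ (1 / δ) = (N : ℝ) ^ 2 := by
    rw [← Real.rpow_mul hN, show 2 * δ * (1 / δ) = (2 : ℕ) by field_simp; norm_num,
      Real.rpow_natCast]
  have e2 : (N : ℝ) ^ (2 * δ) = ((N : ℝ) ^ δ) ^ 2 := by
    rw [mul_comm, Real.rpow_mul hN]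
    norm_num
  simp only [Function.comp, e1]
  rw [e2, cwTail, sub_eq_add_neg, Real.exp_add]
  ring_nf

lemma cwTail_nonneg (R : ℝ) : 0 ≤ cwTail R := by
  have := cwC_pos
  unfold cwTail
  positivity

lemma tendsto_natCast_rpow_neg {s : ℝ} (hs : s < 0) :
    Tendsto (fun N : ℕ => (N : ℝ) ^ s) atTop (nhds 0) := by
  have := (tendsto_rpow_neg_atTop (y := -s) (by linarith)).comp tendsto_natCast_atTop_atTop
  simpa [Function.comp_def] using this

/-- For the critical Curie–Weiss model (`β = 1`, `h = 0`), with `ξ` having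
density `f₁(x) = exp(−x⁴/12)/∫ exp(−y⁴/12) dy`, truncated at `N^δ` (`0 < δ < 1/20`),
and `ν_N(σ) = E[∏_i ½(1 + ξ_N σ_i / N^{1/4})]`, one has `H(μ_N|ν_N) → 0` and
`H(ν_N|μ_N) → 0` as `N → ∞`. Spins `±1` are encoded by `Bool`. -/
theorem stmt_9
    (δ : ℝ) (hδ0 : 0 < δ) (hδ : δ < 1 / 20)
    (spin : Bool → ℝ) (hspin : ∀ b, spin b = if b then 1 else -1)
    (Z : ℕ → ℝ)
    (hZ : ∀ N : ℕ, Z N = ∑ σ : Fin N → Bool,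
      Real.exp (1 / (2 * N) * ∑ i, ∑ j, spin (σ i) * spin (σ j)))
    (μ : ∀ N : ℕ, (Fin N → Bool) → ℝ)
    (hμ : ∀ N σ, μ N σ =
      Real.exp (1 / (2 * N) * ∑ i, ∑ j, spin (σ i) * spin (σ j)) / Z N)
    (f1 : ℝ → ℝ)
    (hf1 : ∀ x, f1 x = Real.exp (-x ^ 4 / 12) / ∫ y : ℝ, Real.exp (-y ^ 4 / 12))
    (ν : ∀ N : ℕ, (Fin N → Bool) → ℝ)
    (hν : ∀ N σ, ν N σ =
      ∫ t : ℝ, (∏ i, (1 / 2 : ℝ) * (1 + (if |t| ≤ (N : ℝ) ^ δ then t else 0) *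
        spin (σ i) / (N : ℝ) ^ ((1 : ℝ) / 4))) * f1 t) :
    Tendsto (fun N => relEnt (μ N) (ν N)) atTop (nhds 0) ∧
      Tendsto (fun N => relEnt (ν N) (μ N)) atTop (nhds 0) := by
  have hsp : spin = cwSpin := funext fun b => by rw [hspin, cwSpin]
  subst hsp
  let M : ℕ → ℝ := fun N => (N : ℝ) ^ ((1 : ℝ) / 4)
  let R : ℕ → ℝ := fun N => (N : ℝ) ^ δ
  have hM4 : ∀ N : ℕ, (N : ℝ) = M N ^ 4 := by
    intro N
    simp only [M]
    rw [← Real.rpow_natCast, ← Real.rpow_mul (Nat.cast_nonneg N)]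
    norm_num
  have hM1 : ∀ N : ℕ, 1 ≤ N → 1 ≤ M N := fun N hN =>
    Real.one_le_rpow (by exact_mod_cast hN) (by norm_num)
  have hR0 : ∀ N, 0 ≤ R N := fun N => Real.rpow_nonneg (Nat.cast_nonneg N) _
  -- the truncation level is of order `N^(δ - 1/4)` in the magnetization
  have hr : Tendsto (fun N => R N / M N) atTop (nhds 0) := by
    refine (tendsto_natCast_rpow_neg (s := δ - 1 / 4) (by linarith)).congr' ?_
    filter_upwards [eventually_ge_atTop 1] with N hN
    have : (0 : ℝ) < N := by exact_mod_cast hN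
    rw [Real.rpow_sub this]
  have hr6 : Tendsto (fun N : ℕ => (N : ℝ) * (2 * (R N / M N)) ^ 6) atTop (nhds 0) := by
    have h := (tendsto_natCast_rpow_neg (s := 1 + (δ - 1 / 4) * (6 : ℕ))
      (by push_cast; linarith)).const_mul (64 : ℝ)
    rw [mul_zero] at h
    refine h.congr' ?_
    filter_upwards [eventually_ge_atTop 1] with N hN
    have h0 : (0 : ℝ) < N := by exact_mod_cast hN
    rw [Real.rpow_add h0, Real.rpow_one, Real.rpow_mul h0.le, Real.rpow_natCast, Real.rpow_sub h0]
    ring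
  have hE : Tendsto (fun N => cwErr N (R N / M N)) atTop (nhds 1) := by
    have h1 := (Real.continuous_exp.tendsto 0).comp hr6
    have h2 := (hr.pow 2).const_sub (1 : ℝ)
    have h3 := h1.div h2 (by norm_num)
    rw [Real.exp_zero, zero_pow two_ne_zero, sub_zero, div_one] at h3
    exact h3
  have hT2 := tendsto_sq_mul_cwTail hδ0
  have hMn : ∀ N : ℕ, 1 ≤ N → M N ≤ N := fun N hN => by
    conv_rhs => rw [hM4 N]
    exact le_self_pow₀ (hM1 N hN) (by norm_num)
  have hMTn : Tendsto (fun N : ℕ => M N * cwTail (R N) * N) atTop (nhds 0) := by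
    refine squeeze_zero' (Eventually.of_forall fun N => ?_) ?_ hT2
    · exact mul_nonneg (mul_nonneg (Real.rpow_nonneg (Nat.cast_nonneg N) _) (cwTail_nonneg _))
        (Nat.cast_nonneg N)
    · filter_upwards [eventually_ge_atTop 1] with N hN
      have := mul_le_mul_of_nonneg_right (hMn N hN)
        (mul_nonneg (cwTail_nonneg (R N)) (Nat.cast_nonneg (α := ℝ) N))
      calc M N * cwTail (R N) * N = M N * (cwTail (R N) * N) := by ring
        _ ≤ _ := this
        _ = _ := by simp only [R]; ring
  have hMT : Tendsto (fun N : ℕ => M N * cwTail (R N)) atTop (nhds 0) := by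
    refine squeeze_zero' (Eventually.of_forall fun N => ?_) ?_ hMTn
    · exact mul_nonneg (Real.rpow_nonneg (Nat.cast_nonneg N) _) (cwTail_nonneg _)
    · filter_upwards [eventually_ge_atTop 1] with N hN
      apply le_mul_of_one_le_right
      · exact mul_nonneg (Real.rpow_nonneg (Nat.cast_nonneg N) _) (cwTail_nonneg _)
      · exact_mod_cast hN
  have hTn : Tendsto (fun N : ℕ => cwTail (R N) * N) atTop (nhds 0) := by
    refine squeeze_zero' (Eventually.of_forall fun N => ?_) ?_ hMTn
    · exact mul_nonneg (cwTail_nonneg _) (Nat.cast_nonneg N)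
    · filter_upwards [eventually_ge_atTop 1] with N hN
      rw [mul_assoc]
      exact le_mul_of_one_le_left (mul_nonneg (cwTail_nonneg _) (Nat.cast_nonneg N)) (hM1 N hN)
  have hbounds : ∀ᶠ N : ℕ in atTop,
      (0 ≤ relEnt (μ N) (ν N) ∧ relEnt (μ N) (ν N) ≤ (cwErr N (R N / M N) - 1)
          + cwErr N (R N / M N) * (M N * cwTail (R N)) + M N * cwTail (R N) * (3 * N)) ∧
      (0 ≤ relEnt (ν N) (μ N) ∧ relEnt (ν N) (μ N) ≤
          cwErr N (R N / M N) * (cwErr N (R N / M N) / (1 - M N * cwTail (R N)))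
          + cwTail (R N) * (N * (Real.exp (1 / 320) * √(π / (1 / 320)))) - 1) := by
    filter_upwards [eventually_ge_atTop 1, hr.eventually_le_const (by norm_num : (0 : ℝ) < 1 / 2),
      hMT.eventually_lt_const zero_lt_one] with N hN h1 h2
    refine entropy_bounds (hM1 N hN) (hM4 N) (hR0 N) h1 h2 (fun σ => ?_) (fun σ => ?_)
    · rw [hμ, hZ]
      exact mu_eq_mixture hN σ
    · rw [hν]
      congr 1
      funext t
      rw [hf1]
      congr 1
      unfold cwW
      apply Finset.prod_congr rfl
      intro i _
      rw [cwTrunc]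
      simp only [M, R]
      ring
  constructor
  · refine squeeze_zero' (hbounds.mono fun N h => h.1.1) (hbounds.mono fun N h => h.1.2) ?_
    have h := ((hE.sub_const 1).add (hE.mul hMT)).add (hMTn.const_mul 3)
    have e : (1 : ℝ) - 1 + 1 * 0 + 3 * 0 = 0 := by norm_num
    rw [e] at h
    exact h.congr fun N => by ring
  · refine squeeze_zero' (hbounds.mono fun N h => h.2.1) (hbounds.mono fun N h => h.2.2) ?_
    have h := ((hE.mul (hE.div (hMT.const_sub 1) (by norm_num))).add
      (hTn.mul_const (Real.exp (1 / 320) * √(π / (1 / 320))))).sub_const 1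
    have e : (1 : ℝ) * (1 / (1 - 0)) + 0 * (Real.exp (1 / 320) * √(π / (1 / 320))) - 1 = 0 := by
      norm_num
    rw [e] at h
    refine h.congr fun N => ?_
    simp only [Pi.div_apply]
    ring
end

section
/- For the critical Curie–Weiss model (β = 1, h = 0), the partition function satisfies lim_{N→∞} Z_N / (2^N N^{1/4}) = (2π)^{−1/2} ∫_{−∞}^{∞} exp(−u⁴/12) du = 12^{1/4} Γ(1/4) / (2√(2π)). -/
open Filter Real MeasureTheory

/-!
Write `r = N ^ (1 / 4)`. Linearizing the square of the total spin by a Gaussian integral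
(Hubbard–Stratonovich, `partition_eq_integral`) and summing over the independent spins gives
`Z_N / (2 ^ N * r) = (2π) ^ (-1 / 2) * ∫ u, (exp (-t ^ 2 / 2) * cosh t) ^ N` with `t = u / r`.

The integrand is `exp (-N * (t ^ 2 / 2 - log (cosh t)))`, and for all real `t` (`le_gap`, `gap_le`)
`t ^ 4 / (12 * (1 + t ^ 2)) ≤ t ^ 2 / 2 - log (cosh t) ≤ t ^ 4 / 12`.
Since `N * t ^ 4 = u ^ 4`, the exponent lies between `-u ^ 4 / 12` and
`-u ^ 4 / (12 * (1 + u ^ 2 / r ^ 2))`. This squeezes the integrand to `exp (-u ^ 4 / 12)` and also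
bounds it by the integrable function `exp ((1 - u ^ 2) / 12)`, so dominated convergence applies.
The two inequalities are obtained by integrating bounds on `t - tanh t`, which in turn follow from
`t ^ 2 / (1 + t ^ 2) ≤ tanh t ^ 2 ≤ t ^ 2` for `t ≥ 0`. The closed form is a Gamma integral.
-/

theorem nonneg_of_deriv_nonneg {F F' : ℝ → ℝ} (h0 : F 0 = 0)
    (hd : ∀ t, HasDerivAt F (F' t) t) (hF' : ∀ t, 0 ≤ t → 0 ≤ F' t) {t : ℝ} (ht : 0 ≤ t) :
    0 ≤ F t := by
  have hmono : MonotoneOn F (Set.Ici 0) := by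
    refine monotoneOn_of_deriv_nonneg (convex_Ici 0)
      (fun x _ => (hd x).continuousAt.continuousWithinAt)
      (fun x _ => (hd x).differentiableAt.differentiableWithinAt) fun x hx => ?_
    rw [interior_Ici] at hx
    rw [(hd x).deriv]
    exact hF' x (le_of_lt hx)
  have := hmono (Set.self_mem_Ici) ht ht
  rwa [h0] at this

theorem hasDerivAt_tanh' (t : ℝ) : HasDerivAt tanh (1 - tanh t ^ 2) t := by
  have h : HasDerivAt (fun x => sinh x / cosh x) _ t :=
    (hasDerivAt_sinh t).div (hasDerivAt_cosh t) (cosh_pos t).ne'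
  have e : tanh = fun x => sinh x / cosh x := funext tanh_eq_sinh_div_cosh
  rw [e]
  convert h using 1
  have := (cosh_pos t).ne'
  field_simp

theorem tanh_nonneg_of_nonneg {t : ℝ} (ht : 0 ≤ t) : 0 ≤ tanh t := by
  rw [tanh_eq_sinh_div_cosh]
  exact div_nonneg (sinh_nonneg_iff.2 ht) (cosh_pos t).le

theorem tanh_le_self_of_nonneg {t : ℝ} (ht : 0 ≤ t) : tanh t ≤ t := by
  have := nonneg_of_deriv_nonneg (F := fun t => t - tanh t) (by simp)
    (fun t => (hasDerivAt_id t).sub (hasDerivAt_tanh' t))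
    (fun t _ => by nlinarith [sq_nonneg (tanh t)]) ht
  simpa using this

/-- Comparison of derivatives: `tanh t ^ 2 ≤ t ^ 2`. -/
theorem sub_tanh_le {t : ℝ} (ht : 0 ≤ t) : t - tanh t ≤ t ^ 3 / 3 := by
  have := nonneg_of_deriv_nonneg (F := fun t => t ^ 3 / 3 - (t - tanh t)) (by simp)
    (fun t => ((hasDerivAt_pow 3 t).div_const 3).sub
      ((hasDerivAt_id t).sub (hasDerivAt_tanh' t)))
    (fun t ht => by
      have h1 := tanh_nonneg_of_nonneg ht
      have h2 := tanh_le_self_of_nonneg ht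
      norm_num
      nlinarith) ht
  simpa using this

/-- Equivalent to `t ≤ sinh t`, via `cosh t ^ 2 = 1 + sinh t ^ 2`. -/
theorem sq_div_le_tanh_sq {t : ℝ} (ht : 0 ≤ t) : t ^ 2 / (1 + t ^ 2) ≤ tanh t ^ 2 := by
  have h := self_le_sinh_iff.2 ht
  have hc := cosh_pos t
  rw [tanh_eq_sinh_div_cosh, div_pow, div_le_div_iff₀ (by positivity) (by positivity), cosh_sq]
  nlinarith

/-- Comparison of derivatives: that of the left side is
`(3 * t ^ 2 + t ^ 4) / (3 * (1 + t ^ 2) ^ 2) ≤ t ^ 2 / (1 + t ^ 2) ≤ tanh t ^ 2`. -/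
theorem le_sub_tanh {t : ℝ} (ht : 0 ≤ t) : t ^ 3 / (3 * (1 + t ^ 2)) ≤ t - tanh t := by
  have := nonneg_of_deriv_nonneg
    (F := fun t => (t - tanh t) - t ^ 3 / (3 * (1 + t ^ 2))) (by simp)
    (fun t => ((hasDerivAt_id t).sub (hasDerivAt_tanh' t)).sub
      ((hasDerivAt_pow 3 t).div (((hasDerivAt_pow 2 t).const_add 1).const_mul 3)
        (by positivity)))
    (fun t ht => by
      have h1 := sq_div_le_tanh_sq ht
      have h2 : (3 * t ^ 2 + t ^ 4) / (3 * (1 + t ^ 2) ^ 2) ≤ t ^ 2 / (1 + t ^ 2) := by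
        rw [div_le_div_iff₀ (by positivity) (by positivity)]
        have : 0 ≤ t ^ 4 * (1 + t ^ 2) := by positivity
        nlinarith
      have h3 : (3 * t ^ 2 + t ^ 4) / (3 * (1 + t ^ 2) ^ 2) =
          (((3 : ℕ) : ℝ) * t ^ (3 - 1) * (3 * (1 + t ^ 2)) -
            t ^ 3 * (3 * (((2 : ℕ) : ℝ) * t ^ (2 - 1)))) / (3 * (1 + t ^ 2)) ^ 2 := by
        norm_num
        field_simp
        ring
      rw [← h3]
      linarith) ht
  simpa using this

theorem hasDerivAt_log_cosh_s10 (t : ℝ) : HasDerivAt (fun t => log (cosh t)) (tanh t) t := by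
  have := (hasDerivAt_cosh t).log (cosh_pos t).ne'
  rwa [← tanh_eq_sinh_div_cosh] at this

theorem hasDerivAt_gap (t : ℝ) :
    HasDerivAt (fun t => t ^ 2 / 2 - log (cosh t)) (t - tanh t) t := by
  have h : HasDerivAt (fun t => t ^ 2 / 2 - log (cosh t)) _ t :=
    ((hasDerivAt_pow 2 t).div_const 2).sub (hasDerivAt_log_cosh_s10 t)
  simpa using h

theorem gap_le (t : ℝ) : t ^ 2 / 2 - log (cosh t) ≤ t ^ 4 / 12 := by
  wlog ht : 0 ≤ t generalizing t
  · have := this (-t) (by linarith)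
    rw [cosh_neg] at this
    linarith [neg_sq t, (by ring : (-t) ^ 4 = t ^ 4)]
  have := nonneg_of_deriv_nonneg
    (F := fun t => t ^ 4 / 12 - (t ^ 2 / 2 - log (cosh t))) (by simp)
    (fun t => ((hasDerivAt_pow 4 t).div_const 12).sub (hasDerivAt_gap t))
    (fun t ht => by
      have := sub_tanh_le ht
      norm_num at this ⊢
      linarith) ht
  simpa using this

/-- Has the sharp constant `1 / 12` at `t → 0`, yet grows quadratically as `t → ∞`: the first gives
the pointwise limit, and both together an integrable majorant. -/
theorem le_gap (t : ℝ) : t ^ 4 / (12 * (1 + t ^ 2)) ≤ t ^ 2 / 2 - log (cosh t) := by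
  wlog ht : 0 ≤ t generalizing t
  · have := this (-t) (by linarith)
    rwa [cosh_neg, neg_sq, (by ring : (-t) ^ 4 = t ^ 4)] at this
  have := nonneg_of_deriv_nonneg
    (F := fun t => (t ^ 2 / 2 - log (cosh t)) - t ^ 4 / (12 * (1 + t ^ 2))) (by simp)
    (fun t => (hasDerivAt_gap t).sub
      ((hasDerivAt_pow 4 t).div (((hasDerivAt_pow 2 t).const_add 1).const_mul 12)
        (by positivity)))
    (fun t ht => by
      have h1 := le_sub_tanh ht
      have h2 : (((4 : ℕ) : ℝ) * t ^ (4 - 1) * (12 * (1 + t ^ 2)) -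
            t ^ 4 * (12 * (((2 : ℕ) : ℝ) * t ^ (2 - 1)))) / (12 * (1 + t ^ 2)) ^ 2
          ≤ t ^ 3 / (3 * (1 + t ^ 2)) := by
        rw [div_le_div_iff₀ (by positivity) (by positivity)]
        norm_num
        have : 0 ≤ t ^ 5 * (1 + t ^ 2) := by positivity
        nlinarith
      linarith) ht
  simpa using this

/-- The function `exp (-t ^ 2 / 2) * cosh t`, whose `N`-th power at `t = u / N ^ (1 / 4)` is the
integrand of the Hubbard–Stratonovich representation of `√(2π) * Z_N / (2 ^ N * N ^ (1 / 4))`. -/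
noncomputable def hsDensity (t : ℝ) : ℝ := exp (-t ^ 2 / 2) * cosh t

theorem hsDensity_pow (t : ℝ) (N : ℕ) :
    hsDensity t ^ N = exp (-(N * (t ^ 2 / 2 - log (cosh t)))) := by
  have : hsDensity t = exp (-(t ^ 2 / 2 - log (cosh t))) := by
    rw [hsDensity, neg_sub, sub_eq_add_neg, exp_add, exp_log (cosh_pos t), mul_comm, neg_div]
  rw [this, ← exp_nat_mul]
  ring_nf

/-- The Gaussian integral with a linear term, by completing the square. -/
theorem integral_gaussian_linear {b : ℝ} (hb : 0 < b) (c : ℝ) :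
    Integrable (fun u : ℝ => exp (-b * u ^ 2 + c * u)) ∧
      ∫ u : ℝ, exp (-b * u ^ 2 + c * u) = exp (c ^ 2 / (4 * b)) * sqrt (π / b) := by
  have e : (fun u : ℝ => exp (-b * u ^ 2 + c * u)) =
      fun u => exp (c ^ 2 / (4 * b)) * exp (-b * (u - c / (2 * b)) ^ 2) := by
    funext u
    rw [← exp_add]
    congr 1
    field_simp
    ring
  rw [e]
  constructor
  · exact ((integrable_exp_neg_mul_sq hb).comp_sub_right (c / (2 * b))).const_mul _
  · rw [integral_const_mul,
      integral_sub_right_eq_self (fun u : ℝ => exp (-b * u ^ 2)) (c / (2 * b)),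
      integral_gaussian]

theorem sum_exp_spin (spin : Bool → ℝ) (hspin : ∀ b, spin b = if b then 1 else -1)
    (N : ℕ) (a : ℝ) :
    ∑ σ : Fin N → Bool, exp (a * ∑ i, spin (σ i)) = (2 * cosh a) ^ N := by
  have h := Finset.prod_univ_sum (fun _ : Fin N => (Finset.univ : Finset Bool))
    (fun _ b => exp (a * spin b))
  rw [Fintype.piFinset_univ] at h
  simp_rw [Finset.mul_sum, exp_sum]
  rw [← h]
  simp [hspin, cosh_eq]
  ring

/-- Hubbard–Stratonovich: each Boltzmann weight `exp (S ^ 2 / (2 * N))`, `S` the total spin, is a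
Gaussian integral of `exp (S * u / r)`, and the sum over configurations then factorizes. -/
theorem partition_eq_integral (spin : Bool → ℝ) (hspin : ∀ b, spin b = if b then 1 else -1)
    (N : ℕ) {r : ℝ} (hr : 0 < r) (hrN : r ^ 4 = N) :
    (∑ σ : Fin N → Bool, exp (1 / (2 * N) * ∑ i, ∑ j, spin (σ i) * spin (σ j))) /
      (2 ^ N * r) = (sqrt (2 * π))⁻¹ * ∫ u : ℝ, hsDensity (u / r) ^ N := by
  have hb : 0 < r ^ 2 / 2 := by positivity
  have hσ : ∀ σ : Fin N → Bool,
      exp (1 / (2 * N) * ∑ i, ∑ j, spin (σ i) * spin (σ j)) =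
        r / sqrt (2 * π) *
          ∫ u : ℝ, exp (-(r ^ 2 / 2) * u ^ 2 + (∑ i, spin (σ i)) / r * u) := by
    intro σ
    rw [(integral_gaussian_linear hb _).2, ← Finset.sum_mul_sum, ← hrN,
      show π / (r ^ 2 / 2) = 2 * π / r ^ 2 by field_simp, sqrt_div (by positivity),
      sqrt_sq hr.le]
    have : sqrt (2 * π) ≠ 0 := by positivity
    field_simp
    congr 1
    field_simp
    ring
  simp_rw [hσ]
  rw [← Finset.mul_sum, ← integral_finsetSum _
    fun σ _ => (integral_gaussian_linear hb _).1]
  have hsum : ∀ u : ℝ, ∑ σ : Fin N → Bool,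
      exp (-(r ^ 2 / 2) * u ^ 2 + (∑ i, spin (σ i)) / r * u) =
        2 ^ N * hsDensity (u / r) ^ N := by
    intro u
    have : ∀ σ : Fin N → Bool,
        exp (-(r ^ 2 / 2) * u ^ 2 + (∑ i, spin (σ i)) / r * u) =
          exp (-(r ^ 2 / 2) * u ^ 2) * exp (u / r * ∑ i, spin (σ i)) := by
      intro σ
      rw [← exp_add]
      ring_nf
    simp_rw [this]
    rw [← Finset.mul_sum, sum_exp_spin spin hspin, hsDensity, mul_pow, mul_pow, ← exp_nat_mul,
      ← hrN]
    have : r ^ 4 * (-(u / r) ^ 2 / 2) = -(r ^ 2 / 2) * u ^ 2 := by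
      field_simp
    rw [this]
    ring
  simp_rw [hsum]
  rw [integral_const_mul]
  field_simp

theorem quartic_integral :
    ∫ u : ℝ, exp (-u ^ 4 / 12) = (12 : ℝ) ^ ((1 : ℝ) / 4) * Gamma (1 / 4) / 2 := by
  have h1 : ∫ u : ℝ, exp (-u ^ 4 / 12) = ∫ u : ℝ, exp (-|u| ^ 4 / 12) := by
    simp [Even.pow_abs (show Even 4 by decide)]
  rw [h1, integral_comp_abs (f := fun u => exp (-u ^ 4 / 12))]
  have h2 := integral_exp_neg_mul_rpow (p := 4) (b := 1 / 12) (by norm_num) (by norm_num)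
  have h3 : ∫ u in Set.Ioi (0 : ℝ), exp (-u ^ 4 / 12) =
      ∫ u in Set.Ioi (0 : ℝ), exp (-(1 / 12) * u ^ (4 : ℝ)) := by
    congr 1
    funext u
    norm_cast
    congr 1
    ring
  rw [h3, h2, Gamma_add_one (by norm_num), one_div (12 : ℝ), inv_rpow (by norm_num),
    ← rpow_neg (by norm_num)]
  norm_num
  ring

/-- Laplace asymptotics at the degenerate maximum `t = 0` of `hsDensity`, by dominated convergence. -/
theorem tendsto_integral_hsDensity :
    Tendsto (fun N : ℕ => ∫ u : ℝ, hsDensity (u / (N : ℝ) ^ ((1 : ℝ) / 4)) ^ N) atTop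
      (nhds (∫ u : ℝ, exp (-u ^ 4 / 12))) := by
  have hr : ∀ N : ℕ, ((N : ℝ) ^ ((1 : ℝ) / 4)) ^ 4 = N := fun N => by
    rw [← rpow_natCast, ← rpow_mul (by positivity)]
    norm_num
  have hlow : ∀ (N : ℕ) (u : ℝ), 1 ≤ N →
      u ^ 4 / (12 * (1 + (u / (N : ℝ) ^ ((1 : ℝ) / 4)) ^ 2)) ≤
        N * ((u / (N : ℝ) ^ ((1 : ℝ) / 4)) ^ 2 / 2 -
          log (cosh (u / (N : ℝ) ^ ((1 : ℝ) / 4)))) := by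
    intro N u hN
    have hN' : (0 : ℝ) < N := by exact_mod_cast hN
    refine le_trans (le_of_eq ?_) (mul_le_mul_of_nonneg_left (le_gap _) hN'.le)
    rw [div_pow u _ 4, hr]
    field_simp
  have hhigh : ∀ (N : ℕ) (u : ℝ), 1 ≤ N →
      N * ((u / (N : ℝ) ^ ((1 : ℝ) / 4)) ^ 2 / 2 -
          log (cosh (u / (N : ℝ) ^ ((1 : ℝ) / 4)))) ≤ u ^ 4 / 12 := by
    intro N u hN
    have hN' : (0 : ℝ) < N := by exact_mod_cast hN
    refine (mul_le_mul_of_nonneg_left (gap_le _) hN'.le).trans (le_of_eq ?_)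
    rw [div_pow u _ 4, hr]
    field_simp
  have hpos : ∀ᶠ N : ℕ in atTop, 1 ≤ N := eventually_ge_atTop 1
  -- The majorant comes from `u ^ 4 / (1 + u ^ 2) ≥ u ^ 2 - 1`; it fails at `N = 0`, where the
  -- integrand is `1`, hence the filter version of dominated convergence.
  refine tendsto_integral_filter_of_dominated_convergence
    (fun u => exp (1 / 12) * exp (-(1 / 12) * u ^ 2)) ?_ ?_ ?_ ?_
  · refine Eventually.of_forall fun N => Continuous.aestronglyMeasurable ?_
    unfold hsDensity
    fun_prop
  · filter_upwards [hpos] with N hN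
    refine Eventually.of_forall fun u => ?_
    rw [hsDensity_pow, norm_of_nonneg (exp_pos _).le, ← exp_add]
    refine exp_le_exp.2 ?_
    have h1 := hlow N u hN
    have h2 : u ^ 4 / (12 * (1 + u ^ 2)) ≤
        u ^ 4 / (12 * (1 + (u / (N : ℝ) ^ ((1 : ℝ) / 4)) ^ 2)) := by
      have hr1 : (1 : ℝ) ≤ (N : ℝ) ^ ((1 : ℝ) / 4) :=
        one_le_rpow (by exact_mod_cast hN) (by norm_num)
      have h3 : (u / (N : ℝ) ^ ((1 : ℝ) / 4)) ^ 2 ≤ u ^ 2 := by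
        rw [div_pow]
        exact div_le_self (sq_nonneg u) (one_le_pow₀ hr1)
      gcongr
    have h4 : (u ^ 2 - 1) / 12 ≤ u ^ 4 / (12 * (1 + u ^ 2)) := by
      rw [div_le_div_iff₀ (by positivity) (by positivity)]
      nlinarith
    linarith
  · exact (integrable_exp_neg_mul_sq (by norm_num)).const_mul _
  · refine Eventually.of_forall fun u => ?_
    have hrtop : Tendsto (fun N : ℕ => (N : ℝ) ^ ((1 : ℝ) / 4)) atTop atTop :=
      (tendsto_rpow_atTop (by norm_num)).comp tendsto_natCast_atTop_atTop
    have ht : Tendsto (fun N : ℕ => u / (N : ℝ) ^ ((1 : ℝ) / 4)) atTop (nhds 0) :=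
      hrtop.const_div_atTop u
    have hcont : Continuous fun t : ℝ => exp (-(u ^ 4 / (12 * (1 + t ^ 2)))) := by
      have : ∀ t : ℝ, 12 * (1 + t ^ 2) ≠ 0 := fun t => by positivity
      fun_prop (disch := assumption)
    have hup := (hcont.tendsto 0).comp ht
    have e : exp (-(u ^ 4 / (12 * (1 + (0 : ℝ) ^ 2)))) = exp (-u ^ 4 / 12) := by
      norm_num [neg_div]
    rw [e] at hup
    refine tendsto_of_tendsto_of_tendsto_of_le_of_le' tendsto_const_nhds hup ?_ ?_
    · filter_upwards [hpos] with N hN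
      rw [hsDensity_pow, neg_div]
      exact exp_le_exp.2 (neg_le_neg (hhigh N u hN))
    · filter_upwards [hpos] with N hN
      rw [hsDensity_pow]
      exact exp_le_exp.2 (neg_le_neg (hlow N u hN))

/-- For the critical Curie–Weiss model (`β = 1`, `h = 0`), the partition
function satisfies `lim_N Z_N/(2^N N^{1/4}) = (2π)^{−1/2} ∫ exp(−u⁴/12) du
= 12^{1/4} Γ(1/4)/(2√(2π))`. Spins `±1` are encoded by `Bool` via `spin`. -/
theorem stmt_10
    (spin : Bool → ℝ) (hspin : ∀ b, spin b = if b then 1 else -1)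
    (Z : ℕ → ℝ)
    (hZ : ∀ N : ℕ, Z N = ∑ σ : Fin N → Bool,
      Real.exp (1 / (2 * N) * ∑ i, ∑ j, spin (σ i) * spin (σ j))) :
    Tendsto (fun N : ℕ => Z N / (2 ^ N * (N : ℝ) ^ ((1 : ℝ) / 4))) atTop
        (nhds ((Real.sqrt (2 * Real.pi))⁻¹ * ∫ u : ℝ, Real.exp (-u ^ 4 / 12))) ∧
      (Real.sqrt (2 * Real.pi))⁻¹ * (∫ u : ℝ, Real.exp (-u ^ 4 / 12)) =
        (12 : ℝ) ^ ((1 : ℝ) / 4) * Real.Gamma (1 / 4) / (2 * Real.sqrt (2 * Real.pi)) := by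
  have hr (N : ℕ) : ((N : ℝ) ^ ((1 : ℝ) / 4)) ^ 4 = N := by
    rw [← rpow_natCast, ← rpow_mul (by positivity)]
    norm_num
  constructor
  · refine (tendsto_integral_hsDensity.const_mul _).congr' ?_
    filter_upwards [eventually_ge_atTop 1] with N hN
    have hN' : (0 : ℝ) < N := by exact_mod_cast hN
    rw [hZ, partition_eq_integral spin hspin N (rpow_pos_of_pos hN' _) (hr N)]
  · rw [quartic_integral]
    field_simp
end

section
/- Fix an integer q ≥ 2 and a compact set K contained in the interior of Δ (i.e., every m ∈ K has all coordinates strictly positive). Then there exist C > 0 and N₀ ∈ ℕ such that for all N ≥ N₀ and all m ∈ K with N m_k ∈ ℕ for every k, the multinomial coefficient satisfies | (N! / ∏_{k=1}^q (N m_k)!) · √((2πN)^{q−1} ∏_{k=1}^q m_k) · exp(−N ent(m)) − 1 | ≤ C/N. -/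
open Filter Real

/-!
Stirling's formula with the two-sided error bound
`0 ≤ log n! - (n log n - n + (log n) / 2 + log (2π) / 2) ≤ 1 / (12 n)` for `n ≥ 1`
(`stirlingRem_nonneg`, `stirlingRem_le`) is applied to `N!` and to each `(N m_k)!`. All main terms
cancel, since `∑ m_k = 1`, so the logarithm of the normalised multinomial coefficient is exactly
the remainder at `N` minus the sum of the remainders at `N m_k` (`normalized_eq_exp`).
On `K` the continuous function `∑ 1 / m_k` is bounded by some `S`, hence this logarithm is at most
`(1 + S) / N` in absolute value, and `|exp x - 1| ≤ 2 |x|` for `|x| ≤ 1` concludes.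
-/

/-- The remainder in Stirling's approximation of `log n!`. -/
noncomputable def stirlingRem (n : ℕ) : ℝ :=
  Real.log n.factorial -
    (n * Real.log n - n + Real.log n / 2 + Real.log (2 * Real.pi) / 2)

lemma stirlingRem_nonneg {n : ℕ} (hn : n ≠ 0) : 0 ≤ stirlingRem n :=
  sub_nonneg.mpr (Stirling.le_log_factorial_stirling hn)

lemma stirlingRem_eq {n : ℕ} (hn : n ≠ 0) :
    stirlingRem n = Real.log (Stirling.stirlingSeq n) - Real.log (√Real.pi) := by
  have h : (n : ℝ) ≠ 0 := by exact_mod_cast hn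
  rw [stirlingRem, Stirling.log_stirlingSeq_formula, Real.log_sqrt Real.pi_pos.le,
    Real.log_mul two_ne_zero h, Real.log_mul two_ne_zero Real.pi_ne_zero,
    Real.log_div h (Real.exp_ne_zero 1), Real.log_exp]
  ring

/-- The sequence `log (stirlingSeq n) - 1 / (12 n)` increases to its limit `log √π`. -/
lemma stirlingRem_le {n : ℕ} (hn : n ≠ 0) : stirlingRem n ≤ 1 / (12 * n) := by
  obtain ⟨n, rfl⟩ := Nat.exists_eq_succ_of_ne_zero hn
  let f : ℕ → ℝ := fun k =>
    Real.log (Stirling.stirlingSeq (k + 1)) - 1 / 12 * (1 / ((k : ℝ) + 1))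
  have hmono : Monotone f := by
    refine monotone_nat_of_le_succ fun k => ?_
    have h := Stirling.log_stirlingSeq_sdiff_le (k + 1)
    have e : 1 / (12 * ((k + 1 : ℕ) : ℝ) * (((k + 1 : ℕ) : ℝ) + 1)) =
        1 / 12 * (1 / ((k : ℝ) + 1)) - 1 / 12 * (1 / (((k + 1 : ℕ) : ℝ) + 1)) := by
      push_cast
      field_simp
      ring
    rw [e] at h
    simp only [f]
    linarith
  have hlim : Tendsto f atTop (nhds (Real.log (√Real.pi) - 1 / 12 * 0)) := by
    refine Tendsto.sub ?_ (tendsto_one_div_add_atTop_nhds_zero_nat.const_mul _)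
    exact ((Stirling.tendsto_stirlingSeq_sqrt_pi.comp (tendsto_add_atTop_nat 1)).log
      (by positivity))
  have h := hmono.ge_of_tendsto hlim n
  rw [stirlingRem_eq hn]
  simp only [f] at h
  have e : 1 / (12 * ((n.succ : ℕ) : ℝ)) = 1 / 12 * (1 / ((n : ℝ) + 1)) := by
    push_cast
    field_simp
  rw [e]
  simp only [Nat.succ_eq_add_one]
  linarith

lemma normalized_eq_exp {q N : ℕ} (hq : 1 ≤ q) (hN : N ≠ 0) (m : Fin q → ℝ)
    (hm : ∀ k, 0 < m k) (hsum : ∑ k, m k = 1) (a : Fin q → ℕ)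
    (ha : ∀ k, (N : ℝ) * m k = a k) :
    ((N.factorial : ℝ) / ∏ k, ((a k).factorial : ℝ)) *
        Real.sqrt ((2 * Real.pi * N) ^ (q - 1) * ∏ k, m k) *
        Real.exp (-(N : ℝ) * (-∑ k, m k * Real.log (m k))) =
      Real.exp (stirlingRem N - ∑ k, stirlingRem (a k)) := by
  have hN' : (0 : ℝ) < N := by positivity
  have hP : 0 < ∏ k, m k := Finset.prod_pos fun k _ => hm k
  have hF : 0 < ∏ k, ((a k).factorial : ℝ) := Finset.prod_pos fun k _ => by positivity
  have hNf : (0 : ℝ) < N.factorial := by positivity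
  have hpi : 0 < 2 * Real.pi := by positivity
  have hS : 0 < (2 * Real.pi * N) ^ (q - 1) * ∏ k, m k := by positivity
  have hrem : ∀ k, stirlingRem (a k) = Real.log ((a k).factorial) -
      ((N * Real.log N - N) * m k + N * (m k * Real.log (m k)) + Real.log (m k) / 2
        + (Real.log N / 2 + Real.log (2 * Real.pi) / 2)) := by
    intro k
    rw [stirlingRem, ← ha k, Real.log_mul hN'.ne' (hm k).ne']
    ring
  have hlog : Real.log (((N.factorial : ℝ) / ∏ k, ((a k).factorial : ℝ)) *
        Real.sqrt ((2 * Real.pi * N) ^ (q - 1) * ∏ k, m k) *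
        Real.exp (-(N : ℝ) * (-∑ k, m k * Real.log (m k)))) =
      stirlingRem N - ∑ k, stirlingRem (a k) := by
    rw [Real.log_mul (by positivity) (by positivity), Real.log_exp,
      Real.log_mul (by positivity) (by positivity), Real.log_div hNf.ne' hF.ne',
      Real.log_sqrt hS.le, Real.log_mul (by positivity) hP.ne', Real.log_pow,
      Real.log_mul hpi.ne' hN'.ne', Real.log_prod (fun k _ => (hm k).ne'),
      Real.log_prod (fun k _ => by positivity)]
    simp only [hrem]
    rw [Finset.sum_sub_distrib, Finset.sum_add_distrib, Finset.sum_add_distrib,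
      Finset.sum_add_distrib, ← Finset.mul_sum, ← Finset.mul_sum, ← Finset.sum_div, hsum,
      Finset.sum_const, Finset.card_univ, Fintype.card_fin, nsmul_eq_mul, stirlingRem,
      Nat.cast_sub hq]
    push_cast
    ring
  rw [← hlog, Real.exp_log (by positivity)]

/-- Uniform Stirling approximation of the multinomial coefficient on a
compact subset `K` of the interior of the simplex `Δ`: there are `C > 0` and `N₀` such
that for all `N ≥ N₀` and all `m ∈ K` with all `N m_k ∈ ℕ`,
`|(N!/∏_k (N m_k)!) · √((2πN)^{q−1} ∏_k m_k) · exp(−N ent(m)) − 1| ≤ C/N`.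
The natural number `N m_k` is extracted as `⌊N m_k⌋₊` (exact under the hypothesis). -/
theorem stmt_11
    (q : ℕ) (hq : 2 ≤ q)
    (K : Set (Fin q → ℝ)) (hKcompact : IsCompact K)
    (hKΔ : ∀ m ∈ K, (∀ k, 0 ≤ m k) ∧ ∑ k, m k = 1)
    (hKint : ∀ m ∈ K, ∀ k, 0 < m k)
    (ent : (Fin q → ℝ) → ℝ)
    (hent : ∀ m, ent m = -∑ k, m k * Real.log (m k)) :
    ∃ C > (0 : ℝ), ∃ N₀ : ℕ, ∀ N ≥ N₀, ∀ m ∈ K,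
      (∀ k, ∃ a : ℕ, (N : ℝ) * m k = a) →
      |((N.factorial : ℝ) / ∏ k, ((Nat.floor ((N : ℝ) * m k)).factorial : ℝ)) *
          Real.sqrt ((2 * Real.pi * N) ^ (q - 1) * ∏ k, m k) *
          Real.exp (-(N : ℝ) * ent m) - 1| ≤ C / N := by
  have hcont : ContinuousOn (fun m : Fin q → ℝ => ∑ k, (m k)⁻¹) K :=
    continuousOn_finsetSum _ fun k _ =>
      (continuous_apply k).continuousOn.inv₀ fun m hm => (hKint m hm k).ne'
  obtain ⟨S, hS⟩ := hKcompact.bddAbove_image hcont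
  have hS' : ∀ m ∈ K, ∑ k, (m k)⁻¹ ≤ |S| := fun m hm =>
    (hS ⟨m, hm, rfl⟩).trans (le_abs_self S)
  have hB : 0 < 1 + |S| := by positivity
  refine ⟨2 * (1 + |S|), by positivity, ⌈1 + |S|⌉₊, fun N hN m hm hint => ?_⟩
  have hNB : 1 + |S| ≤ N := Nat.ceil_le.mp hN
  have hNpos : (0 : ℝ) < N := hB.trans_le hNB
  have hN0 : N ≠ 0 := by exact_mod_cast hNpos.ne'
  choose a ha using hint
  have hfloor : ∀ k, Nat.floor ((N : ℝ) * m k) = a k := fun k => by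
    rw [ha k, Nat.floor_natCast]
  have ha0 : ∀ k, a k ≠ 0 := fun k => by
    have h : (0 : ℝ) < a k := by rw [← ha k]; exact mul_pos hNpos (hKint m hm k)
    exact_mod_cast h.ne'
  simp only [hfloor]
  rw [hent, normalized_eq_exp (by omega) hN0 m (hKint m hm) (hKΔ m hm).2 a ha]
  have h1 : 0 ≤ stirlingRem N := stirlingRem_nonneg hN0
  have h2 : stirlingRem N ≤ 1 / N := (stirlingRem_le hN0).trans <|
    one_div_le_one_div_of_le hNpos (by linarith)
  have h3 : 0 ≤ ∑ k, stirlingRem (a k) :=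
    Finset.sum_nonneg fun k _ => stirlingRem_nonneg (ha0 k)
  have h4 : ∑ k, stirlingRem (a k) ≤ |S| / N := by
    calc ∑ k, stirlingRem (a k) ≤ ∑ k, (m k)⁻¹ / N := by
          refine Finset.sum_le_sum fun k _ => ?_
          have hp : 0 < (N : ℝ) * m k := mul_pos hNpos (hKint m hm k)
          calc stirlingRem (a k) ≤ 1 / (12 * (a k : ℝ)) := stirlingRem_le (ha0 k)
            _ ≤ 1 / (N * m k) := by
              rw [← ha k]
              exact one_div_le_one_div_of_le hp (by linarith)
            _ = (m k)⁻¹ / N := by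
              rw [one_div, mul_inv, mul_comm, div_eq_mul_inv]
      _ = (∑ k, (m k)⁻¹) / N := by rw [Finset.sum_div]
      _ ≤ |S| / N := by gcongr; exact hS' m hm
  have hL : |stirlingRem N - ∑ k, stirlingRem (a k)| ≤ (1 + |S|) / N := by
    rw [add_div]
    exact abs_le.mpr ⟨by linarith, by linarith⟩
  have hL1 : |stirlingRem N - ∑ k, stirlingRem (a k)| ≤ 1 :=
    hL.trans ((div_le_one hNpos).mpr hNB)
  calc _ ≤ 2 * |stirlingRem N - ∑ k, stirlingRem (a k)| := Real.abs_exp_sub_one_le hL1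
    _ ≤ 2 * ((1 + |S|) / N) := by gcongr
    _ = 2 * (1 + |S|) / N := by ring
end

section
/- Under assumptions (A) and (B), there exist a constant C₁ > 0 and N₀ ∈ ℕ such that for all N ≥ N₀ and all m ∈ Δ with Nm ∈ ℤ^q, the Gibbs probability of the magnetization value m satisfies μ_N(m_N = m) ≤ C₁ exp(N (G(m̂) − sup_{m̂' ∈ Δ̂} G(m̂'))). -/
open Filter Real MeasureTheory

/-!
The upper bound rests on two comparisons with product measures, so no Stirling estimate is needed.

*Numerator.* If `m` is a probability vector, every configuration `σ` of type `m` has probability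
`∏ i, m (σ i) = exp (-N ent m)` under the product measure `m^{⊗N}`. Hence there are at most
`exp (N ent m)` such configurations (`card_type_le`), and the unnormalised weight of `{m_N = m}` is
at most `exp (N G(m̂))`.

*Denominator.* Let `w` be the probability vector of a maximizer `M` of `G`; its entries are
positive as `M` is interior. Writing `Z_N` as an expectation under `w^{⊗N}` and applying Jensen's
inequality,
`Z_N ≥ exp (N E[F(m_N) - ∑ k, m_N(k) log w(k)])`. By Gibbs' inequality the integrand is at least
`G(m̂_N)` (`gibbs_ineq`), and since `G` is `C²` near `M` and bounded below on the compact set `Δ̂`,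
`G(x) ≥ G(M) - K ∑ k, (x k - M k)²` on all of `Δ̂` (`quadratic_lower_global`). The variance of each
coordinate of `m_N` under `w^{⊗N}` is at most `1 / N` (`second_moment`), which gives
`Z_N ≥ exp (N sup G - K d)`.

Dividing yields the claim with `C₁ = exp (K d)` and `N₀ = 1`.
-/

/-! ### Moments under a product measure -/

lemma sum_cons {q N : ℕ} (g : (Fin (N + 1) → Fin q) → ℝ) :
    ∑ σ, g σ = ∑ a, ∑ τ : Fin N → Fin q, g (Fin.cons a τ) := by
  rw [← Fintype.sum_prod_type']
  exact (Fintype.sum_equiv (Fin.consEquiv (fun _ : Fin (N + 1) => Fin q)) _ _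
    (fun x => rfl)).symm

lemma total_mass {q : ℕ} (w : Fin q → ℝ) (hw : ∑ k, w k = 1) (N : ℕ) :
    ∑ σ : Fin N → Fin q, ∏ i, w (σ i) = 1 := by
  have h := Finset.prod_univ_sum (fun _ : Fin N => (Finset.univ : Finset (Fin q)))
    (fun _ k => w k)
  simp only [hw, Finset.prod_const_one, Fintype.piFinset_univ] at h
  exact h.symm

lemma first_moment {q : ℕ} (w f : Fin q → ℝ) (hw : ∑ k, w k = 1) (hf : ∑ k, w k * f k = 0)
    (N : ℕ) : ∑ σ : Fin N → Fin q, (∏ i, w (σ i)) * ∑ i, f (σ i) = 0 := by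
  induction N with
  | zero => simp
  | succ N ih =>
    rw [sum_cons]
    have : ∀ a : Fin q, ∀ τ : Fin N → Fin q,
        (∏ i, w ((Fin.cons a τ : Fin (N + 1) → Fin q) i)) *
          ∑ i, f ((Fin.cons a τ : Fin (N + 1) → Fin q) i)
        = (w a * f a) * (∏ i, w (τ i)) + w a * ((∏ i, w (τ i)) * ∑ i, f (τ i)) := by
      intro a τ
      rw [Fin.prod_univ_succ, Fin.sum_univ_succ]
      simp only [Fin.cons_zero, Fin.cons_succ]
      ring
    simp only [this, Finset.sum_add_distrib, ← Finset.mul_sum, ih, total_mass w hw]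
    simp [hf]

/-- The variance of a sum of `N` i.i.d. centred variables is `N` times the common variance. -/
lemma second_moment {q : ℕ} (w f : Fin q → ℝ) (hw : ∑ k, w k = 1) (hf : ∑ k, w k * f k = 0)
    (N : ℕ) : ∑ σ : Fin N → Fin q, (∏ i, w (σ i)) * (∑ i, f (σ i)) ^ 2
      = N * ∑ k, w k * f k ^ 2 := by
  induction N with
  | zero => simp
  | succ N ih =>
    rw [sum_cons]
    have : ∀ a : Fin q, ∀ τ : Fin N → Fin q,
        (∏ i, w ((Fin.cons a τ : Fin (N + 1) → Fin q) i)) *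
          (∑ i, f ((Fin.cons a τ : Fin (N + 1) → Fin q) i)) ^ 2
        = (w a * f a ^ 2) * (∏ i, w (τ i))
          + (2 * (w a * f a)) * ((∏ i, w (τ i)) * ∑ i, f (τ i))
          + w a * ((∏ i, w (τ i)) * (∑ i, f (τ i)) ^ 2) := by
      intro a τ
      rw [Fin.prod_univ_succ, Fin.sum_univ_succ]
      simp only [Fin.cons_zero, Fin.cons_succ]
      ring
    simp only [this, Finset.sum_add_distrib, ← Finset.mul_sum, ih, total_mass w hw,
      first_moment w f hw hf, ← Finset.sum_mul, hw]
    push_cast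
    ring

/-! ### Configurations and their types -/

/-- The empirical magnetization of a configuration. -/
noncomputable def mag {q N : ℕ} (σ : Fin N → Fin q) : Fin q → ℝ :=
  fun k => ((Finset.univ.filter fun i => σ i = k).card : ℝ) / N

lemma sum_config {q N : ℕ} (σ : Fin N → Fin q) (g : Fin q → ℝ) :
    ∑ i, g (σ i) = ∑ k, ((Finset.univ.filter fun i => σ i = k).card : ℝ) * g k := by
  rw [← Finset.sum_fiberwise Finset.univ σ]
  refine Finset.sum_congr rfl fun k _ => ?_
  rw [Finset.sum_congr rfl (g := fun _ => g k)]
  · simp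
  · intro i hi
    rw [(Finset.mem_filter.1 hi).2]

lemma sum_config_mag {q N : ℕ} (hN : 1 ≤ N) (σ : Fin N → Fin q) (g : Fin q → ℝ) :
    ∑ i, g (σ i) = N * ∑ k, mag σ k * g k := by
  have hN' : (N : ℝ) ≠ 0 := by positivity
  rw [sum_config, Finset.mul_sum]
  refine Finset.sum_congr rfl fun k _ => ?_
  simp only [mag]
  field_simp

lemma mag_nonneg {q N : ℕ} (σ : Fin N → Fin q) (k : Fin q) : 0 ≤ mag σ k := by
  unfold mag; positivity

lemma mag_sum {q N : ℕ} (hN : 1 ≤ N) (σ : Fin N → Fin q) : ∑ k, mag σ k = 1 := by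
  have hN' : (N : ℝ) ≠ 0 := by positivity
  have h := sum_config_mag hN σ (fun _ => 1)
  simp only [Finset.sum_const, Finset.card_univ, Fintype.card_fin, nsmul_eq_mul, mul_one] at h
  exact mul_left_cancel₀ hN' (by rw [mul_one]; exact h.symm)

/-- Under `w^{⊗N}`, `N` times the variance of the `k`-th coordinate of the magnetization is
at most `1`. -/
lemma mag_variance {q : ℕ} (w : Fin q → ℝ) (hw0 : ∀ k, 0 ≤ w k) (hw : ∑ k, w k = 1)
    {N : ℕ} (hN : 1 ≤ N) (k : Fin q) :
    N * ∑ σ : Fin N → Fin q, (∏ i, w (σ i)) * (mag σ k - w k) ^ 2 ≤ 1 := by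
  have hN' : (0 : ℝ) < N := by positivity
  set f : Fin q → ℝ := fun a => (if a = k then 1 else 0) - w k with hfdef
  have hf : ∑ a, w a * f a = 0 := by
    simp [hfdef, mul_sub, Finset.sum_sub_distrib, ← Finset.sum_mul, hw]
  have hS : ∀ σ : Fin N → Fin q, ∑ i, f (σ i) = N * (mag σ k - w k) := by
    intro σ
    rw [sum_config_mag hN]
    congr 1
    simp [hfdef, mul_sub, Finset.sum_sub_distrib, ← Finset.sum_mul, mag_sum hN]
  have h2 := second_moment w f hw hf N
  simp only [hS] at h2
  have h3 : ∑ σ : Fin N → Fin q, (∏ i, w (σ i)) * (N * (mag σ k - w k)) ^ 2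
      = N * (N * ∑ σ : Fin N → Fin q, (∏ i, w (σ i)) * (mag σ k - w k) ^ 2) := by
    simp only [Finset.mul_sum]
    refine Finset.sum_congr rfl fun σ _ => ?_
    ring
  rw [h3] at h2
  rw [mul_left_cancel₀ hN'.ne' h2]
  have hwk : w k ≤ 1 := by
    rw [← hw]; exact Finset.single_le_sum (fun i _ => hw0 i) (Finset.mem_univ k)
  calc ∑ a, w a * f a ^ 2 ≤ ∑ a, w a := by
        refine Finset.sum_le_sum fun a _ => ?_
        have : f a ^ 2 ≤ 1 := by
          have := hw0 k
          simp only [hfdef]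
          split_ifs <;> nlinarith
        nlinarith [hw0 a]
    _ = 1 := hw

/-- At most `exp (N ent m)` configurations have magnetization `m`: each of them has probability
`exp (-N ent m)` under `m^{⊗N}`. -/
lemma card_type_le {q N : ℕ} (hN : 1 ≤ N) (m : Fin q → ℝ) (hm0 : ∀ k, 0 ≤ m k)
    (hm1 : ∑ k, m k = 1) :
    ((Finset.univ.filter fun σ : Fin N → Fin q => mag σ = m).card : ℝ)
      ≤ Real.exp (N * -∑ k, m k * Real.log (m k)) := by
  have hN' : (0 : ℝ) < N := by positivity
  have hprob : ∀ σ : Fin N → Fin q, mag σ = m →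
      ∏ i, m (σ i) = Real.exp (N * ∑ k, m k * Real.log (m k)) := by
    intro σ hσ
    have hpos : ∀ i, 0 < m (σ i) := by
      intro i
      rw [← hσ]
      unfold mag
      have : 0 < (Finset.univ.filter fun j => σ j = σ i).card :=
        Finset.card_pos.2 ⟨i, by simp⟩
      positivity
    have h := sum_config_mag hN σ (fun k => Real.log (m k))
    rw [hσ] at h
    rw [← h, Real.exp_sum]
    exact Finset.prod_congr rfl fun i _ => (Real.exp_log (hpos i)).symm
  have hle : ∑ σ ∈ Finset.univ.filter (fun σ : Fin N → Fin q => mag σ = m), ∏ i, m (σ i) ≤ 1 := by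
    rw [← total_mass m hm1 N]
    exact Finset.sum_le_sum_of_subset_of_nonneg (Finset.filter_subset _ _)
      (fun σ _ _ => Finset.prod_nonneg fun i _ => hm0 _)
  rw [Finset.sum_congr rfl (fun σ hσ => hprob σ (Finset.mem_filter.1 hσ).2), Finset.sum_const,
    nsmul_eq_mul] at hle
  rw [mul_neg, Real.exp_neg]
  rwa [← one_div, le_div_iff₀ (Real.exp_pos _)]

/-- Nonnegativity of relative entropy. -/
lemma gibbs_ineq {q : ℕ} (m w : Fin q → ℝ) (hm0 : ∀ k, 0 ≤ m k) (hm1 : ∑ k, m k = 1)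
    (hw0 : ∀ k, 0 < w k) (hw1 : ∑ k, w k = 1) :
    ∑ k, m k * Real.log (w k) ≤ ∑ k, m k * Real.log (m k) := by
  have key : ∀ k, m k * Real.log (w k) ≤ m k * Real.log (m k) + (w k - m k) := by
    intro k
    rcases (hm0 k).eq_or_lt with h | h
    · rw [← h]; simpa using (hw0 k).le
    · have h1 := Real.log_le_sub_one_of_pos (div_pos (hw0 k) h)
      rw [Real.log_div (hw0 k).ne' h.ne'] at h1
      have h2 := mul_le_mul_of_nonneg_left h1 h.le
      have h3 : m k * (w k / m k - 1) = w k - m k := by field_simp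
      nlinarith
  calc ∑ k, m k * Real.log (w k) ≤ ∑ k, (m k * Real.log (m k) + (w k - m k)) :=
        Finset.sum_le_sum fun k _ => key k
    _ = ∑ k, m k * Real.log (m k) := by
        rw [Finset.sum_add_distrib, Finset.sum_sub_distrib, hw1, hm1]; ring

/-- Jensen's inequality under `w^{⊗N}`, after a change of measure from counting measure. -/
lemma jensen_partition {q N : ℕ} (w : Fin q → ℝ) (hw0 : ∀ k, 0 < w k) (hw1 : ∑ k, w k = 1)
    (X : (Fin N → Fin q) → ℝ) :
    Real.exp (∑ σ, (∏ i, w (σ i)) * (X σ - ∑ i, Real.log (w (σ i)))) ≤ ∑ σ, Real.exp (X σ) := by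
  have h := convexOn_exp.map_sum_le (t := Finset.univ)
    (w := fun σ : Fin N → Fin q => ∏ i, w (σ i))
    (p := fun σ => X σ - ∑ i, Real.log (w (σ i)))
    (fun σ _ => Finset.prod_nonneg fun i _ => (hw0 _).le) (total_mass w hw1 N)
    (fun σ _ => Set.mem_univ _)
  simp only [smul_eq_mul] at h
  refine h.trans (le_of_eq (Finset.sum_congr rfl fun σ _ => ?_))
  rw [Real.exp_sub, Real.exp_sum]
  have : ∏ i, Real.exp (Real.log (w (σ i))) = ∏ i, w (σ i) :=
    Finset.prod_congr rfl fun i _ => Real.exp_log (hw0 _)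
  rw [this]
  have : ∏ i, w (σ i) ≠ 0 := Finset.prod_ne_zero_iff.2 fun i _ => (hw0 _).ne'
  field_simp

/-! ### Quadratic lower bounds at a maximizer -/

lemma quadratic_lower_local {E : Type*} [NormedAddCommGroup E] [NormedSpace ℝ E] (G : E → ℝ)
    (x₀ : E) (hG : ContDiffAt ℝ 2 G x₀) (hmax : IsLocalMax G x₀) :
    ∃ K ≥ (0 : ℝ), ∃ r > (0 : ℝ), ∀ x, ‖x - x₀‖ < r → G x₀ - K * ‖x - x₀‖ ^ 2 ≤ G x := by
  have h1 : ContDiffAt ℝ 1 (fderiv ℝ G) x₀ := hG.fderiv_right (by norm_num)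
  have h2 : DifferentiableAt ℝ (fderiv ℝ G) x₀ := h1.differentiableAt (by norm_num)
  obtain ⟨K, hKpos, hK⟩ := h2.isBigO_sub.exists_pos
  have h3 : ∀ᶠ x in nhds x₀, DifferentiableAt ℝ G x := by
    filter_upwards [hG.eventually (by simp)] with x hx
    exact hx.differentiableAt (by norm_num)
  obtain ⟨r, hr, hball⟩ := Metric.eventually_nhds_iff.1 (hK.bound.and h3)
  refine ⟨K, hKpos.le, r, hr, fun x hx => ?_⟩
  have hmem : ∀ y ∈ Metric.closedBall x₀ ‖x - x₀‖, dist y x₀ < r := fun y hy =>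
    lt_of_le_of_lt (Metric.mem_closedBall.1 hy) hx
  have hb := (convex_closedBall x₀ ‖x - x₀‖).norm_image_sub_le_of_norm_fderiv_le
    (f := G) (𝕜 := ℝ) (C := K * ‖x - x₀‖) (x := x₀) (y := x)
    (fun y hy => (hball (hmem y hy)).2)
    (fun y hy => by
      have := (hball (hmem y hy)).1
      rw [hmax.fderiv_eq_zero, sub_zero] at this
      refine this.trans (mul_le_mul_of_nonneg_left ?_ hKpos.le)
      rw [← dist_eq_norm]; exact Metric.mem_closedBall.1 hy)
    (Metric.mem_closedBall_self (norm_nonneg _))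
    (by rw [Metric.mem_closedBall, dist_eq_norm])
  have := (abs_le.1 (by simpa [Real.norm_eq_abs] using hb)).1
  nlinarith

/-- On a compact set, boundedness below takes over away from the maximizer. -/
lemma quadratic_lower_global {d : ℕ} (G : (Fin d → ℝ) → ℝ) (S : Set (Fin d → ℝ))
    (hS : IsCompact S) (hc : ContinuousOn G S) (x₀ : Fin d → ℝ)
    (hG : ContDiffAt ℝ 2 G x₀) (hmax : IsLocalMax G x₀) :
    ∃ K ≥ (0 : ℝ), ∀ x ∈ S, G x₀ - K * ∑ k, (x k - x₀ k) ^ 2 ≤ G x := by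
  obtain ⟨K, hK, r, hr, hloc⟩ := quadratic_lower_local G x₀ hG hmax
  obtain ⟨B, hB⟩ := (hS.image_of_continuousOn hc).bddBelow
  have hnorm : ∀ x : Fin d → ℝ, ‖x - x₀‖ ^ 2 ≤ ∑ k, (x k - x₀ k) ^ 2 := by
    intro x
    have hs : 0 ≤ ∑ k, (x k - x₀ k) ^ 2 := Finset.sum_nonneg fun k _ => sq_nonneg _
    have : ‖x - x₀‖ ≤ √(∑ k, (x k - x₀ k) ^ 2) := by
      refine (pi_norm_le_iff_of_nonneg (Real.sqrt_nonneg _)).2 fun k => ?_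
      rw [Real.norm_eq_abs, ← Real.sqrt_sq_eq_abs]
      exact Real.sqrt_le_sqrt (Finset.single_le_sum (f := fun k => (x k - x₀ k) ^ 2)
        (fun k _ => sq_nonneg _) (Finset.mem_univ k))
    calc ‖x - x₀‖ ^ 2 ≤ √(∑ k, (x k - x₀ k) ^ 2) ^ 2 :=
          pow_le_pow_left₀ (norm_nonneg _) this 2
      _ = _ := Real.sq_sqrt hs
  refine ⟨K + |G x₀ - B| / r ^ 2, by positivity, fun x hx => ?_⟩
  have hD : 0 ≤ |G x₀ - B| / r ^ 2 := by positivity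
  have hn := hnorm x
  have hn0 : 0 ≤ ‖x - x₀‖ ^ 2 := by positivity
  by_cases hxr : ‖x - x₀‖ < r
  · have := hloc x hxr
    nlinarith [mul_le_mul_of_nonneg_left hn hK, mul_nonneg hD (hn0.trans hn)]
  · have hBx : B ≤ G x := hB ⟨x, hx, rfl⟩
    have h1 : r ^ 2 ≤ ∑ k, (x k - x₀ k) ^ 2 :=
      (pow_le_pow_left₀ hr.le (not_lt.1 hxr) 2).trans hn
    have h2 : |G x₀ - B| ≤ |G x₀ - B| / r ^ 2 * ∑ k, (x k - x₀ k) ^ 2 := by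
      calc |G x₀ - B| = |G x₀ - B| / r ^ 2 * r ^ 2 := by field_simp
        _ ≤ _ := mul_le_mul_of_nonneg_left h1 hD
    have h3 := le_abs_self (G x₀ - B)
    nlinarith [mul_nonneg hK (hn0.trans hn)]

/-! ### The simplex in reduced coordinates -/

/-- The embedding `m̂ ↦ m` of reduced coordinates, with last coordinate `1 - ∑ k, m̂ k`. -/
noncomputable def lift {d : ℕ} (x : Fin d → ℝ) : Fin (d + 1) → ℝ :=
  Fin.snoc x (1 - ∑ k, x k)

lemma lift_castSucc {d : ℕ} (x : Fin d → ℝ) (k : Fin d) : lift x k.castSucc = x k := by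
  simp [lift]

lemma lift_last {d : ℕ} (x : Fin d → ℝ) : lift x (Fin.last d) = 1 - ∑ k, x k := by
  simp [lift]

lemma lift_sum {d : ℕ} (x : Fin d → ℝ) : ∑ k, lift x k = 1 := by
  rw [Fin.sum_univ_castSucc]
  simp [lift_castSucc, lift_last]

lemma lift_proj {d : ℕ} (m : Fin (d + 1) → ℝ) (hm : ∑ k, m k = 1) :
    lift (fun k : Fin d => m k.castSucc) = m := by
  rw [Fin.sum_univ_castSucc] at hm
  funext k
  refine Fin.lastCases ?_ (fun k => ?_) k
  · rw [lift_last]; linarith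
  · rw [lift_castSucc]

lemma lift_contDiff {d : ℕ} : ContDiff ℝ 2 (lift : (Fin d → ℝ) → Fin (d + 1) → ℝ) := by
  rw [contDiff_pi]
  intro k
  refine Fin.lastCases ?_ (fun k => ?_) k
  · simp only [lift_last]; fun_prop
  · simp only [lift_castSucc]; fun_prop

/-- The solid simplex `Δ̂`. -/
def solid (d : ℕ) : Set (Fin d → ℝ) := {x | (∀ k, 0 ≤ x k) ∧ ∑ k, x k ≤ 1}

lemma lift_nonneg {d : ℕ} {x : Fin d → ℝ} (hx : x ∈ solid d) (k : Fin (d + 1)) :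
    0 ≤ lift x k := by
  refine Fin.lastCases ?_ (fun k => ?_) k
  · rw [lift_last]; linarith [hx.2]
  · rw [lift_castSucc]; exact hx.1 k

lemma proj_mem {d : ℕ} (m : Fin (d + 1) → ℝ) (hm0 : ∀ k, 0 ≤ m k) (hm : ∑ k, m k = 1) :
    (fun k : Fin d => m k.castSucc) ∈ solid d := by
  rw [Fin.sum_univ_castSucc] at hm
  exact ⟨fun k => hm0 _, by linarith [hm0 (Fin.last d)]⟩

lemma solid_compact (d : ℕ) : IsCompact (solid d) := by
  refine (isCompact_Icc (a := (0 : Fin d → ℝ)) (b := 1)).of_isClosed_subset ?_ ?_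
  · have : solid d = (⋂ k, {x | 0 ≤ x k}) ∩ {x | ∑ k, x k ≤ 1} := by
      ext x; simp [solid]
    rw [this]
    exact (isClosed_iInter fun k => isClosed_le continuous_const (continuous_apply k)).inter
      (isClosed_le (by fun_prop) continuous_const)
  · intro x hx
    exact ⟨fun k => hx.1 k, fun k =>
      (Finset.single_le_sum (fun i _ => hx.1 i) (Finset.mem_univ k)).trans hx.2⟩

/-- Interior points of `Δ̂` have positive coordinates: moving slightly along the coordinate
directions, forwards and backwards, stays inside `Δ̂`. -/
lemma lift_pos {d : ℕ} (hd : 1 ≤ d) {x : Fin d → ℝ} (hx : x ∈ interior (solid d))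
    (k : Fin (d + 1)) : 0 < lift x k := by
  have hmove : ∀ l : Fin d, ∃ ε > (0 : ℝ), ∀ t : ℝ, |t| < ε → x + t • Pi.single l 1 ∈ solid d := by
    intro l
    have hcont : Continuous fun t : ℝ => x + t • (Pi.single l 1 : Fin d → ℝ) := by fun_prop
    have := hcont.continuousAt.preimage_mem_nhds (x := 0)
      (by simpa using mem_interior_iff_mem_nhds.1 hx)
    obtain ⟨ε, hε, h⟩ := Metric.mem_nhds_iff.1 this
    exact ⟨ε, hε, fun t ht => h (by simpa using ht)⟩
  refine Fin.lastCases ?_ (fun l => ?_) k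
  · obtain ⟨ε, hε, h⟩ := hmove ⟨0, hd⟩
    have h1 := (h (ε / 2) (by rw [abs_of_pos (by positivity)]; linarith)).2
    simp [Finset.sum_add_distrib, ← Finset.mul_sum] at h1
    rw [lift_last]
    linarith
  · obtain ⟨ε, hε, h⟩ := hmove l
    have h1 := (h (-(ε / 2)) (by rw [abs_neg, abs_of_pos (by positivity)]; linarith)).1 l
    simp at h1
    rw [lift_castSucc]
    linarith

/-- The partition function satisfies `Z_N ≥ exp (N G(M) - c)` at an interior maximizer `M`. -/
lemma partition_lower {d : ℕ} (hd : 1 ≤ d) (F : (Fin (d + 1) → ℝ) → ℝ)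
    (hF : ContDiffOn ℝ 2 F {m : Fin (d + 1) → ℝ | (∀ k, 0 ≤ m k) ∧ ∑ k, m k = 1})
    (G : (Fin d → ℝ) → ℝ)
    (hG : ∀ x, G x = F (lift x) + -∑ k, lift x k * Real.log (lift x k))
    (x₀ : Fin d → ℝ) (hx₀ : x₀ ∈ interior (solid d)) (hmax : ∀ x ∈ solid d, G x ≤ G x₀) :
    ∃ c : ℝ, ∀ N : ℕ, 1 ≤ N →
      Real.exp (N * G x₀ - c) ≤ ∑ σ : Fin N → Fin (d + 1), Real.exp (N * F (mag σ)) := by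
  have hw0 := lift_pos hd hx₀
  have hw1 := lift_sum x₀
  have hnhds : solid d ∈ nhds x₀ := mem_interior_iff_mem_nhds.1 hx₀
  have hFl : ContDiffOn ℝ 2 (fun x => F (lift x)) (solid d) :=
    hF.comp lift_contDiff.contDiffOn fun x hx => ⟨lift_nonneg hx, lift_sum x⟩
  have hGeq : G = fun x => F (lift x) + -∑ k, lift x k * Real.log (lift x k) := funext hG
  have hcoord : ∀ k, ContDiff ℝ 2 fun x : Fin d → ℝ => lift x k := fun k =>
    (contDiff_pi.1 lift_contDiff) k
  have hGc : ContinuousOn G (solid d) := by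
    rw [hGeq]
    refine hFl.continuousOn.add (Continuous.continuousOn ?_)
    exact (continuous_finsetSum _ fun k _ =>
      Real.continuous_mul_log.comp (hcoord k).continuous).neg
  have hGd : ContDiffAt ℝ 2 G x₀ := by
    rw [hGeq]
    refine (hFl.contDiffAt hnhds).add (ContDiffAt.neg (ContDiffAt.sum fun k _ => ?_))
    exact (hcoord k).contDiffAt.mul ((hcoord k).contDiffAt.log (hw0 k).ne')
  have hloc : IsLocalMax G x₀ := by
    filter_upwards [hnhds] with x hx using hmax x hx
  obtain ⟨K, hK, hquad⟩ := quadratic_lower_global G _ (solid_compact d) hGc x₀ hGd hloc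
  refine ⟨K * d, fun N hN => ?_⟩
  refine le_trans (Real.exp_le_exp.2 ?_) (jensen_partition (lift x₀) hw0 hw1 _)
  have hpt : ∀ σ : Fin N → Fin (d + 1),
      N * G x₀ - K * (N * ∑ k : Fin d, (mag σ k.castSucc - lift x₀ k.castSucc) ^ 2)
        ≤ N * F (mag σ) - ∑ i, Real.log (lift x₀ (σ i)) := by
    intro σ
    rw [sum_config_mag hN σ (fun k => Real.log (lift x₀ k))]
    have hg := gibbs_ineq (mag σ) (lift x₀) (mag_nonneg σ) (mag_sum hN σ) hw0 hw1
    have hq := hquad _ (proj_mem (mag σ) (mag_nonneg σ) (mag_sum hN σ))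
    rw [hG (fun k => mag σ k.castSucc), lift_proj _ (mag_sum hN σ)] at hq
    simp only [lift_castSucc]
    have : G x₀ - K * ∑ k : Fin d, (mag σ k.castSucc - x₀ k) ^ 2
        ≤ F (mag σ) - ∑ k, mag σ k * Real.log (lift x₀ k) := by linarith
    have := mul_le_mul_of_nonneg_left this (Nat.cast_nonneg (α := ℝ) N)
    linarith
  have hvar : ∑ σ : Fin N → Fin (d + 1), (∏ i, lift x₀ (σ i)) *
      (N * ∑ k : Fin d, (mag σ k.castSucc - lift x₀ k.castSucc) ^ 2) ≤ d := by
    calc _ = ∑ k : Fin d, N * ∑ σ : Fin N → Fin (d + 1), (∏ i, lift x₀ (σ i)) *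
          (mag σ k.castSucc - lift x₀ k.castSucc) ^ 2 := by
          simp only [Finset.mul_sum]
          rw [Finset.sum_comm]
          refine Finset.sum_congr rfl fun k _ => Finset.sum_congr rfl fun σ _ => ?_
          ring
      _ ≤ ∑ k : Fin d, (1 : ℝ) := Finset.sum_le_sum fun k _ =>
          mag_variance (lift x₀) (fun k => (hw0 k).le) hw1 hN k.castSucc
      _ = d := by simp
  calc N * G x₀ - K * d ≤ N * G x₀ - K * ∑ σ : Fin N → Fin (d + 1), (∏ i, lift x₀ (σ i)) *
      (N * ∑ k : Fin d, (mag σ k.castSucc - lift x₀ k.castSucc) ^ 2) := by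
        linarith [mul_le_mul_of_nonneg_left hvar hK]
    _ = ∑ σ : Fin N → Fin (d + 1), (∏ i, lift x₀ (σ i)) *
      (N * G x₀ - K * (N * ∑ k : Fin d, (mag σ k.castSucc - lift x₀ k.castSucc) ^ 2)) := by
        simp only [mul_sub, Finset.sum_sub_distrib, ← Finset.sum_mul, total_mass _ hw1, one_mul]
        congr 1
        rw [Finset.mul_sum]
        refine Finset.sum_congr rfl fun σ _ => ?_
        ring
    _ ≤ _ := Finset.sum_le_sum fun σ _ => mul_le_mul_of_nonneg_left (hpt σ)
        (Finset.prod_nonneg fun i _ => (hw0 _).le)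

/-- Under assumptions (A) and (B), there are `C₁ > 0` and `N₀` such that
for all `N ≥ N₀` and all `m ∈ Δ` with `Nm ∈ ℤ^q`, the Gibbs probability of the
magnetization value `m` satisfies
`μ_N(m_N = m) ≤ C₁ exp(N(G(m̂) − sup_{Δ̂} G))`. Here `q = d + 1`, `d ≥ 1`. -/
theorem stmt_16
    (d p : ℕ) (hd : 1 ≤ d) (hp : 1 ≤ p)
    (F : (Fin (d + 1) → ℝ) → ℝ)
    (hF : ContDiffOn ℝ 2 F {m : Fin (d + 1) → ℝ | (∀ k, 0 ≤ m k) ∧ ∑ k, m k = 1})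
    (ent : (Fin (d + 1) → ℝ) → ℝ)
    (hent : ∀ m, ent m = -∑ k, m k * Real.log (m k))
    (G : (Fin d → ℝ) → ℝ)
    (hG : ∀ x : Fin d → ℝ,
      G x = F (Fin.snoc x (1 - ∑ k, x k)) + ent (Fin.snoc x (1 - ∑ k, x k)))
    (Δhat : Set (Fin d → ℝ))
    (hΔhat : Δhat = {x : Fin d → ℝ | (∀ k, 0 ≤ x k) ∧ ∑ k, x k ≤ 1})
    -- (A): the global maximizers of `G` on `Δ̂` are exactly the `p` distinct points
    -- `M 1, …, M p`, all lying in the interior of `Δ̂`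
    (M : Fin p → Fin d → ℝ)
    (hMinj : Function.Injective M)
    (hMint : ∀ j, M j ∈ interior Δhat)
    (hMmax : ∀ j, ∀ x ∈ Δhat, G x ≤ G (M j))
    (hMonly : ∀ x ∈ Δhat, (∀ y ∈ Δhat, G y ≤ G x) → ∃ j, x = M j)
    -- (B): `H_j = -Hess G (M_j)` is positive definite
    (H : Fin p → Matrix (Fin d) (Fin d) ℝ)
    (hH : ∀ j k l, H j k l =
      -(fderiv ℝ (fun x => fderiv ℝ G x (Pi.single l 1)) (M j)) (Pi.single k 1))
    (hHpd : ∀ j, (H j).PosDef)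
    (Z : ℕ → ℝ)
    (hZ : ∀ N : ℕ, Z N = ∑ σ : Fin N → Fin (d + 1),
      Real.exp ((N : ℝ) * F (fun k => ((Finset.univ.filter fun i => σ i = k).card : ℝ) / N)))
    (μ : ∀ N : ℕ, (Fin N → Fin (d + 1)) → ℝ)
    (hμ : ∀ N σ, μ N σ =
      Real.exp ((N : ℝ) * F (fun k => ((Finset.univ.filter fun i => σ i = k).card : ℝ) / N)) / Z N)
    (μtilde : ∀ N : ℕ, (Fin (d + 1) → ℝ) → ℝ)
    (hμtilde : ∀ N m, μtilde N m = ∑ σ : Fin N → Fin (d + 1),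
      if (∀ k, ((Finset.univ.filter fun i => σ i = k).card : ℝ) / N = m k) then μ N σ else 0) :
    ∃ C₁ > (0 : ℝ), ∃ N₀ : ℕ, ∀ N ≥ N₀, ∀ m : Fin (d + 1) → ℝ,
      ((∀ k, 0 ≤ m k) ∧ ∑ k, m k = 1) →
      (∀ k, ∃ z : ℤ, (N : ℝ) * m k = z) →
      μtilde N m ≤ C₁ * Real.exp ((N : ℝ) *
        (G (fun k : Fin d => m (Fin.castSucc k)) - sSup (G '' Δhat))) := by
  change Δhat = solid d at hΔhat
  subst hΔhat
  have hG' : ∀ x, G x = F (lift x) + -∑ k, lift x k * Real.log (lift x k) := by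
    intro x
    rw [hG, hent]
    rfl
  set j₀ : Fin p := ⟨0, hp⟩
  have hsup : sSup (G '' solid d) = G (M j₀) := by
    refine IsGreatest.csSup_eq ⟨⟨M j₀, interior_subset (hMint j₀), rfl⟩, ?_⟩
    rintro _ ⟨x, hx, rfl⟩
    exact hMmax j₀ x hx
  obtain ⟨c, hc⟩ := partition_lower hd F hF G hG' (M j₀) (hMint j₀) (hMmax j₀)
  refine ⟨Real.exp c, Real.exp_pos c, 1, fun N hN m hm _ => ?_⟩
  have hZlow : Real.exp (N * G (M j₀) - c) ≤ Z N := by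
    rw [hZ]
    exact hc N hN
  have hZpos : 0 < Z N := (Real.exp_pos _).trans_le hZlow
  have hval : μtilde N m = ((Finset.univ.filter fun σ : Fin N → Fin (d + 1) => mag σ = m).card : ℝ)
      * (Real.exp (N * F m) / Z N) := by
    rw [hμtilde, ← Finset.sum_filter]
    have hset : (Finset.univ.filter fun σ : Fin N → Fin (d + 1) =>
        ∀ k, ((Finset.univ.filter fun i => σ i = k).card : ℝ) / N = m k)
        = Finset.univ.filter fun σ : Fin N → Fin (d + 1) => mag σ = m := by
      ext σ
      simp only [Finset.mem_filter, Finset.mem_univ, true_and, funext_iff, mag]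
    rw [hset, ← nsmul_eq_mul, ← Finset.sum_const]
    refine Finset.sum_congr rfl fun σ hσ => ?_
    have hσm : mag σ = m := (Finset.mem_filter.1 hσ).2
    rw [hμ, ← hσm]
    rfl
  have hGm : G (fun k : Fin d => m k.castSucc) = F m + -∑ k, m k * Real.log (m k) := by
    rw [hG', lift_proj m hm.2]
  have hcard := card_type_le hN m hm.1 hm.2
  rw [hval, hsup, hGm]
  calc _ ≤ Real.exp (N * -∑ k, m k * Real.log (m k)) *
        (Real.exp (N * F m) / Real.exp (N * G (M j₀) - c)) := by
        gcongr
    _ = _ := by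
        rw [← Real.exp_sub, ← Real.exp_add, ← Real.exp_add]
        congr 1
        ring
end

section
/- Let G(x) = (1/2)(1−2x)² − x log x − (1−x) log(1−x) for x ∈ (0,1) (the Curie–Weiss free energy functional at β = 1, h = 0). Then: (i) G(1/2) = log 2 and G(x) < log 2 for all x ∈ (0,1) with x ≠ 1/2, i.e., x = 1/2 is the unique global maximizer; (ii) G'(1/2) = G''(1/2) = G'''(1/2) = 0; (iii) the fourth derivative satisfies G''''(1/2) = −32. -/
/-!
On `(0,1)` the first four derivatives of `G` are the elementary functions `curieWeissDeriv₁`, …,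
`curieWeissDeriv₄` below, and evaluating them at `1/2` gives the claims on derivatives.
For the maximum, `G'' = -(1 - 2x)² / (x(1 - x))` is negative on `(1/2, 1)`, so `G'` is strictly
decreasing on `[1/2, 1)` from `G'(1/2) = 0`; hence `G' < 0` on `(1/2, 1)` and `G` is strictly
decreasing on `[1/2, 1)` from `G(1/2) = log 2`. The symmetry `G(1 - x) = G(x)` handles `(0, 1/2)`.
-/

open Real

/-- The Curie–Weiss functional `G` at `β = 1`, `h = 0`. -/
noncomputable def curieWeissG (x : ℝ) : ℝ :=
  (1 / 2) * (1 - 2 * x) ^ 2 - x * Real.log x - (1 - x) * Real.log (1 - x)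

/-- The closed form of `G'` on `(0,1)`. -/
noncomputable def curieWeissDeriv₁ (x : ℝ) : ℝ :=
  4 * x - 2 - Real.log x + Real.log (1 - x)

/-- The closed form of `G''` on `(0,1)`. -/
noncomputable def curieWeissDeriv₂ (x : ℝ) : ℝ := 4 - x⁻¹ - (1 - x)⁻¹

/-- The closed form of `G'''` on `(0,1)`. -/
noncomputable def curieWeissDeriv₃ (x : ℝ) : ℝ := (x ^ 2)⁻¹ - ((1 - x) ^ 2)⁻¹

/-- The closed form of `G''''` on `(0,1)`. -/
noncomputable def curieWeissDeriv₄ (x : ℝ) : ℝ := -2 / x ^ 3 - 2 / (1 - x) ^ 3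

lemma hasDerivAt_one_sub (x : ℝ) : HasDerivAt (fun y : ℝ => 1 - y) (-1) x := by
  simpa using (hasDerivAt_id x).const_sub 1

lemma hasDerivAt_curieWeissG {x : ℝ} (hx : x ∈ Set.Ioo (0 : ℝ) 1) :
    HasDerivAt curieWeissG (curieWeissDeriv₁ x) x := by
  have h0 : x ≠ 0 := hx.1.ne'
  have h1 : 1 - x ≠ 0 := (sub_pos.2 hx.2).ne'
  have hq := ((((hasDerivAt_id x).const_mul 2).const_sub 1).pow 2).const_mul (1 / 2 : ℝ)
  have hl := (hasDerivAt_id x).mul (Real.hasDerivAt_log h0)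
  have hr := (hasDerivAt_one_sub x).mul ((hasDerivAt_one_sub x).log h1)
  refine ((hq.sub hl).sub hr).congr_deriv ?_
  simp only [curieWeissDeriv₁, id]
  field_simp
  ring

lemma hasDerivAt_curieWeissDeriv₁ {x : ℝ} (hx : x ∈ Set.Ioo (0 : ℝ) 1) :
    HasDerivAt curieWeissDeriv₁ (curieWeissDeriv₂ x) x := by
  have h0 : x ≠ 0 := hx.1.ne'
  have h1 : 1 - x ≠ 0 := (sub_pos.2 hx.2).ne'
  refine (((((hasDerivAt_id x).const_mul 4).sub_const 2).sub (Real.hasDerivAt_log h0)).add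
    ((hasDerivAt_one_sub x).log h1)).congr_deriv ?_
  simp only [curieWeissDeriv₂]
  field_simp
  ring

lemma hasDerivAt_curieWeissDeriv₂ {x : ℝ} (hx : x ∈ Set.Ioo (0 : ℝ) 1) :
    HasDerivAt curieWeissDeriv₂ (curieWeissDeriv₃ x) x := by
  have h0 : x ≠ 0 := hx.1.ne'
  have h1 : 1 - x ≠ 0 := (sub_pos.2 hx.2).ne'
  refine (((hasDerivAt_inv h0).const_sub 4).sub ((hasDerivAt_one_sub x).inv h1)).congr_deriv ?_
  simp only [curieWeissDeriv₃]
  field_simp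

lemma hasDerivAt_curieWeissDeriv₃ {x : ℝ} (hx : x ∈ Set.Ioo (0 : ℝ) 1) :
    HasDerivAt curieWeissDeriv₃ (curieWeissDeriv₄ x) x := by
  have h0 : x ≠ 0 := hx.1.ne'
  have h1 : 1 - x ≠ 0 := (sub_pos.2 hx.2).ne'
  refine ((((hasDerivAt_id x).pow 2).inv (pow_ne_zero 2 h0)).sub
    (((hasDerivAt_one_sub x).pow 2).inv (pow_ne_zero 2 h1))).congr_deriv ?_
  simp only [curieWeissDeriv₄, id]
  simp
  field_simp

/-- Closed forms propagate through one more derivative because `(0,1)` is open. -/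
lemma iteratedDeriv_succ_eq_on_unit {f g h : ℝ → ℝ} {n : ℕ}
    (hfg : ∀ x ∈ Set.Ioo (0 : ℝ) 1, iteratedDeriv n f x = g x)
    (hgh : ∀ {x : ℝ}, x ∈ Set.Ioo (0 : ℝ) 1 → HasDerivAt g (h x) x) :
    ∀ x ∈ Set.Ioo (0 : ℝ) 1, iteratedDeriv (n + 1) f x = h x := by
  intro x hx
  have he : iteratedDeriv n f =ᶠ[nhds x] g :=
    Filter.eventuallyEq_of_mem (isOpen_Ioo.mem_nhds hx) hfg
  rw [iteratedDeriv_succ, he.deriv_eq, (hgh hx).deriv]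

lemma curieWeissG_half : curieWeissG (1 / 2) = Real.log 2 := by
  have h : (1 : ℝ) - 1 / 2 = 1 / 2 := by norm_num
  rw [curieWeissG, h, one_div, Real.log_inv]
  ring

lemma curieWeissDeriv₁_half : curieWeissDeriv₁ (1 / 2) = 0 := by
  have h : (1 : ℝ) - 1 / 2 = 1 / 2 := by norm_num
  rw [curieWeissDeriv₁, h]
  ring

lemma curieWeissDeriv₂_neg {x : ℝ} (hx : x ∈ Set.Ioo (1 / 2 : ℝ) 1) : curieWeissDeriv₂ x < 0 := by
  have h0 : 0 < x := by linarith [hx.1]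
  have h1 : 0 < 1 - x := sub_pos.2 hx.2
  have h2 : 0 < 2 * x - 1 := by linarith [hx.1]
  have key : curieWeissDeriv₂ x = -((2 * x - 1) ^ 2 / (x * (1 - x))) := by
    rw [curieWeissDeriv₂]
    field_simp
    ring
  rw [key, neg_lt_zero]
  positivity

/-- Applied twice: to `G'`, whose derivative is negative on `(1/2, 1)`, and then to `G` itself. -/
lemma lt_value_half {f g : ℝ → ℝ}
    (hf : ∀ {x : ℝ}, x ∈ Set.Ioo (0 : ℝ) 1 → HasDerivAt f (g x) x)
    (hneg : ∀ x ∈ Set.Ioo (1 / 2 : ℝ) 1, g x < 0) {x : ℝ} (hx : x ∈ Set.Ioo (1 / 2 : ℝ) 1) :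
    f x < f (1 / 2) := by
  have hsub : ∀ y ∈ Set.Ico (1 / 2 : ℝ) 1, y ∈ Set.Ioo (0 : ℝ) 1 :=
    fun y hy => ⟨by linarith [hy.1], hy.2⟩
  have hanti : StrictAntiOn f (Set.Ico (1 / 2) 1) := by
    refine strictAntiOn_of_deriv_neg (convex_Ico _ _)
      (fun y hy => (hf (hsub y hy)).continuousAt.continuousWithinAt) fun y hy => ?_
    rw [interior_Ico] at hy
    rw [(hf (hsub y ⟨hy.1.le, hy.2⟩)).deriv]
    exact hneg y hy
  exact hanti ⟨le_rfl, by norm_num⟩ ⟨hx.1.le, hx.2⟩ hx.1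

lemma curieWeissG_lt_of_half_lt {x : ℝ} (hx : x ∈ Set.Ioo (1 / 2 : ℝ) 1) :
    curieWeissG x < Real.log 2 := by
  rw [← curieWeissG_half]
  refine lt_value_half hasDerivAt_curieWeissG (fun y hy => ?_) hx
  rw [← curieWeissDeriv₁_half]
  exact lt_value_half hasDerivAt_curieWeissDeriv₁ (fun z hz => curieWeissDeriv₂_neg hz) hy

lemma curieWeissG_one_sub (x : ℝ) : curieWeissG (1 - x) = curieWeissG x := by
  simp only [curieWeissG, sub_sub_cancel]
  ring

/-- For the critical Curie–Weiss free energy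
`G(x) = ½(1−2x)² − x log x − (1−x) log(1−x)` on `(0,1)`:
(i) `G(1/2) = log 2` and `x = 1/2` is the unique global maximizer on `(0,1)`;
(ii) `G'(1/2) = G''(1/2) = G'''(1/2) = 0`; (iii) `G''''(1/2) = −32`.
(We extend `G` by the same formula to all of `ℝ`, where `Real.log` is the usual junk
extension; all derivatives at `1/2` are genuine.) -/
theorem stmt_17
    (G : ℝ → ℝ)
    (hG : ∀ x : ℝ, G x =
      (1 / 2) * (1 - 2 * x) ^ 2 - x * Real.log x - (1 - x) * Real.log (1 - x)) :
    (G (1 / 2) = Real.log 2 ∧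
      ∀ x ∈ Set.Ioo (0 : ℝ) 1, x ≠ 1 / 2 → G x < Real.log 2) ∧
    (deriv G (1 / 2) = 0 ∧ iteratedDeriv 2 G (1 / 2) = 0 ∧ iteratedDeriv 3 G (1 / 2) = 0) ∧
    iteratedDeriv 4 G (1 / 2) = -32 := by
  obtain rfl : G = curieWeissG := funext hG
  have hmem : (1 / 2 : ℝ) ∈ Set.Ioo (0 : ℝ) 1 := by norm_num
  have d1 : ∀ x ∈ Set.Ioo (0 : ℝ) 1, iteratedDeriv 1 curieWeissG x = curieWeissDeriv₁ x :=
    iteratedDeriv_succ_eq_on_unit (fun x _ => by rw [iteratedDeriv_zero]) hasDerivAt_curieWeissG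
  have d2 := iteratedDeriv_succ_eq_on_unit d1 hasDerivAt_curieWeissDeriv₁
  have d3 := iteratedDeriv_succ_eq_on_unit d2 hasDerivAt_curieWeissDeriv₂
  have d4 := iteratedDeriv_succ_eq_on_unit d3 hasDerivAt_curieWeissDeriv₃
  refine ⟨⟨curieWeissG_half, fun x hx hne => ?_⟩, ⟨?_, ?_, ?_⟩, ?_⟩
  · rcases lt_or_gt_of_ne hne with h | h
    · rw [← curieWeissG_one_sub]
      exact curieWeissG_lt_of_half_lt ⟨by linarith, by linarith [hx.1]⟩
    · exact curieWeissG_lt_of_half_lt ⟨h, hx.2⟩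
  · rw [(hasDerivAt_curieWeissG hmem).deriv, curieWeissDeriv₁_half]
  · rw [d2 _ hmem, curieWeissDeriv₂]
    norm_num
  · rw [d3 _ hmem, curieWeissDeriv₃]
    norm_num
  · rw [d4 _ hmem, curieWeissDeriv₄]
    norm_num
end

section
/- For the critical Curie–Weiss model (β = 1, h = 0), with ν_N as defined, let m̃_N(σ) = (1/N) Σ_{i=1}^N σ_i, and for m ∈ {−1 + 2l/N : l = 0,…,N} set μ̃_N(m) = μ_N(m̃_N = m) and ν̃_N(m) = ν_N(m̃_N = m). Then sup { |ν̃_N(m)/μ̃_N(m) − 1| : m ∈ {−1 + 2l/N : l = 0,…,N}, |m| ≤ N^{−1/4+δ/2} } → 0 as N → ∞. -/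
open Filter Real MeasureTheory

/-!
Both `μ_N` and `ν_N` depend on a configuration only through its magnetization `m`, so the ratio of
the push-forwards at `m` equals the ratio of the weights of one configuration (`cw_ratio`).
Write `q = N^(1/4)`, `T = N^δ` and `C = ∫ exp (-y⁴/12)`. Up to cancelling powers of `2`, the ratio
is `(A_N / C) * q * exp (-N m²/2) * ∫ P`, where `Z_N = q 2^N A_N` and `P` (`cwP`) is the mixture
integrand.

* Partition function: linearising the square with a Gaussian integral (`cw_Z`) gives
  `A_N = (2π)^(-1/2) ∫ exp (N (log cosh (x/q) - (x/q)²/2)) dx`. Since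
  `log cosh v = v²/2 - v⁴/12 + O(v⁶)`, and the exponent is dominated by a fixed quadratic
  (`cw_rate_lower`), dominated convergence yields `A_N → (2π)^(-1/2) C` (`cw_Z_limit`).

* Mixture: with `t = q m + w/q` and `u = t/q`, the exponent of `exp (-N m²/2) P(t)` for `|t| ≤ T` is
  `N (log (1-u²)/2 + m artanh u - u⁴/12 - m²/2) = -w²/2 - q² u³ w/3 + O(N a⁶)`, where
  `|u|, |m| ≤ a = T/q`. The quartic term of the density exactly turns `-u⁴/4 + m u³/3` into a
  multiple of `u - m`. Hence the integrand is `exp (-w²/2)` up to a factor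
  `exp (± (η |w| + 3 η²))` with `η = q² a³ = N^(3δ - 1/4) → 0` (`cwP_main`). The region `|t| > T`
  contributes at most `q exp (-T⁴/24)` times a constant. Bounds depending on `N` alone
  (`cwP_bounds`) converge to `∫ exp (-w²/2) = (2π)^(1/2)`, uniformly in the admissible `m`.

The product of the two limits is `1`.
-/

open Topology

/-! ### Bounds for `log cosh` -/

lemma cw_hasDerivAt_tanh (v : ℝ) : HasDerivAt Real.tanh (1 - Real.tanh v ^ 2) v := by
  have h := (Real.hasDerivAt_sinh v).div (Real.hasDerivAt_cosh v) (Real.cosh_pos v).ne'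
  have e : Real.tanh = Real.sinh / Real.cosh := by
    funext x; simp [Real.tanh_eq_sinh_div_cosh]
  have hc := (Real.cosh_pos v).ne'
  have hd : 1 - Real.tanh v ^ 2
      = (Real.cosh v * Real.cosh v - Real.sinh v * Real.sinh v) / Real.cosh v ^ 2 := by
    rw [Real.tanh_eq_sinh_div_cosh]
    field_simp
  rw [hd, e]
  exact h

/-- A function vanishing at the origin with nonnegative derivative on the half line is nonnegative
there. -/
lemma cw_nonneg_of_deriv {f f' : ℝ → ℝ} (h0 : f 0 = 0) (hf : ∀ x, HasDerivAt f (f' x) x)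
    (hf' : ∀ x, 0 ≤ x → 0 ≤ f' x) {v : ℝ} (hv : 0 ≤ v) : 0 ≤ f v := by
  have hm : MonotoneOn f (Set.Ici 0) := by
    apply monotoneOn_of_deriv_nonneg (convex_Ici 0)
    · exact fun x _ => (hf x).continuousAt.continuousWithinAt
    · exact fun x _ => (hf x).differentiableAt.differentiableWithinAt
    · intro x hx
      rw [interior_Ici] at hx
      rw [(hf x).deriv]
      exact hf' x (le_of_lt hx)
  rw [← h0]
  exact hm Set.self_mem_Ici hv hv

lemma cw_tanh_nonneg {v : ℝ} (hv : 0 ≤ v) : 0 ≤ Real.tanh v := by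
  rw [Real.tanh_eq_sinh_div_cosh]
  exact div_nonneg (Real.sinh_nonneg_iff.2 hv) (Real.cosh_pos v).le

lemma cw_tanh_le {v : ℝ} (hv : 0 ≤ v) : Real.tanh v ≤ v := by
  have := cw_nonneg_of_deriv (f := fun x => x - Real.tanh x) (by simp)
    (fun x => (hasDerivAt_id x).sub (cw_hasDerivAt_tanh x))
    (fun x _ => by nlinarith [sq_nonneg (Real.tanh x)]) hv
  linarith

lemma cw_tanh_ge {v : ℝ} (hv : 0 ≤ v) : v - v ^ 3 / 3 ≤ Real.tanh v := by
  have := cw_nonneg_of_deriv (f := fun x => Real.tanh x - (x - x ^ 3 / 3)) (by simp)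
    (fun x => (cw_hasDerivAt_tanh x).sub
      ((hasDerivAt_id x).sub ((hasDerivAt_pow 3 x).div_const 3)))
    (fun x hx => by
      have h1 := cw_tanh_le hx
      have h2 := cw_tanh_nonneg hx
      norm_num
      nlinarith) hv
  linarith

lemma cw_tanh_le' {v : ℝ} (hv : 0 ≤ v) : Real.tanh v ≤ v - v ^ 3 / 3 + 2 * v ^ 5 / 15 := by
  have := cw_nonneg_of_deriv (f := fun x => (x - x ^ 3 / 3 + 2 * x ^ 5 / 15) - Real.tanh x) (by simp)
    (fun x => (((hasDerivAt_id x).sub ((hasDerivAt_pow 3 x).div_const 3)).add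
      (((hasDerivAt_pow 5 x).const_mul 2).div_const 15)).sub (cw_hasDerivAt_tanh x))
    (fun x hx => by
      have h1 := cw_tanh_ge hx
      have h2 := cw_tanh_nonneg hx
      norm_num
      rcases le_total 0 (x - x ^ 3 / 3) with h | h
      · have := mul_self_le_mul_self h h1
        nlinarith [sq_nonneg (x ^ 3)]
      · have : x * (x - x ^ 3 / 3) ≤ 0 := mul_nonpos_of_nonneg_of_nonpos hx h
        nlinarith [sq_nonneg (Real.tanh x), sq_nonneg x, sq_nonneg (x ^ 2)]) hv
  linarith

lemma cw_hasDerivAt_log_cosh (v : ℝ) :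
    HasDerivAt (fun x => Real.log (Real.cosh x)) (Real.tanh v) v := by
  rw [Real.tanh_eq_sinh_div_cosh]
  exact (Real.hasDerivAt_cosh v).log (Real.cosh_pos v).ne'

lemma cw_log_cosh_ge (v : ℝ) : v ^ 2 / 2 - v ^ 4 / 12 ≤ Real.log (Real.cosh v) := by
  have key : ∀ v : ℝ, 0 ≤ v → v ^ 2 / 2 - v ^ 4 / 12 ≤ Real.log (Real.cosh v) := by
    intro v hv
    have := cw_nonneg_of_deriv
      (f := fun x => Real.log (Real.cosh x) - (x ^ 2 / 2 - x ^ 4 / 12)) (by simp)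
      (fun x => (cw_hasDerivAt_log_cosh x).sub
        (((hasDerivAt_pow 2 x).div_const 2).sub ((hasDerivAt_pow 4 x).div_const 12)))
      (fun x hx => by have := cw_tanh_ge hx; norm_num; linarith) hv
    linarith
  have := key |v| (abs_nonneg v)
  rwa [Real.cosh_abs, sq_abs, (by decide : Even 4).pow_abs] at this

lemma cw_log_cosh_le (v : ℝ) :
    Real.log (Real.cosh v) ≤ v ^ 2 / 2 - v ^ 4 / 12 + v ^ 6 / 45 := by
  have key : ∀ v : ℝ, 0 ≤ v →
      Real.log (Real.cosh v) ≤ v ^ 2 / 2 - v ^ 4 / 12 + v ^ 6 / 45 := by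
    intro v hv
    have := cw_nonneg_of_deriv
      (f := fun x => (x ^ 2 / 2 - x ^ 4 / 12 + x ^ 6 / 45) - Real.log (Real.cosh x)) (by simp)
      (fun x => ((((hasDerivAt_pow 2 x).div_const 2).sub
        ((hasDerivAt_pow 4 x).div_const 12)).add ((hasDerivAt_pow 6 x).div_const 45)).sub
          (cw_hasDerivAt_log_cosh x))
      (fun x hx => by have := cw_tanh_le' hx; norm_num; linarith) hv
    linarith
  have := key |v| (abs_nonneg v)
  rwa [Real.cosh_abs, sq_abs, (by decide : Even 4).pow_abs, (by decide : Even 6).pow_abs] at this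

lemma cw_log_cosh_far {v : ℝ} (hv : 1 ≤ |v|) :
    Real.log (Real.cosh v) ≤ v ^ 2 / 2 - v ^ 2 / 20 := by
  rw [← Real.cosh_abs, ← sq_abs v]
  generalize |v| = v at hv
  have h1 : Real.cosh v ≤ Real.cosh 1 * Real.exp (v - 1) := by
    have : Real.cosh v = Real.cosh (1 + (v - 1)) := by ring_nf
    rw [this, Real.cosh_add, ← Real.cosh_add_sinh (v - 1)]
    have h2 : 0 ≤ Real.sinh (v - 1) := Real.sinh_nonneg_iff.2 (by linarith)
    nlinarith [Real.sinh_lt_cosh 1]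
  have h2 := Real.log_le_log (Real.cosh_pos v) h1
  rw [Real.log_mul (Real.cosh_pos 1).ne' (Real.exp_pos _).ne', Real.log_exp] at h2
  have h3 := cw_log_cosh_le 1
  norm_num at h3
  nlinarith [sq_nonneg (v - 10 / 9)]

/-- The exponent in the Hubbard–Stratonovich representation, in the scaling `v = x / q`, is bounded
above by a fixed negative quadratic, uniformly in `q ≥ 1`. -/
lemma cw_rate_lower {q : ℝ} (hq : 1 ≤ q) (x : ℝ) :
    q ^ 4 * Real.log (Real.cosh (x / q)) - q ^ 2 * x ^ 2 / 2 ≤ 1 / 20 - x ^ 2 / 20 := by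
  have hq0 : 0 < q := by linarith
  obtain ⟨v, rfl⟩ : ∃ v, x = v * q := ⟨x / q, by field_simp⟩
  rw [mul_div_cancel_right₀ _ hq0.ne']
  rcases le_total 1 |v| with h | h
  · have h1 := mul_le_mul_of_nonneg_left (cw_log_cosh_far h) (by positivity : 0 ≤ q ^ 4)
    have h2 : q ^ 2 * 1 ≤ q ^ 2 * q ^ 2 := by gcongr; nlinarith
    nlinarith [mul_le_mul_of_nonneg_left h2 (sq_nonneg v)]
  · have h1 := mul_le_mul_of_nonneg_left (cw_log_cosh_le v) (by positivity : 0 ≤ q ^ 4)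
    have hv : v ^ 2 ≤ 1 := by rw [← sq_abs]; nlinarith [abs_nonneg v]
    have h3 : q ^ 4 * v ^ 6 ≤ q ^ 4 * v ^ 4 := by
      gcongr ?_ * ?_
      nlinarith [mul_le_mul_of_nonneg_left hv (by positivity : 0 ≤ v ^ 4)]
    have h4 : 0 ≤ q ^ 4 * v ^ 4 := by positivity
    nlinarith [sq_nonneg ((v * q) ^ 2 - 1)]

/-! ### The partition function -/

lemma cw_gauss {q : ℝ} (hq : 0 < q) (S : ℝ) :
    ∫ x : ℝ, Real.exp (-(q ^ 2 * x ^ 2) / 2 + x / q * S)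
      = Real.exp (1 / (2 * q ^ 4) * S ^ 2) * (√(2 * π) / q) := by
  have h1 : ∀ x : ℝ, Real.exp (-(q ^ 2 * x ^ 2) / 2 + x / q * S)
      = Real.exp (1 / (2 * q ^ 4) * S ^ 2) * Real.exp (-(q ^ 2 / 2) * (x - S / q ^ 3) ^ 2) := by
    intro x
    rw [← Real.exp_add]
    congr 1
    field_simp
    ring
  simp_rw [h1]
  rw [integral_const_mul, integral_sub_right_eq_self (fun x => Real.exp (-(q ^ 2 / 2) * x ^ 2)),
    integral_gaussian]
  congr 1
  rw [show π / (q ^ 2 / 2) = (2 * π) / q ^ 2 by field_simp, Real.sqrt_div (by positivity),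
    Real.sqrt_sq hq.le]

lemma cw_gauss_integrable {q : ℝ} (hq : 0 < q) (S : ℝ) :
    Integrable (fun x : ℝ => Real.exp (-(q ^ 2 * x ^ 2) / 2 + x / q * S)) := by
  by_contra h
  have := cw_gauss hq S
  rw [integral_undef h] at this
  have h2 : 0 < Real.exp (1 / (2 * q ^ 4) * S ^ 2) * (√(2 * π) / q) := by positivity
  linarith

lemma cw_sum_exp (spin : Bool → ℝ) (hspin : ∀ b, spin b = if b then 1 else -1) (N : ℕ) (v : ℝ) :
    ∑ σ : Fin N → Bool, Real.exp (v * ∑ i, spin (σ i)) = (2 * Real.cosh v) ^ N := by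
  have h1 : ∀ σ : Fin N → Bool, Real.exp (v * ∑ i, spin (σ i))
      = ∏ i, Real.exp (v * spin (σ i)) := by
    intro σ; rw [Finset.mul_sum, Real.exp_sum]
  simp_rw [h1]
  have h2 := Finset.prod_univ_sum (fun _ : Fin N => (Finset.univ : Finset Bool))
    (fun _ b => Real.exp (v * spin b))
  rw [Fintype.piFinset_univ] at h2
  rw [← h2]
  simp [hspin, Real.cosh_eq]
  congr 1; ring

/-- Hubbard–Stratonovich representation of the partition function, with `q = N^(1/4)`. -/
lemma cw_Z (spin : Bool → ℝ) (hspin : ∀ b, spin b = if b then 1 else -1) (N : ℕ) {q : ℝ}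
    (hq : 0 < q) (hN : (N : ℝ) = q ^ 4) :
    (∑ σ : Fin N → Bool, Real.exp (1 / (2 * N) * ∑ i, ∑ j, spin (σ i) * spin (σ j)))
      = q * 2 ^ N * ((√(2 * π))⁻¹ * ∫ x : ℝ,
        Real.exp (q ^ 4 * Real.log (Real.cosh (x / q)) - q ^ 2 * x ^ 2 / 2)) := by
  have h1 : ∀ σ : Fin N → Bool, Real.exp (1 / (2 * N) * ∑ i, ∑ j, spin (σ i) * spin (σ j))
      = q / √(2 * π) * ∫ x : ℝ, Real.exp (-(q ^ 2 * x ^ 2) / 2 + x / q * ∑ i, spin (σ i)) := by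
    intro σ
    rw [cw_gauss hq, ← Finset.sum_mul_sum, hN, sq (∑ i, spin (σ i))]
    field_simp
  simp_rw [h1]
  rw [← Finset.mul_sum, ← integral_finsetSum _ (fun σ _ => cw_gauss_integrable hq _)]
  have h2 : ∀ x : ℝ, ∑ σ : Fin N → Bool, Real.exp (-(q ^ 2 * x ^ 2) / 2 + x / q * ∑ i, spin (σ i))
      = 2 ^ N * Real.exp (q ^ 4 * Real.log (Real.cosh (x / q)) - q ^ 2 * x ^ 2 / 2) := by
    intro x
    simp_rw [Real.exp_add]
    rw [← Finset.mul_sum, cw_sum_exp spin hspin, mul_pow, ← hN, sub_eq_add_neg, Real.exp_add,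
      Real.exp_nat_mul, Real.exp_log (Real.cosh_pos _), neg_div]
    ring
  simp_rw [h2]
  rw [integral_const_mul]
  ring

/-- Convergence of the rescaled partition function integral to the quartic integral. -/
lemma cw_Z_limit {q : ℕ → ℝ} (hq : Tendsto q atTop atTop) :
    Tendsto (fun N => ∫ x : ℝ,
      Real.exp (q N ^ 4 * Real.log (Real.cosh (x / q N)) - q N ^ 2 * x ^ 2 / 2)) atTop
      (𝓝 (∫ x : ℝ, Real.exp (-x ^ 4 / 12))) := by
  apply tendsto_integral_filter_of_dominated_convergence
    (fun x => Real.exp (1 / 20) * Real.exp (-(1 / 20) * x ^ 2))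
  · refine Eventually.of_forall fun N => Continuous.aestronglyMeasurable ?_
    have : ∀ x, Real.cosh (x / q N) ≠ 0 := fun x => (Real.cosh_pos _).ne'
    have h2 : Continuous fun x => Real.log (Real.cosh (x / q N)) :=
      (Real.continuous_cosh.comp (by fun_prop)).log this
    fun_prop
  · filter_upwards [hq.eventually_ge_atTop 1] with N hN
    refine Eventually.of_forall fun x => ?_
    rw [Real.norm_eq_abs, Real.abs_exp, ← Real.exp_add]
    apply Real.exp_le_exp.2
    have := cw_rate_lower hN x
    linarith
  · exact (integrable_exp_neg_mul_sq (by norm_num)).const_mul _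
  · refine Eventually.of_forall fun x => ?_
    refine (Real.continuous_exp.tendsto _).comp ?_
    have hinv : Tendsto (fun N => x ^ 6 / 45 * (q N ^ 2)⁻¹) atTop (𝓝 0) := by
      have := (tendsto_inv_atTop_zero.comp ((tendsto_pow_atTop two_ne_zero).comp hq)).const_mul
        (x ^ 6 / 45)
      simpa using! this
    have hup : Tendsto (fun N => -x ^ 4 / 12 + x ^ 6 / 45 * (q N ^ 2)⁻¹) atTop
        (𝓝 (-x ^ 4 / 12)) := by simpa using hinv.const_add (-x ^ 4 / 12)
    refine tendsto_of_tendsto_of_tendsto_of_le_of_le' tendsto_const_nhds hup ?_ ?_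
    · filter_upwards [hq.eventually_gt_atTop 0] with N hN
      have h := mul_le_mul_of_nonneg_left (cw_log_cosh_ge (x / q N))
        (by positivity : 0 ≤ q N ^ 4)
      have e : q N ^ 4 * ((x / q N) ^ 2 / 2 - (x / q N) ^ 4 / 12)
        = q N ^ 2 * x ^ 2 / 2 - x ^ 4 / 12 := by field_simp
      linarith
    · filter_upwards [hq.eventually_gt_atTop 0] with N hN
      have h := mul_le_mul_of_nonneg_left (cw_log_cosh_le (x / q N))
        (by positivity : 0 ≤ q N ^ 4)
      have e : q N ^ 4 * ((x / q N) ^ 2 / 2 - (x / q N) ^ 4 / 12 + (x / q N) ^ 6 / 45)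
        = q N ^ 2 * x ^ 2 / 2 - x ^ 4 / 12 + x ^ 6 / 45 * (q N ^ 2)⁻¹ := by field_simp
      linarith

/-! ### Expansion of the mixture weights -/

lemma cw_prod_eq {ι : Type*} [Fintype ι] (s : ι → ℝ) (hs : ∀ i, s i = 1 ∨ s i = -1) {u : ℝ}
    (hu : |u| < 1) :
    ∏ i, (1 + u * s i) = Real.exp ((Fintype.card ι : ℝ) / 2 * Real.log (1 - u ^ 2)
      + (∑ i, s i) / 2 * (Real.log (1 + u) - Real.log (1 - u))) := by
  obtain ⟨h1, h2⟩ := abs_lt.1 hu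
  have e : 1 - u ^ 2 = (1 + u) * (1 - u) := by ring
  rw [e, Real.log_mul (by linarith) (by linarith)]
  have h3 : ∀ i, 1 + u * s i = Real.exp ((Real.log (1 + u) + Real.log (1 - u)) / 2
      + s i * ((Real.log (1 + u) - Real.log (1 - u)) / 2)) := by
    intro i
    rcases hs i with h | h <;> rw [h]
    · ring_nf; rw [Real.exp_log (by linarith)]
    · ring_nf; rw [Real.exp_log (by linarith)]
  rw [Finset.prod_congr rfl fun i _ => h3 i, ← Real.exp_sum, Finset.sum_add_distrib,
    ← Finset.sum_mul]
  congr 1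
  simp
  ring

/-- Taylor expansion of the log-likelihood per spin, with sixth-order error. -/
lemma cw_log_expand {u m a : ℝ} (ha : a ≤ 1 / 2) (hu : |u| ≤ a) (hm : |m| ≤ a) :
    |Real.log (1 - u ^ 2) / 2 + m / 2 * (Real.log (1 + u) - Real.log (1 - u))
      - (-u ^ 2 / 2 - u ^ 4 / 4 + m * u + m * u ^ 3 / 3)| ≤ 3 * a ^ 6 := by
  have hu0 := abs_nonneg u
  have ha0 : 0 ≤ a := hu0.trans hu
  have hu2 : u ^ 2 ≤ 1 / 4 := by rw [← sq_abs]; nlinarith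
  have b1 := Real.abs_log_sub_add_sum_range_le (x := u ^ 2)
    (by rw [abs_of_nonneg (sq_nonneg u)]; linarith) 2
  have b2 := Real.abs_log_sub_add_sum_range_le (x := u) (by linarith) 4
  have b3 := Real.abs_log_sub_add_sum_range_le (x := -u) (by rw [abs_neg]; linarith) 4
  rw [abs_neg] at b3
  simp only [Finset.sum_range_succ, Finset.sum_range_zero] at b1 b2 b3
  norm_num at b1 b2 b3
  have c1 : (u ^ 2) ^ 3 / (1 - u ^ 2) ≤ 2 * a ^ 6 := by
    rw [div_le_iff₀ (by linarith)]
    have : (u ^ 2) ^ 3 ≤ a ^ 6 := by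
      rw [← pow_mul, ← (by decide : Even 6).pow_abs]; gcongr
    nlinarith [pow_nonneg ha0 6]
  have c2 : |u| ^ 5 / (1 - |u|) ≤ 2 * a ^ 5 := by
    rw [div_le_iff₀ (by linarith)]
    have : |u| ^ 5 ≤ a ^ 5 := by gcongr
    nlinarith [pow_nonneg ha0 5]
  have d1 := b1.trans c1
  have d2 := b2.trans c2
  have d3 := b3.trans c2
  have d4 : |Real.log (1 + u) - Real.log (1 - u) - 2 * (u + u ^ 3 / 3)| ≤ 4 * a ^ 5 := by
    rw [abs_le] at d2 d3 ⊢
    ring_nf at d2 d3 ⊢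
    constructor <;> linarith
  have d5 : |m / 2 * (Real.log (1 + u) - Real.log (1 - u) - 2 * (u + u ^ 3 / 3))|
      ≤ a / 2 * (4 * a ^ 5) := by
    rw [abs_mul]
    gcongr
    rw [abs_div, abs_two]; gcongr
  rw [abs_le] at d1 d5 ⊢
  ring_nf at d1 d5 ⊢
  constructor <;> linarith

/-- Integrand of `2 ^ N` times the (unnormalized) mixture weight of a configuration `s`, where the
mixing variable is truncated to `0` outside `[-T, T]`. -/
noncomputable def cwP {ι : Type*} [Fintype ι] (s : ι → ℝ) (q T t : ℝ) : ℝ :=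
  (∏ i, (1 + (if |t| ≤ T then t else 0) * s i / q)) * Real.exp (-t ^ 4 / 12)

lemma cwP_measurable {ι : Type*} [Fintype ι] (s : ι → ℝ) (q T : ℝ) :
    Measurable (cwP s q T) := by
  unfold cwP
  have h : Measurable fun t : ℝ => if |t| ≤ T then t else 0 :=
    Measurable.ite (measurableSet_le (by fun_prop) (by fun_prop)) (by fun_prop) (by fun_prop)
  refine Measurable.mul (Finset.measurable_fun_prod _ fun i _ => ?_) (by fun_prop)
  exact ((h.mul_const _).div_const _).const_add _

/-- After recentring at the magnetization `m` and rescaling, the mixture integrand is Gaussian up to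
a uniformly small relative error. -/
lemma cwP_main {ι : Type*} [Fintype ι] (s : ι → ℝ) (hs : ∀ i, s i = 1 ∨ s i = -1)
    {q T m a : ℝ} (hq : 0 < q) (hcard : (Fintype.card ι : ℝ) = q ^ 4) (hsum : ∑ i, s i = q ^ 4 * m)
    (haT : T / q = a) (ha : a ≤ 1 / 2) (hm : |m| ≤ a) (w : ℝ) (ht : |q * m + w / q| ≤ T) :
    ∃ E : ℝ, Real.exp (-(q ^ 4 * m ^ 2 / 2)) * cwP s q T (q * m + w / q) = Real.exp E ∧
      |E + w ^ 2 / 2| ≤ q ^ 2 * a ^ 3 * |w| + 3 * (q ^ 2 * a ^ 3) ^ 2 := by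
  set u : ℝ := m + w / q ^ 2 with hu
  have hqu : q * m + w / q = q * u := by rw [hu]; field_simp
  have hua : |u| ≤ a := by
    rw [hqu, abs_mul, abs_of_pos hq] at ht
    rw [← haT, le_div_iff₀ hq]; linarith
  have ha0 : 0 ≤ a := (abs_nonneg u).trans hua
  have hprod : cwP s q T (q * m + w / q) = (∏ i, (1 + u * s i)) * Real.exp (-(q * u) ^ 4 / 12) := by
    unfold cwP
    rw [if_pos ht, hqu]
    congr 1
    refine Finset.prod_congr rfl fun i _ => ?_
    field_simp
  rw [hprod, cw_prod_eq s hs (by linarith), ← Real.exp_add, ← Real.exp_add]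
  refine ⟨_, rfl, ?_⟩
  rw [hcard, hsum]
  have hexp := cw_log_expand ha hua hm
  set D := Real.log (1 - u ^ 2) / 2 + m / 2 * (Real.log (1 + u) - Real.log (1 - u))
      - (-u ^ 2 / 2 - u ^ 4 / 4 + m * u + m * u ^ 3 / 3) with hD
  have hw : w = q ^ 2 * (u - m) := by rw [hu]; field_simp; ring
  have hmain : -(q ^ 4 * m ^ 2 / 2) + (q ^ 4 / 2 * Real.log (1 - u ^ 2)
      + q ^ 4 * m / 2 * (Real.log (1 + u) - Real.log (1 - u)) + -(q * u) ^ 4 / 12) + w ^ 2 / 2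
      = q ^ 4 * D - q ^ 2 * u ^ 3 * w / 3 := by
    rw [hD, hw]; ring
  rw [hmain]
  have h1 : |q ^ 4 * D| ≤ q ^ 4 * (3 * a ^ 6) := by
    rw [abs_mul, abs_of_pos (by positivity)]; gcongr
  have h2 : |q ^ 2 * u ^ 3 * w / 3| ≤ q ^ 2 * a ^ 3 * |w| := by
    rw [abs_div, abs_mul, abs_mul, abs_pow, abs_pow, abs_of_pos hq, abs_of_pos (by norm_num : (0:ℝ) < 3)]
    have : q ^ 2 * |u| ^ 3 * |w| ≤ q ^ 2 * a ^ 3 * |w| := by gcongr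
    have h0 : 0 ≤ q ^ 2 * |u| ^ 3 * |w| := by positivity
    linarith
  calc |q ^ 4 * D - q ^ 2 * u ^ 3 * w / 3| ≤ |q ^ 4 * D| + |q ^ 2 * u ^ 3 * w / 3| := abs_sub _ _
    _ ≤ q ^ 4 * (3 * a ^ 6) + q ^ 2 * a ^ 3 * |w| := add_le_add h1 h2
    _ = _ := by ring

/-- Majorant of the Gaussian integrand, with `η` bounding the relative error. -/
noncomputable def cwUp (η w : ℝ) : ℝ := Real.exp (-w ^ 2 / 2 + η * |w| + 3 * η ^ 2)

/-- Minorant of the Gaussian integrand, supported where the truncation is inactive. -/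
noncomputable def cwLow (η R w : ℝ) : ℝ :=
  if |w| ≤ R then Real.exp (-w ^ 2 / 2 - η * |w| - 3 * η ^ 2) else 0

lemma cwUp_le {η : ℝ} (h0 : 0 ≤ η) (h1 : η ≤ 1) (w : ℝ) :
    cwUp η w ≤ Real.exp 4 * Real.exp (-(1 / 4) * w ^ 2) := by
  unfold cwUp
  rw [← Real.exp_add]
  apply Real.exp_le_exp.2
  have e : w ^ 2 = |w| ^ 2 := (sq_abs w).symm
  rw [e]
  nlinarith [sq_nonneg (|w| - 2), abs_nonneg w]

lemma cwUp_integrable {η : ℝ} (h0 : 0 ≤ η) (h1 : η ≤ 1) : Integrable (cwUp η) := by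
  refine Integrable.mono' (g := fun w => Real.exp 4 * Real.exp (-(1 / 4) * w ^ 2))
    ((integrable_exp_neg_mul_sq (by norm_num)).const_mul _) ?_ ?_
  · unfold cwUp
    exact Continuous.aestronglyMeasurable (by fun_prop)
  · refine Eventually.of_forall fun w => ?_
    rw [Real.norm_eq_abs, abs_of_nonneg (by unfold cwUp; positivity)]
    exact cwUp_le h0 h1 w

lemma cw_quartic_integrable {b : ℝ} (hb : 0 < b) :
    Integrable (fun t : ℝ => Real.exp (-t ^ 4 / b)) := by
  refine Integrable.mono' (g := fun t => Real.exp (1 / b) * Real.exp (-(1 / b) * t ^ 2))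
    ((integrable_exp_neg_mul_sq (by positivity)).const_mul _)
    (Continuous.aestronglyMeasurable (by fun_prop)) ?_
  refine Eventually.of_forall fun t => ?_
  rw [Real.norm_eq_abs, Real.abs_exp, ← Real.exp_add]
  apply Real.exp_le_exp.2
  rw [neg_div, ← sub_nonneg]
  have : 1 / b + -(1 / b) * t ^ 2 - -(t ^ 4 / b) = ((t ^ 2 - 1 / 2) ^ 2 + 3 / 4) / b := by
    field_simp; ring
  rw [this]; positivity

/-- Affine change of variables `t = q m + w / q`. -/
lemma cw_subst (g : ℝ → ℝ) {q : ℝ} (hq : 0 < q) (m : ℝ) :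
    ∫ w : ℝ, g (q * m + w / q) = q * ∫ t : ℝ, g t := by
  rw [Measure.integral_comp_div (fun y => g (q * m + y)) q, integral_add_left_eq_self g,
    abs_of_pos hq, smul_eq_mul]

/-- Bounds for the recentred mixture integral that do not depend on the magnetization `m`. -/
lemma cwP_bounds {ι : Type*} [Fintype ι] (s : ι → ℝ) (hs : ∀ i, s i = 1 ∨ s i = -1)
    {q T r m a η : ℝ} (hq : 0 < q) (hT : 0 ≤ T) (hcard : (Fintype.card ι : ℝ) = q ^ 4)
    (hsum : ∑ i, s i = q ^ 4 * m)
    (haT : T / q = a) (ha : a ≤ 1 / 2) (hr : q * |m| ≤ r) (hrT : r ≤ T)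
    (hη : η = q ^ 2 * a ^ 3) (hη1 : η ≤ 1) :
    (∫ w, cwLow η (q * (T - r)) w) ≤ q * (Real.exp (-(q ^ 4 * m ^ 2 / 2)) * ∫ t, cwP s q T t) ∧
    q * (Real.exp (-(q ^ 4 * m ^ 2 / 2)) * ∫ t, cwP s q T t) ≤
      (∫ w, cwUp η w) + q * (Real.exp (-T ^ 4 / 24) * ∫ t : ℝ, Real.exp (-t ^ 4 / 24)) := by
  have hm : |m| ≤ a := by
    rw [← haT, le_div_iff₀ hq]; linarith
  have ha0 : 0 ≤ a := (abs_nonneg m).trans hm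
  have hη0 : 0 ≤ η := by rw [hη]; positivity
  set c := Real.exp (-(q ^ 4 * m ^ 2 / 2)) with hc
  have hc1 : c ≤ 1 := Real.exp_le_one_iff.2 (by have : 0 ≤ q ^ 4 * m ^ 2 / 2 := by positivity
                                                linarith)
  have hc0 : 0 < c := Real.exp_pos _
  -- Outside `[-T, T]` the truncated variable vanishes and only the quartic weight remains.
  have hout : ∀ t : ℝ, ¬ |t| ≤ T → cwP s q T t = Real.exp (-t ^ 4 / 12) := by
    intro t ht; unfold cwP; simp [ht]
  set Q : ℝ → ℝ := fun w => c * cwP s q T (q * m + w / q) with hQ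
  set G : ℝ → ℝ := fun t => Real.exp (-T ^ 4 / 24) * Real.exp (-t ^ 4 / 24) with hG
  have hQ0 : ∀ w, 0 ≤ Q w := by
    intro w
    by_cases ht : |q * m + w / q| ≤ T
    · obtain ⟨E, hE, _⟩ := cwP_main s hs hq hcard hsum haT ha hm w ht
      simp only [hQ]; rw [hE]; positivity
    · simp only [hQ]; rw [hout _ ht]; positivity
  have hQup : ∀ w, Q w ≤ cwUp η w + G (q * m + w / q) := by
    intro w
    by_cases ht : |q * m + w / q| ≤ T
    · obtain ⟨E, hE, hE2⟩ := cwP_main s hs hq hcard hsum haT ha hm w ht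
      simp only [hQ]; rw [hE]
      have h1 : Real.exp E ≤ cwUp η w := by
        unfold cwUp
        apply Real.exp_le_exp.2
        rw [← hη] at hE2
        have := (abs_le.1 hE2).2
        linarith
      have h2 : 0 ≤ G (q * m + w / q) := by simp only [hG]; positivity
      linarith
    · simp only [hQ]; rw [hout _ ht]
      set t := q * m + w / q
      have h0 : 0 ≤ cwUp η w := by unfold cwUp; positivity
      have h1 : Real.exp (-t ^ 4 / 12) ≤ G t := by
        simp only [hG]
        rw [← Real.exp_add]
        apply Real.exp_le_exp.2
        have : T ^ 4 ≤ t ^ 4 := by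
          rw [← (by decide : Even 4).pow_abs t]
          gcongr
          exact (not_le.1 ht).le
        linarith
      have h2 : c * Real.exp (-t ^ 4 / 12) ≤ Real.exp (-t ^ 4 / 12) :=
        mul_le_of_le_one_left (Real.exp_pos _).le hc1
      linarith
  have hQlow : ∀ w, cwLow η (q * (T - r)) w ≤ Q w := by
    intro w
    unfold cwLow
    split_ifs with hw
    · have ht : |q * m + w / q| ≤ T := by
        have h1 : |w / q| ≤ T - r := by
          rw [abs_div, abs_of_pos hq, div_le_iff₀ hq]; linarith
        have h2 := abs_add_le (q * m) (w / q)
        rw [abs_mul, abs_of_pos hq] at h2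
        linarith
      obtain ⟨E, hE, hE2⟩ := cwP_main s hs hq hcard hsum haT ha hm w ht
      simp only [hQ]; rw [hE]
      apply Real.exp_le_exp.2
      rw [← hη] at hE2
      have := (abs_le.1 hE2).1
      linarith
    · exact hQ0 w
  have hlow0 : ∀ w, 0 ≤ cwLow η (q * (T - r)) w := by
    intro w; unfold cwLow; split_ifs <;> positivity
  have hGint : Integrable G := (cw_quartic_integrable (by norm_num)).const_mul _
  have hGint2 : Integrable (fun w => G (q * m + w / q)) :=
    (hGint.comp_add_left (q * m)).comp_div hq.ne'
  have hUint := (cwUp_integrable hη0 hη1).add hGint2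
  have hQint : Integrable Q := by
    refine Integrable.mono' hUint ?_ (Eventually.of_forall fun w => ?_)
    · refine Measurable.aestronglyMeasurable ?_
      exact ((cwP_measurable s q T).comp (by fun_prop)).const_mul c
    · rw [Real.norm_eq_abs, abs_of_nonneg (hQ0 w)]
      exact hQup w
  have hIQ : ∫ w, Q w = q * (c * ∫ t, cwP s q T t) := by
    simp only [hQ]
    rw [integral_const_mul, cw_subst _ hq]; ring
  have hIG : ∫ w, G (q * m + w / q)
      = q * (Real.exp (-T ^ 4 / 24) * ∫ t : ℝ, Real.exp (-t ^ 4 / 24)) := by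
    rw [cw_subst G hq]
    simp only [hG]
    rw [integral_const_mul]
  rw [← hIQ, ← hIG]
  constructor
  · exact integral_mono_of_nonneg (Eventually.of_forall hlow0) hQint (Eventually.of_forall hQlow)
  · rw [← integral_add (cwUp_integrable hη0 hη1) hGint2]
    exact integral_mono hQint hUint hQup

lemma cw_std_gauss : ∫ w : ℝ, Real.exp (-w ^ 2 / 2) = √(2 * π) := by
  have := integral_gaussian (1 / 2)
  rw [show π / (1 / 2) = 2 * π by ring] at this
  rw [← this]
  congr 1; funext w; congr 1; ring

lemma cwUp_limit {η : ℕ → ℝ} (h0 : ∀ᶠ N in atTop, 0 ≤ η N) (hη : Tendsto η atTop (𝓝 0)) :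
    Tendsto (fun N => ∫ w, cwUp (η N) w) atTop (𝓝 (√(2 * π))) := by
  rw [← cw_std_gauss]
  apply tendsto_integral_filter_of_dominated_convergence
    (fun w => Real.exp 4 * Real.exp (-(1 / 4) * w ^ 2))
  · refine Eventually.of_forall fun N => Continuous.aestronglyMeasurable ?_
    unfold cwUp; fun_prop
  · filter_upwards [h0, hη.eventually_le_const one_pos] with N hN hN1
    refine Eventually.of_forall fun w => ?_
    rw [Real.norm_eq_abs, abs_of_nonneg (by unfold cwUp; positivity)]
    exact cwUp_le hN hN1 w
  · exact (integrable_exp_neg_mul_sq (by norm_num)).const_mul _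
  · refine Eventually.of_forall fun w => ?_
    unfold cwUp
    refine (Real.continuous_exp.tendsto _).comp ?_
    have := ((hη.mul_const |w|).const_add (-w ^ 2 / 2)).add ((hη.pow 2).const_mul 3)
    simpa using this

lemma cwLow_limit {η R : ℕ → ℝ} (h0 : ∀ᶠ N in atTop, 0 ≤ η N) (hη : Tendsto η atTop (𝓝 0))
    (hR : Tendsto R atTop atTop) :
    Tendsto (fun N => ∫ w, cwLow (η N) (R N) w) atTop (𝓝 (√(2 * π))) := by
  rw [← cw_std_gauss]
  apply tendsto_integral_filter_of_dominated_convergence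
    (fun w => Real.exp (-(1 / 2) * w ^ 2))
  · refine Eventually.of_forall fun N => Measurable.aestronglyMeasurable ?_
    unfold cwLow
    exact Measurable.ite (measurableSet_le (by fun_prop) (by fun_prop)) (by fun_prop) (by fun_prop)
  · filter_upwards [h0] with N hN
    refine Eventually.of_forall fun w => ?_
    unfold cwLow
    split_ifs
    · rw [Real.norm_eq_abs, Real.abs_exp]
      apply Real.exp_le_exp.2
      nlinarith [mul_nonneg hN (abs_nonneg w), sq_nonneg (η N)]
    · simp; positivity
  · exact integrable_exp_neg_mul_sq (by norm_num)
  · refine Eventually.of_forall fun w => ?_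
    have h : Tendsto (fun N => Real.exp (-w ^ 2 / 2 - η N * |w| - 3 * (η N) ^ 2)) atTop
        (𝓝 (Real.exp (-w ^ 2 / 2))) := by
      refine (Real.continuous_exp.tendsto _).comp ?_
      have := ((hη.mul_const |w|).const_sub (-w ^ 2 / 2)).sub ((hη.pow 2).const_mul 3)
      simpa using this
    refine h.congr' ?_
    filter_upwards [hR.eventually_ge_atTop |w|] with N hN
    unfold cwLow
    rw [if_pos hN]

/-! ### Reduction of the push-forwards to a single configuration -/

lemma cw_exists_config (spin : Bool → ℝ) (hspin : ∀ b, spin b = if b then 1 else -1) {N l : ℕ}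
    (hl : l ≤ N) (hN : 0 < N) :
    ∃ σ : Fin N → Bool, (1 / N : ℝ) * ∑ i, spin (σ i) = -1 + 2 * (l : ℝ) / N := by
  refine ⟨fun i => decide ((i : ℕ) < l), ?_⟩
  obtain ⟨k, rfl⟩ := Nat.exists_eq_add_of_le hl
  have h : ((l + k : ℕ) : ℝ) ≠ 0 := by positivity
  rw [Fin.sum_univ_add]
  simp [hspin]
  push_cast at h
  field_simp
  ring

/-- If `f` and `g` are constant on a nonempty set, the ratio of their sums over it is the ratio of
the constants. Applied to the configurations of a given magnetization. -/
lemma cw_ratio {α : Type*} [Fintype α] (p : α → Prop) [DecidablePred p] (f g : α → ℝ) (V W : ℝ)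
    (hp : ∃ x, p x) (hf : ∀ x, p x → f x = V) (hg : ∀ x, p x → g x = W) :
    (∑ x, if p x then f x else 0) / (∑ x, if p x then g x else 0) = V / W := by
  have h1 : ∀ (h : α → ℝ) (c : ℝ), (∀ x, p x → h x = c) →
      (∑ x, if p x then h x else 0) = ((Finset.univ.filter p).card : ℝ) * c := by
    intro h c hc
    rw [← Finset.sum_filter, Finset.sum_congr rfl fun x hx => hc x (Finset.mem_filter.1 hx).2]
    simp
  rw [h1 f V hf, h1 g W hg]
  obtain ⟨x, hx⟩ := hp
  have : ((Finset.univ.filter p).card : ℝ) ≠ 0 := by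
    have : 0 < (Finset.univ.filter p).card := Finset.card_pos.2 ⟨x, by simp [hx]⟩
    positivity
  exact mul_div_mul_left _ _ this

/-! ### Scales -/

lemma cw_tail_limit {δ : ℝ} (hδ0 : 0 < δ) :
    Tendsto (fun N : ℕ => (N : ℝ) ^ ((1 : ℝ) / 4) * Real.exp (-((N : ℝ) ^ δ) ^ 4 / 24)) atTop
      (𝓝 0) := by
  have h1 : Tendsto (fun N : ℕ => (N : ℝ) ^ (4 * δ)) atTop atTop :=
    (tendsto_rpow_atTop (by positivity)).comp tendsto_natCast_atTop_atTop
  have h2 := (tendsto_rpow_mul_exp_neg_mul_atTop_nhds_zero (1 / (16 * δ)) (1 / 24)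
    (by norm_num)).comp h1
  refine h2.congr fun N => ?_
  have hN : (0 : ℝ) ≤ N := Nat.cast_nonneg N
  simp only [Function.comp]
  rw [← Real.rpow_mul hN, ← Real.rpow_natCast ((N : ℝ) ^ δ) 4, ← Real.rpow_mul hN]
  congr 2
  · field_simp; norm_num
  · push_cast; rw [mul_comm δ 4]; ring

/-- For the critical Curie–Weiss model (`β = 1`, `h = 0`) with `ν_N` as in
Theorem `mainCW1b`, letting `μ̃_N(m) = μ_N(m̃_N = m)` and `ν̃_N(m) = ν_N(m̃_N = m)` for
`m ∈ {−1 + 2l/N : l = 0,…,N}`, the quotient `ν̃_N(m)/μ̃_N(m)` tends to `1` uniformly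
over `|m| ≤ N^{−1/4+δ/2}`. Spins `±1` are encoded by `Bool` via `spin`. -/
theorem stmt_19
    (δ : ℝ) (hδ0 : 0 < δ) (hδ : δ < 1 / 20)
    (spin : Bool → ℝ) (hspin : ∀ b, spin b = if b then 1 else -1)
    (Z : ℕ → ℝ)
    (hZ : ∀ N : ℕ, Z N = ∑ σ : Fin N → Bool,
      Real.exp (1 / (2 * N) * ∑ i, ∑ j, spin (σ i) * spin (σ j)))
    (μ : ∀ N : ℕ, (Fin N → Bool) → ℝ)
    (hμ : ∀ N σ, μ N σ =
      Real.exp (1 / (2 * N) * ∑ i, ∑ j, spin (σ i) * spin (σ j)) / Z N)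
    (f1 : ℝ → ℝ)
    (hf1 : ∀ x, f1 x = Real.exp (-x ^ 4 / 12) / ∫ y : ℝ, Real.exp (-y ^ 4 / 12))
    (ν : ∀ N : ℕ, (Fin N → Bool) → ℝ)
    (hν : ∀ N σ, ν N σ =
      ∫ t : ℝ, (∏ i, (1 / 2 : ℝ) * (1 + (if |t| ≤ (N : ℝ) ^ δ then t else 0) *
        spin (σ i) / (N : ℝ) ^ ((1 : ℝ) / 4))) * f1 t)
    -- the push-forwards under the magnetization m̃_N(σ) = (1/N) ∑_i σ_i
    (μtilde νtilde : ∀ N : ℕ, ℝ → ℝ)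
    (hμtilde : ∀ N m, μtilde N m = ∑ σ : Fin N → Bool,
      if (1 / N : ℝ) * ∑ i, spin (σ i) = m then μ N σ else 0)
    (hνtilde : ∀ N m, νtilde N m = ∑ σ : Fin N → Bool,
      if (1 / N : ℝ) * ∑ i, spin (σ i) = m then ν N σ else 0) :
    ∀ ε > (0 : ℝ), ∃ N₀ : ℕ, ∀ N ≥ N₀, ∀ l : ℕ, l ≤ N →
      |(-1 + 2 * (l : ℝ) / N)| ≤ (N : ℝ) ^ (-(1 / 4 : ℝ) + δ / 2) →
      |νtilde N (-1 + 2 * (l : ℝ) / N) / μtilde N (-1 + 2 * (l : ℝ) / N) - 1| ≤ ε := by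
  -- The scales: `q = N^(1/4)`, `T = N^δ`, `r = N^(δ/2)`, `a = T/q`, and the relative error `η`.
  set q : ℕ → ℝ := fun N => (N : ℝ) ^ ((1 : ℝ) / 4) with hqdef
  set T : ℕ → ℝ := fun N => (N : ℝ) ^ δ with hTdef
  set r : ℕ → ℝ := fun N => (N : ℝ) ^ (δ / 2) with hrdef
  set η : ℕ → ℝ := fun N => q N ^ 2 * (T N / q N) ^ 3 with hηdef
  set A : ℕ → ℝ := fun N => (√(2 * π))⁻¹ * ∫ x : ℝ,
    Real.exp (q N ^ 4 * Real.log (Real.cosh (x / q N)) - q N ^ 2 * x ^ 2 / 2) with hAdef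
  set C : ℝ := ∫ y : ℝ, Real.exp (-y ^ 4 / 12) with hC
  set D : ℝ := ∫ y : ℝ, Real.exp (-y ^ 4 / 24) with hD
  have hC0 : 0 < C := integral_exp_pos (cw_quartic_integrable (by norm_num))
  have hqlim : Tendsto q atTop atTop :=
    (tendsto_rpow_atTop (by norm_num)).comp tendsto_natCast_atTop_atTop
  have hrlim : Tendsto r atTop atTop :=
    (tendsto_rpow_atTop (by positivity)).comp tendsto_natCast_atTop_atTop
  have hTr : ∀ N, T N = r N * r N := by
    intro N
    simp only [hTdef, hrdef]
    rw [← Real.rpow_add_of_nonneg (Nat.cast_nonneg N) (by positivity) (by positivity)]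
    congr 1; ring
  have hq4 : ∀ N : ℕ, (N : ℝ) = q N ^ 4 := by
    intro N
    simp only [hqdef]
    rw [← Real.rpow_natCast, ← Real.rpow_mul (Nat.cast_nonneg N)]
    norm_num
  have halim : Tendsto (fun N => T N / q N) atTop (𝓝 0) := by
    have h := (tendsto_rpow_neg_atTop (show 0 < 1 / 4 - δ by linarith)).comp
      (tendsto_natCast_atTop_atTop (R := ℝ))
    refine h.congr' ?_
    filter_upwards [eventually_gt_atTop 0] with N hN
    simp only [Function.comp, hTdef, hqdef]
    rw [← Real.rpow_sub (by positivity)]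
    congr 1; ring
  have hηlim : Tendsto η atTop (𝓝 0) := by
    have h := (tendsto_rpow_neg_atTop (show 0 < 1 / 4 - 3 * δ by linarith)).comp
      (tendsto_natCast_atTop_atTop (R := ℝ))
    refine h.congr' ?_
    filter_upwards [eventually_gt_atTop 0] with N hN
    have hq0 : 0 < q N := by simp only [hqdef]; positivity
    have e : η N = T N ^ 3 / q N := by simp only [hηdef]; field_simp
    rw [e]
    simp only [Function.comp, hTdef, hqdef]
    rw [← Real.rpow_natCast, ← Real.rpow_mul (Nat.cast_nonneg N), ← Real.rpow_sub (by positivity)]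
    congr 1; push_cast; ring
  have hη0 : ∀ᶠ N in atTop, 0 ≤ η N := by
    refine Eventually.of_forall fun N => ?_
    simp only [hηdef, hTdef, hqdef]; positivity
  have hRlim : Tendsto (fun N => q N * (T N - r N)) atTop atTop := by
    have h := hqlim.atTop_mul_atTop₀
      (hrlim.atTop_mul_atTop₀ (tendsto_atTop_add_const_right _ (-1) hrlim))
    refine h.congr fun N => ?_
    rw [hTr]; ring
  have hAlim : Tendsto A atTop (𝓝 ((√(2 * π))⁻¹ * C)) := (cw_Z_limit hqlim).const_mul _
  have hA0 : ∀ N, 0 ≤ A N := fun N =>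
    mul_nonneg (by positivity) (integral_nonneg fun x => (Real.exp_pos _).le)
  have hs0 : √(2 * π) ≠ 0 := by positivity
  have hlow : Tendsto (fun N => A N / C * ∫ w, cwLow (η N) (q N * (T N - r N)) w) atTop (𝓝 1) := by
    have h := (hAlim.div_const C).mul (cwLow_limit hη0 hηlim hRlim)
    have e : (√(2 * π))⁻¹ * C / C * √(2 * π) = 1 := by field_simp
    rwa [e] at h
  have hup : Tendsto (fun N => A N / C * ((∫ w, cwUp (η N) w)
      + q N * (Real.exp (-(T N) ^ 4 / 24) * D))) atTop (𝓝 1) := by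
    have h := (hAlim.div_const C).mul
      ((cwUp_limit hη0 hηlim).add ((cw_tail_limit hδ0).mul_const D))
    have e : (√(2 * π))⁻¹ * C / C * (√(2 * π) + 0 * D) = 1 := by field_simp; ring
    rw [e] at h
    refine h.congr fun N => ?_
    simp only [hqdef, hTdef]
    ring
  have hZ' : ∀ N, 0 < N → Z N = q N * 2 ^ N * A N := by
    intro N hN
    rw [hZ]
    exact cw_Z spin hspin N (by simp only [hqdef]; positivity) (hq4 N)
  intro ε hε
  have hev : ∀ᶠ N : ℕ in atTop, ∀ l : ℕ, l ≤ N →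
      |(-1 + 2 * (l : ℝ) / N)| ≤ (N : ℝ) ^ (-(1 / 4 : ℝ) + δ / 2) →
      |νtilde N (-1 + 2 * (l : ℝ) / N) / μtilde N (-1 + 2 * (l : ℝ) / N) - 1| ≤ ε := by
    filter_upwards [eventually_gt_atTop 0, hlow.eventually_const_le (show 1 - ε < 1 by linarith),
      hup.eventually_le_const (show 1 < 1 + ε by linarith),
      halim.eventually_le_const (show (0 : ℝ) < 1 / 2 by norm_num),
      hηlim.eventually_le_const one_pos, hrlim.eventually_ge_atTop 1]
      with N hN hNlow hNup hNa hNη hNr l hl hm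
    have hNpos : (0 : ℝ) < N := by exact_mod_cast hN
    have hq0 : 0 < q N := by simp only [hqdef]; positivity
    set m : ℝ := -1 + 2 * (l : ℝ) / N with hmdef
    have hqm : q N * |m| ≤ r N := by
      calc q N * |m| ≤ q N * (N : ℝ) ^ (-(1 / 4 : ℝ) + δ / 2) := by gcongr
        _ = r N := by
          simp only [hqdef, hrdef]
          rw [← Real.rpow_add hNpos]
          congr 1; ring
    have hrT : r N ≤ T N := by rw [hTr]; nlinarith
    have hT0 : 0 ≤ T N := by simp only [hTdef]; positivity
    have hsum : ∀ σ : Fin N → Bool, (1 / N : ℝ) * ∑ i, spin (σ i) = m →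
        ∑ i, spin (σ i) = q N ^ 4 * m := by
      intro σ hσ
      rw [← hq4, ← hσ]; field_simp
    have hs : ∀ (σ : Fin N → Bool) i, spin (σ i) = 1 ∨ spin (σ i) = -1 := by
      intro σ i; rw [hspin]; split_ifs <;> simp
    obtain ⟨σ₀, hσ₀⟩ := cw_exists_config spin hspin hl hN
    set I : ℝ := ∫ t, cwP (fun i => spin (σ₀ i)) (q N) (T N) t with hI
    have hPeq : ∀ σ : Fin N → Bool, (1 / N : ℝ) * ∑ i, spin (σ i) = m →
        ∀ t, cwP (fun i => spin (σ i)) (q N) (T N) t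
          = cwP (fun i => spin (σ₀ i)) (q N) (T N) t := by
      intro σ hσ t
      unfold cwP
      congr 1
      have hv : |(if |t| ≤ T N then t else 0) / q N| < 1 := by
        rw [abs_div, abs_of_pos hq0]
        refine lt_of_le_of_lt ?_ (lt_of_le_of_lt hNa (by norm_num))
        gcongr
        split_ifs with h
        · exact h
        · simpa using hT0
      have e1 := cw_prod_eq (fun i => spin (σ i)) (hs σ) hv
      have e2 := cw_prod_eq (fun i => spin (σ₀ i)) (hs σ₀) hv
      simp only [hsum σ hσ, hsum σ₀ hσ₀] at e1 e2
      simp only [div_mul_eq_mul_div] at e1 e2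
      exact e1.trans e2.symm
    have hνval : ∀ σ : Fin N → Bool, (1 / N : ℝ) * ∑ i, spin (σ i) = m →
        ν N σ = (1 / 2) ^ N / C * I := by
      intro σ hσ
      rw [hν, hI, ← integral_const_mul]
      congr 1; funext t
      rw [← hPeq σ hσ t, hf1]
      unfold cwP
      rw [Finset.prod_mul_distrib]
      simp only [Finset.prod_const, Finset.card_univ, Fintype.card_fin]
      ring
    have hμval : ∀ σ : Fin N → Bool, (1 / N : ℝ) * ∑ i, spin (σ i) = m →
        μ N σ = Real.exp (q N ^ 4 * m ^ 2 / 2) / (q N * 2 ^ N * A N) := by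
      intro σ hσ
      rw [hμ, hZ' N hN, ← Finset.sum_mul_sum, hsum σ hσ, hq4 N]
      congr 2
      field_simp
    rw [hνtilde, hμtilde, cw_ratio _ _ _ _ _ ⟨σ₀, hσ₀⟩ hνval hμval]
    have hval : (1 / 2) ^ N / C * I / (Real.exp (q N ^ 4 * m ^ 2 / 2) / (q N * 2 ^ N * A N))
        = A N / C * (q N * (Real.exp (-(q N ^ 4 * m ^ 2 / 2)) * I)) := by
      rw [Real.exp_neg, one_div, inv_pow]
      field_simp
    rw [hval]
    obtain ⟨b1, b2⟩ := cwP_bounds (fun i => spin (σ₀ i)) (hs σ₀) hq0 hT0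
      (by rw [Fintype.card_fin]; exact hq4 N) (hsum σ₀ hσ₀) rfl hNa hqm hrT rfl hNη
    have hAC : 0 ≤ A N / C := div_nonneg (hA0 N) hC0.le
    have c1 := mul_le_mul_of_nonneg_left b1 hAC
    have c2 := mul_le_mul_of_nonneg_left b2 hAC
    rw [abs_le]
    constructor
    · have := hNlow.trans c1
      linarith
    · have := c2.trans hNup
      linarith
  exact eventually_atTop.1 hev
end
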